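/- Let (K, ρ) be a finite dimensional compact metric space, and for each n ≥ 1 let ρ_n be the distance on Kⁿ defined by ρ_n((x₀,…,x_{n−1}), (y₀,…,y_{n−1})) = max_{0≤i<n} ρ(x_i, y_i). Then there exists δ > 0 such that for every n ≥ 1, widim_δ(Kⁿ, ρ_n) ≥ n·(dim K − 1). -/

import Mathlib

open Filter Set
open scoped ENNReal

namespace MeanDimPaper

variable {X : Type*} [TopologicalSpace X]

/-- `α` is an open cover of `X`. -/
def IsOpenCover (α : Set (Set X)) : Prop :=
  (∀ U ∈ α, IsOpen U) ∧ ⋃₀ α = Set.univ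

/-- The order of a cover `α`: the maximum `n ≥ 0` such that there exist `n + 1`
pairwise distinct members of `α` with nonempty common intersection. -/
noncomputable def ord (α : Set (Set X)) : ℕ∞ :=
  ⨆ n ∈ {n : ℕ | ∃ f : Fin (n + 1) → Set X,
      Function.Injective f ∧ (∀ i, f i ∈ α) ∧ (⋂ i, f i).Nonempty}, (n : ℕ∞)

/-- `β` refines `α`: every member of `β` is contained in some member of `α`. -/
def Refines (β α : Set (Set X)) : Prop := ∀ V ∈ β, ∃ U ∈ α, V ⊆ U

/-- `D(α)`: the minimum of `ord β` over open covers `β` refining `α`. -/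
noncomputable def covD (α : Set (Set X)) : ℕ∞ :=
  ⨅ β ∈ {β : Set (Set X) | IsOpenCover β ∧ Refines β α}, ord β

/-- Topological (covering) dimension: the supremum of `D(α)` over open covers `α`. -/
noncomputable def topDim (X : Type*) [TopologicalSpace X] : ℕ∞ :=
  ⨆ α ∈ {α : Set (Set X) | IsOpenCover α}, covD α

/-- Diameter of a set with respect to a distance function `d`. -/
noncomputable def diamD (d : X → X → ℝ) (U : Set X) : ℝ :=
  sSup {r | ∃ x ∈ U, ∃ y ∈ U, r = d x y}

/-- Mesh of a cover: the supremum of the diameters of its members. -/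
noncomputable def mesh (d : X → X → ℝ) (α : Set (Set X)) : ℝ :=
  sSup (diamD d '' α)

/-- `widim_ε(X, d)`: the minimum of `D(α)` over open covers `α` with `mesh(α, d) < ε`. -/
noncomputable def widim (ε : ℝ) (d : X → X → ℝ) : ℕ∞ :=
  ⨅ α ∈ {α : Set (Set X) | IsOpenCover α ∧ mesh d α < ε}, covD α

/-- `d` is a metric on `X` compatible with the topology of `X`. -/
structure IsCompatMetric {X : Type*} [TopologicalSpace X] (d : X → X → ℝ) : Prop where
  refl : ∀ x, d x x = 0
  eq_of : ∀ x y, d x y = 0 → x = y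
  symm : ∀ x y, d x y = d y x
  triangle : ∀ x y z, d x z ≤ d x y + d y z
  isOpen_iff : ∀ U : Set X, IsOpen U ↔ ∀ x ∈ U, ∃ ε > 0, ∀ y, d x y < ε → y ∈ U

/-- The dynamical distance `d_n(x, y) = max_{0 ≤ i < n} d(Tⁱ x, Tⁱ y)`. -/
noncomputable def dynDist (d : X → X → ℝ) (T : X → X) (n : ℕ) (x y : X) : ℝ :=
  sSup {r | ∃ i < n, r = d (T^[i] x) (T^[i] y)}

/-- Mean dimension `mdim(X, T)` computed with the metric `d`:
`lim_{ε → 0} lim_{n → ∞} widim_ε(X, d_n) / n`.  The inner limit exists (by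
subadditivity of `n ↦ widim_ε(X, d_n)`) so it coincides with the liminf, and the inner
quantity is monotone as `ε` decreases, so the limit as `ε → 0` is the supremum over
`ε > 0`. -/
noncomputable def mdim (T : X → X) (d : X → X → ℝ) : ℝ≥0∞ :=
  ⨆ (ε : ℝ) (_ : 0 < ε),
    Filter.liminf (fun n : ℕ => (widim ε (dynDist d T n) : ℝ≥0∞) / (n : ℝ≥0∞)) Filter.atTop

/-- The full shift `σ` on the alphabet `K`: `σ((xₙ)ₙ) = (xₙ₊₁)ₙ`. -/
def shift (K : Type*) : (ℤ → K) → ℤ → K := fun x n => x (n + 1)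

/- The bound comes from a cohomology class on fine simplices, in the sense of Vietoris and Rips,
which detects the dimension `d` of `K` relative to a closed set. Label the points of `K` by the
vertices of the `d`-simplex, and pull back the generator of the top cohomology of the simplex
relative to its boundary. Over a field, cross products of nonzero relative classes do not vanish, so
that a nonzero class of degree `k` has nonzero powers on `K ^ n`, and these bound the width of
`K ^ n` from below by `n * k` at a scale which depends on `K` only. If no multiple of the pulled
back class vanishes, it survives over `ℚ`, in degree `d`. Otherwise a primitive of its least
vanishing multiple, reduced modulo a prime dividing that multiple, is a nonzero class of degree
`d - 1`.

The pulled back class does not vanish integrally because a primitive would allow `K` to be pushed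
into the `(d - 1)`-skeleton of the nerve of a cover of `K` whose order cannot be decreased. Turning
a primitive into a continuous map is Hopf's extension problem. It is solved explicitly here: third
differences and the moment curve cut the boundary of the simplex in a circle which meets each facet
in a single edge, in cyclic order, and a degree on each facet is realised by winding along the
corresponding edge. -/

/-- Chains of the augmented ordered complex of `α`: a list is an ordered simplex, the empty list
being the simplex of dimension `-1`. -/
abbrev Chain (R : Type*) [CommRing R] (α : Type*) := List α →₀ R

namespace Chain

section Boundary

variable {R : Type*} [CommRing R] {α β M : Type*} [AddCommGroup M] [Module R M]

lemma hom_ext {f g : Chain R α →ₗ[R] M}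
    (h : ∀ l, f (Finsupp.single l 1) = g (Finsupp.single l 1)) : f = g :=
  Finsupp.lhom_ext' fun l => LinearMap.ext_ring (h l)

/-- Chains supported on a given set of simplices. -/
abbrev supported (R : Type*) [CommRing R] (S : Set (List α)) : Submodule R (Chain R α) :=
  Finsupp.supported R R S

lemma single_mem_supported {S : Set (List α)} {l : List α} (h : l ∈ S) (a : R) :
    Finsupp.single l a ∈ supported R S :=
  Finsupp.single_mem_supported R a h

lemma supported_mono {S T : Set (List α)} {c : Chain R α} (hc : c ∈ supported R S)
    (h : ∀ l ∈ S, l ∈ T) : c ∈ supported R T :=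
  Finsupp.supported_mono (R := R) (M := R) h hc

lemma supported_inter {S T : Set (List α)} {c : Chain R α} (hS : c ∈ supported R S)
    (hT : c ∈ supported R T) : c ∈ supported R (S ∩ T) := by
  rw [Finsupp.mem_supported] at *
  exact Set.subset_inter hS hT

lemma map_mem_of_single {S : Set (List α)} (f : Chain R α →ₗ[R] M) {N : Submodule R M}
    (h : ∀ l ∈ S, f (Finsupp.single l 1) ∈ N) {c : Chain R α} (hc : c ∈ supported R S) :
    f c ∈ N := by
  rw [supported, Finsupp.supported_eq_span_single] at hc
  refine Submodule.span_le (p := N.comap f) |>.2 ?_ hc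
  rintro _ ⟨l, hl, rfl⟩
  exact h l hl

lemma map_congr_of_single {S : Set (List α)} {f g : Chain R α →ₗ[R] M}
    (h : ∀ l ∈ S, f (Finsupp.single l 1) = g (Finsupp.single l 1))
    {c : Chain R α} (hc : c ∈ supported R S) : f c = g c := by
  rw [supported, Finsupp.supported_eq_span_single] at hc
  refine LinearMap.eqOn_span ?_ hc
  rintro _ ⟨l, hl, rfl⟩
  exact h l hl

lemma map_eq_zero_of_single {S : Set (List α)} (f : Chain R α →ₗ[R] M)
    (h : ∀ l ∈ S, f (Finsupp.single l 1) = 0) {c : Chain R α} (hc : c ∈ supported R S) :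
    f c = 0 :=
  map_congr_of_single (g := 0) h hc

/-- The cone over a chain with apex `x`. -/
noncomputable def cons (x : α) : Chain R α →ₗ[R] Chain R α :=
  Finsupp.lmapDomain R R (List.cons x)

@[simp] lemma cons_single (x : α) (l : List α) (a : R) :
    cons x (Finsupp.single l a) = Finsupp.single (x :: l) a := by
  simp [cons]

lemma cons_mem_supported {S T : Set (List α)} {x : α} (h : ∀ l ∈ S, x :: l ∈ T)
    {c : Chain R α} (hc : c ∈ supported R S) : cons x c ∈ supported R T :=
  map_mem_of_single _ (fun l hl => by
    rw [cons_single]; exact single_mem_supported (h l hl) 1) hc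

/-- The boundary of a single simplex. -/
noncomputable def simplexBoundary : List α → Chain R α
  | [] => 0
  | x :: l => Finsupp.single l 1 - cons x (simplexBoundary l)

/-- The boundary operator. -/
noncomputable def boundary : Chain R α →ₗ[R] Chain R α :=
  Finsupp.linearCombination R simplexBoundary

@[simp] lemma boundary_single (l : List α) (a : R) :
    boundary (Finsupp.single l a) = a • simplexBoundary l := by
  simp [boundary]

lemma boundary_cons (x : α) (c : Chain R α) :
    boundary (cons x c) = c - cons x (boundary c) :=
  LinearMap.congr_fun (f := boundary ∘ₗ cons x) (g := LinearMap.id - cons x ∘ₗ boundary)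
    (hom_ext fun l => by simp [simplexBoundary]) c

lemma boundary_simplexBoundary (l : List α) :
    boundary (simplexBoundary l : Chain R α) = 0 := by
  induction l with
  | nil => simp [simplexBoundary]
  | cons x l ih => simp [simplexBoundary, boundary_cons, ih]

lemma simplexBoundary_mem_supported (l : List α) :
    (simplexBoundary l : Chain R α) ∈
      supported R {l' | l'.Sublist l ∧ l'.length + 1 = l.length} := by
  induction l with
  | nil => simp [simplexBoundary]
  | cons x l ih =>
    rw [simplexBoundary]
    refine Submodule.sub_mem _ (single_mem_supported ?_ 1) (cons_mem_supported ?_ ih)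
    · simp
    · rintro l' ⟨hsub, hlen⟩
      exact ⟨hsub.cons_cons x, by simp [hlen]⟩

lemma boundary_mem_supported {S T : Set (List α)}
    (h : ∀ l ∈ S, ∀ l' : List α, l'.Sublist l → l'.length + 1 = l.length → l' ∈ T)
    {c : Chain R α} (hc : c ∈ supported R S) : boundary c ∈ supported R T :=
  map_mem_of_single _ (fun l hl => by
    rw [boundary_single, one_smul]
    exact supported_mono (simplexBoundary_mem_supported l) fun l' hl' => h l hl l' hl'.1 hl'.2) hc

/-- The chain map induced by a map of vertices. -/
noncomputable def map (φ : α → β) : Chain R α →ₗ[R] Chain R β :=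
  Finsupp.lmapDomain R R (List.map φ)

@[simp] lemma map_single (φ : α → β) (l : List α) (a : R) :
    map φ (Finsupp.single l a) = Finsupp.single (l.map φ) a := by
  simp [map]

lemma map_cons (φ : α → β) (x : α) (c : Chain R α) : map φ (cons x c) = cons (φ x) (map φ c) :=
  LinearMap.congr_fun (f := map φ ∘ₗ cons x) (g := cons (φ x) ∘ₗ map φ)
    (hom_ext fun l => by simp) c

lemma map_simplexBoundary (φ : α → β) (l : List α) :
    map φ (simplexBoundary l : Chain R α) = simplexBoundary (l.map φ) := by
  induction l with
  | nil => simp [simplexBoundary]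
  | cons x l ih => simp [simplexBoundary, map_cons, ih]

lemma map_boundary (φ : α → β) (c : Chain R α) : map φ (boundary c) = boundary (map φ c) :=
  LinearMap.congr_fun (f := map φ ∘ₗ boundary) (g := boundary ∘ₗ map φ)
    (hom_ext fun l => by simp [map_simplexBoundary]) c

lemma map_mem_supported {φ : α → β} {S : Set (List α)} {T : Set (List β)}
    (h : ∀ l ∈ S, l.map φ ∈ T) {c : Chain R α} (hc : c ∈ supported R S) :
    map φ c ∈ supported R T :=
  map_mem_of_single _ (fun l hl => by
    rw [map_single]; exact single_mem_supported (h l hl) 1) hc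

end Boundary

section Cochain

variable {R : Type*} [CommRing R] {α β : Type*}

/-- The value of a cochain on a chain. -/
noncomputable def pairing (f : List α → R) : Chain R α →ₗ[R] R :=
  Finsupp.linearCombination R f

@[simp] lemma pairing_single (f : List α → R) (l : List α) (a : R) :
    pairing f (Finsupp.single l a) = a * f l := by
  simp [pairing]

lemma pairing_cons (f : List α → R) (x : α) (c : Chain R α) :
    pairing f (cons x c) = pairing (fun l => f (x :: l)) c :=
  LinearMap.congr_fun (f := pairing f ∘ₗ cons x) (hom_ext fun l => by simp) c

lemma pairing_map (φ : α → β) (f : List β → R) (c : Chain R α) :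
    pairing f (map φ c) = pairing (fun l => f (l.map φ)) c :=
  LinearMap.congr_fun (f := pairing f ∘ₗ map φ) (hom_ext fun l => by simp) c

lemma pairing_eq_zero {S : Set (List α)} {f : List α → R} (h : ∀ l ∈ S, f l = 0)
    {c : Chain R α} (hc : c ∈ supported R S) : pairing f c = 0 :=
  map_eq_zero_of_single _ (fun l hl => by simp [h l hl]) hc

lemma pairing_congr {S : Set (List α)} {f g : List α → R} (h : ∀ l ∈ S, f l = g l)
    {c : Chain R α} (hc : c ∈ supported R S) : pairing f c = pairing g c :=
  map_congr_of_single (fun l hl => by simp [h l hl]) hc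

lemma pairing_const_mul (a : R) (f : List α → R) (c : Chain R α) :
    pairing (fun l => a * f l) c = a * pairing f c :=
  LinearMap.congr_fun (f := pairing fun l => a * f l) (g := a • pairing f)
    (hom_ext fun l => by simp) c

/-- The coboundary of a cochain. -/
noncomputable def coboundary (f : List α → R) (l : List α) : R :=
  pairing f (simplexBoundary l)

@[simp] lemma coboundary_nil (f : List α → R) : coboundary f [] = 0 := by
  simp [coboundary, simplexBoundary]

lemma coboundary_cons (f : List α → R) (x : α) (l : List α) :
    coboundary f (x :: l) = f l - coboundary (fun l => f (x :: l)) l := by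
  simp [coboundary, simplexBoundary, pairing_cons]

lemma pairing_boundary (f : List α → R) (c : Chain R α) :
    pairing f (boundary c) = pairing (coboundary f) c :=
  LinearMap.congr_fun (f := pairing f ∘ₗ boundary)
    (hom_ext fun l => by simp [coboundary]) c

lemma coboundary_coboundary (f : List α → R) (l : List α) : coboundary (coboundary f) l = 0 := by
  rw [coboundary, ← pairing_boundary, boundary_simplexBoundary, LinearMap.map_zero]

lemma coboundary_congr {f g : List α → R} {l : List α}
    (h : ∀ l' : List α, l'.Sublist l → l'.length + 1 = l.length → f l' = g l') :
    coboundary f l = coboundary g l :=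
  pairing_congr (fun l' hl' => h l' hl'.1 hl'.2) (simplexBoundary_mem_supported l)

lemma coboundary_eq_zero {f : List α → R} {l : List α}
    (h : ∀ l' : List α, l'.Sublist l → l'.length + 1 = l.length → f l' = 0) :
    coboundary f l = 0 :=
  pairing_eq_zero (fun l' hl' => h l' hl'.1 hl'.2) (simplexBoundary_mem_supported l)

lemma coboundary_sub (f g : List α → R) (l : List α) :
    coboundary (fun l => f l - g l) l = coboundary f l - coboundary g l := by
  induction l generalizing f g with
  | nil => simp
  | cons x l ih => simp only [coboundary_cons, ih]; ring

lemma coboundary_const_mul (a : R) (f : List α → R) (l : List α) :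
    coboundary (fun l => a * f l) l = a * coboundary f l :=
  pairing_const_mul a f (simplexBoundary l)

lemma coboundary_comp_map (f : List β → R) (φ : α → β) (l : List α) :
    coboundary (fun l => f (l.map φ)) l = coboundary f (l.map φ) := by
  rw [coboundary, coboundary, ← map_simplexBoundary, pairing_map]

lemma coboundary_ringHom {S : Type*} [CommRing S] (φ : R →+* S) (f : List α → R) (l : List α) :
    coboundary (fun l => φ (f l)) l = φ (coboundary f l) := by
  induction l generalizing f with
  | nil => simp
  | cons x l ih => simp only [coboundary_cons, ih, map_sub]

end Cochain

section Alternation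

variable {R : Type*} [CommRing R] {α β : Type*} [LinearOrder α] [LinearOrder β]

/-- Insertion of a vertex into a sorted simplex, with the sign of the permutation that moves the
vertex to its place. The result is `0` if the vertex is already present. -/
noncomputable def simplexSortedInsert (x : α) : List α → Chain R α
  | [] => Finsupp.single [x] 1
  | y :: l => if x < y then Finsupp.single (x :: y :: l) 1
      else if x = y then 0 else -cons y (simplexSortedInsert x l)

/-- The linear extension of `simplexSortedInsert` to chains. -/
noncomputable def sortedInsert (x : α) : Chain R α →ₗ[R] Chain R α :=
  Finsupp.linearCombination R (simplexSortedInsert x)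

@[simp] lemma sortedInsert_single (x : α) (l : List α) (a : R) :
    sortedInsert x (Finsupp.single l a) = a • simplexSortedInsert x l := by
  simp [sortedInsert]

/-- The simplex sorted into increasing order, with the sign of the sorting permutation, and `0` for
a degenerate simplex. -/
noncomputable def simplexAlternation : List α → Chain R α
  | [] => Finsupp.single [] 1
  | x :: l => sortedInsert x (simplexAlternation l)

/-- The linear extension of `simplexAlternation` to chains. -/
noncomputable def alternation : Chain R α →ₗ[R] Chain R α :=
  Finsupp.linearCombination R simplexAlternation

@[simp] lemma alternation_single (l : List α) (a : R) :
    alternation (Finsupp.single l a) = a • simplexAlternation l := by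
  simp [alternation]

lemma alternation_cons (x : α) (c : Chain R α) :
    alternation (cons x c) = sortedInsert x (alternation c) :=
  LinearMap.congr_fun (f := alternation ∘ₗ cons x) (g := sortedInsert x ∘ₗ alternation)
    (hom_ext fun l => by simp [simplexAlternation]) c

lemma sortedInsert_cons_of_lt {x y : α} (h : x < y) (c : Chain R α) :
    sortedInsert x (cons y c) = cons x (cons y c) :=
  LinearMap.congr_fun (f := sortedInsert x ∘ₗ cons y) (g := cons x ∘ₗ cons y)
    (hom_ext fun l => by simp [simplexSortedInsert, h]) c

lemma sortedInsert_cons_self (x : α) (c : Chain R α) : sortedInsert x (cons x c) = 0 :=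
  LinearMap.congr_fun (f := sortedInsert x ∘ₗ cons x) (g := 0)
    (hom_ext fun l => by simp [simplexSortedInsert]) c

lemma sortedInsert_cons_of_gt {x y : α} (h : y < x) (c : Chain R α) :
    sortedInsert x (cons y c) = -cons y (sortedInsert x c) :=
  LinearMap.congr_fun (f := sortedInsert x ∘ₗ cons y)
    (g := -(cons y ∘ₗ sortedInsert x : Chain R α →ₗ[R] Chain R α))
    (hom_ext fun l => by simp [simplexSortedInsert, h.not_gt, h.ne']) c

lemma sortedInsert_eq_cons {x : α} {c : Chain R α}
    (hc : c ∈ supported R {l : List α | ∀ y ∈ l, x < y}) : sortedInsert x c = cons x c := by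
  refine map_congr_of_single (fun l hl => ?_) hc
  cases l with
  | nil => simp [simplexSortedInsert]
  | cons y l => simp [simplexSortedInsert, hl y (by simp)]

lemma simplexSortedInsert_mem_supported_perm (x : α) (l : List α) :
    (simplexSortedInsert x l : Chain R α) ∈ supported R {l' | l'.Perm (x :: l)} := by
  induction l with
  | nil => exact single_mem_supported (.refl _) 1
  | cons y l ih =>
    rw [simplexSortedInsert]
    split_ifs
    · exact single_mem_supported (.refl _) 1
    · exact Submodule.zero_mem _
    · exact Submodule.neg_mem _ <|
        cons_mem_supported (fun l' (h : l'.Perm _) => (h.cons y).trans (.swap _ _ _)) ih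

lemma simplexSortedInsert_mem_supported_sorted (x : α) {l : List α} (hl : l.Pairwise (· < ·)) :
    (simplexSortedInsert x l : Chain R α) ∈ supported R {l' | l'.Pairwise (· < ·)} := by
  induction l with
  | nil => exact single_mem_supported (by simp) 1
  | cons y l ih =>
    rw [List.pairwise_cons] at hl
    rw [simplexSortedInsert]
    split_ifs with hxy hxy'
    · refine single_mem_supported (List.pairwise_cons.2 ⟨?_, List.pairwise_cons.2 hl⟩) 1
      simpa [hxy] using fun z hz => hxy.trans (hl.1 z hz)
    · exact Submodule.zero_mem _
    · refine Submodule.neg_mem _ (cons_mem_supported ?_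
        (supported_inter (simplexSortedInsert_mem_supported_perm x l) (ih hl.2)))
      rintro l' ⟨hperm, hsorted⟩
      refine List.pairwise_cons.2 ⟨fun z hz => ?_, hsorted⟩
      rcases List.mem_cons.1 (hperm.mem_iff.1 hz) with rfl | hz
      · exact lt_of_le_of_ne (not_lt.1 hxy) (Ne.symm hxy')
      · exact hl.1 z hz

lemma simplexAlternation_mem_supported (l : List α) :
    (simplexAlternation l : Chain R α) ∈ supported R {l' | l'.Perm l ∧ l'.Pairwise (· < ·)} := by
  induction l with
  | nil => exact single_mem_supported (by simp) 1
  | cons x l ih =>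
    rw [simplexAlternation]
    refine map_mem_of_single _ (fun l' hl' => ?_) ih
    rw [sortedInsert_single, one_smul]
    exact supported_mono (supported_inter (simplexSortedInsert_mem_supported_perm x l')
      (simplexSortedInsert_mem_supported_sorted x hl'.2))
      fun l'' hl'' => ⟨hl''.1.trans (hl'.1.cons x), hl''.2⟩

lemma simplexAlternation_eq_zero {l : List α} (h : ¬ l.Nodup) :
    (simplexAlternation l : Chain R α) = 0 := by
  have hempty : {l' : List α | l'.Perm l ∧ l'.Pairwise (· < ·)} = ∅ :=
    Set.eq_empty_of_forall_notMem fun l' hl' => h (hl'.1.nodup_iff.1 (hl'.2.imp ne_of_lt))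
  simpa [supported, hempty] using simplexAlternation_mem_supported (R := R) l

lemma simplexAlternation_of_sorted {l : List α} (h : l.Pairwise (· < ·)) :
    (simplexAlternation l : Chain R α) = Finsupp.single l 1 := by
  induction l with
  | nil => rfl
  | cons x l ih =>
    rw [List.pairwise_cons] at h
    rw [simplexAlternation, ih h.2, sortedInsert_eq_cons (single_mem_supported (by exact h.1) 1),
      cons_single]

lemma boundary_simplexSortedInsert (x : α) {l : List α} (h : l.Pairwise (· < ·)) :
    boundary (simplexSortedInsert x l : Chain R α) =
      Finsupp.single l 1 - sortedInsert x (simplexBoundary l) := by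
  induction l with
  | nil => simp [simplexSortedInsert, simplexBoundary]
  | cons y l ih =>
    rw [List.pairwise_cons] at h
    rcases lt_trichotomy x y with hxy | rfl | hxy
    · have hlt : ∀ z ∈ y :: l, x < z := by
        simpa [hxy] using fun z hz => hxy.trans (h.1 z hz)
      rw [sortedInsert_eq_cons (supported_mono (simplexBoundary_mem_supported _)
        fun l' hl' z hz => hlt z (hl'.1.subset hz))]
      simp [simplexSortedInsert, hxy, simplexBoundary]
    · have hl : (Finsupp.single l 1 : Chain R α) ∈ supported R {l' | ∀ z ∈ l', x < z} :=
        single_mem_supported (by exact h.1) 1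
      rw [simplexBoundary, map_sub, sortedInsert_cons_self, sortedInsert_eq_cons hl]
      simp [simplexSortedInsert]
    · rw [simplexSortedInsert, if_neg hxy.not_gt, if_neg hxy.ne', map_neg, boundary_cons, ih h.2,
        simplexBoundary, map_sub, map_sub, sortedInsert_cons_of_gt hxy, sortedInsert_single,
        one_smul, cons_single]
      abel

lemma boundary_sortedInsert (x : α) {c : Chain R α}
    (hc : c ∈ supported R {l : List α | l.Pairwise (· < ·)}) :
    boundary (sortedInsert x c) = c - sortedInsert x (boundary c) :=
  map_congr_of_single (f := boundary ∘ₗ sortedInsert x)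
    (g := LinearMap.id - sortedInsert x ∘ₗ boundary)
    (fun l hl => by simp [boundary_simplexSortedInsert x hl]) hc

lemma boundary_simplexAlternation (l : List α) :
    boundary (simplexAlternation l : Chain R α) = alternation (simplexBoundary l) := by
  induction l with
  | nil => simp [simplexAlternation, simplexBoundary]
  | cons x l ih =>
    rw [simplexAlternation, boundary_sortedInsert x
      (supported_mono (simplexAlternation_mem_supported l) fun l' hl' => hl'.2), ih,
      simplexBoundary, map_sub, alternation_cons, alternation_single, one_smul]

lemma sortedInsert_simplexSortedInsert_self (x : α) (l : List α) :
    sortedInsert x (simplexSortedInsert x l : Chain R α) = 0 := by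
  induction l with
  | nil => simp [simplexSortedInsert]
  | cons y l ih =>
    rcases lt_trichotomy x y with h | h | h
    · simp [simplexSortedInsert, h]
    · simp [simplexSortedInsert, h]
    · simp [simplexSortedInsert, h.not_gt, h.ne', sortedInsert_cons_of_gt h, ih]

lemma sortedInsert_simplexSortedInsert_of_lt {x y : α} (hxy : x < y) (l : List α) :
    sortedInsert x (simplexSortedInsert y l : Chain R α) =
      -sortedInsert y (simplexSortedInsert x l) := by
  induction l with
  | nil => simp [simplexSortedInsert, hxy, hxy.not_gt, hxy.ne']
  | cons z l ih =>
    rcases lt_trichotomy y z with hyz | rfl | hyz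
    · simp [simplexSortedInsert, hyz, hxy.trans hyz, hxy, hxy.not_gt, hxy.ne']
    · simp [simplexSortedInsert, hxy, hxy.not_gt, hxy.ne']
    · rcases lt_trichotomy x z with hxz | rfl | hxz
      · simp [simplexSortedInsert, hyz.not_gt, hyz.ne', hxz, hxy.not_gt, hxy.ne',
          sortedInsert_cons_of_lt hxz]
      · simp [simplexSortedInsert, hyz.not_gt, hyz.ne', sortedInsert_cons_self]
      · simp [simplexSortedInsert, hyz.not_gt, hyz.ne', hxz.not_gt, hxz.ne',
          sortedInsert_cons_of_gt hxz, sortedInsert_cons_of_gt hyz, ih]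

lemma sortedInsert_sortedInsert_self (x : α) (c : Chain R α) :
    sortedInsert x (sortedInsert x c) = 0 :=
  LinearMap.congr_fun (f := sortedInsert x ∘ₗ sortedInsert x) (g := 0)
    (hom_ext fun l => by simp [sortedInsert_simplexSortedInsert_self]) c

lemma sortedInsert_comm (x y : α) (c : Chain R α) :
    sortedInsert x (sortedInsert y c) = -sortedInsert y (sortedInsert x c) := by
  have anticomm_of_lt : ∀ x y : α, x < y → ∀ c : Chain R α,
      sortedInsert x (sortedInsert y c) = -sortedInsert y (sortedInsert x c) := fun x y h =>
    LinearMap.congr_fun (f := sortedInsert x ∘ₗ sortedInsert y)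
      (g := -(sortedInsert y ∘ₗ sortedInsert x : Chain R α →ₗ[R] Chain R α))
      (hom_ext fun l => by simp [sortedInsert_simplexSortedInsert_of_lt h])
  rcases lt_trichotomy x y with h | rfl | h
  · exact anticomm_of_lt x y h c
  · simp [sortedInsert_sortedInsert_self]
  · rw [anticomm_of_lt y x h c, neg_neg]

lemma alternation_map_simplexSortedInsert (φ : α → β) (x : α) (l : List α) :
    alternation (map φ (simplexSortedInsert x l : Chain R α)) =
      sortedInsert (φ x) (simplexAlternation (l.map φ)) := by
  induction l with
  | nil => simp [simplexSortedInsert, simplexAlternation]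
  | cons y l ih =>
    rw [simplexSortedInsert]
    split_ifs with hlt heq
    · simp [simplexAlternation]
    · simp [heq, simplexAlternation, sortedInsert_sortedInsert_self]
    · rw [map_neg, map_neg, map_cons, alternation_cons, ih, List.map_cons, simplexAlternation,
        sortedInsert_comm, neg_neg]

lemma alternation_map_sortedInsert (φ : α → β) (x : α) (c : Chain R α) :
    alternation (map φ (sortedInsert x c)) = sortedInsert (φ x) (alternation (map φ c)) :=
  LinearMap.congr_fun (f := alternation ∘ₗ map φ ∘ₗ sortedInsert x)
    (g := sortedInsert (φ x) ∘ₗ alternation ∘ₗ map φ)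
    (hom_ext fun l => by simp [alternation_map_simplexSortedInsert]) c

lemma alternation_map_simplexAlternation (φ : α → β) (l : List α) :
    alternation (map φ (simplexAlternation l : Chain R α)) = simplexAlternation (l.map φ) := by
  induction l with
  | nil => simp [simplexAlternation]
  | cons x l ih =>
    rw [simplexAlternation, alternation_map_sortedInsert, ih, List.map_cons, simplexAlternation]

end Alternation

section Cross

variable {R : Type*} [CommRing R] {α β : Type*}

/-- The coefficient of a chain at the empty simplex. -/
noncomputable def emptyCoeff : Chain R α →ₗ[R] R := Finsupp.lapply []

@[simp] lemma emptyCoeff_single_nil (a : R) :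
    emptyCoeff (Finsupp.single ([] : List α) a) = a := by
  simp [emptyCoeff]

@[simp] lemma emptyCoeff_single_cons (x : α) (l : List α) (a : R) :
    emptyCoeff (Finsupp.single (x :: l) a) = 0 := by
  simp [emptyCoeff]

@[simp] lemma emptyCoeff_cons (x : α) (c : Chain R α) : emptyCoeff (cons x c) = 0 :=
  LinearMap.congr_fun (f := emptyCoeff ∘ₗ cons x) (g := 0) (hom_ext fun l => by simp) c

/-- Multiplication of the simplices with `k` vertices by `(-1) ^ k`. -/
noncomputable def gradeSign : Chain R α →ₗ[R] Chain R α :=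
  Finsupp.linearCombination R fun l => Finsupp.single l ((-1) ^ l.length)

@[simp] lemma gradeSign_single (l : List α) (a : R) :
    gradeSign (Finsupp.single l a) = Finsupp.single l (a * (-1) ^ l.length) := by
  simp [gradeSign]

lemma gradeSign_cons (x : α) (c : Chain R α) : gradeSign (cons x c) = -cons x (gradeSign c) :=
  LinearMap.congr_fun (f := gradeSign ∘ₗ cons x)
    (g := -(cons x ∘ₗ gradeSign : Chain R α →ₗ[R] Chain R α))
    (hom_ext fun l => by simp [pow_succ]) c

lemma gradeSign_gradeSign (c : Chain R α) : gradeSign (gradeSign c) = c :=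
  LinearMap.congr_fun (f := gradeSign ∘ₗ gradeSign) (g := LinearMap.id)
    (hom_ext fun l => by simp [← mul_pow]) c

lemma emptyCoeff_gradeSign (c : Chain R α) : emptyCoeff (gradeSign c) = emptyCoeff c :=
  LinearMap.congr_fun (f := emptyCoeff ∘ₗ gradeSign) (g := emptyCoeff)
    (hom_ext fun l => by cases l <;> simp) c

lemma boundary_gradeSign (c : Chain R α) : boundary (gradeSign c) = -gradeSign (boundary c) := by
  refine LinearMap.congr_fun (f := boundary ∘ₗ gradeSign)
    (g := -(gradeSign ∘ₗ boundary : Chain R α →ₗ[R] Chain R α)) (hom_ext fun l => ?_) c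
  induction l with
  | nil => simp [simplexBoundary]
  | cons x l ih =>
    simp only [LinearMap.comp_apply, LinearMap.neg_apply, ← cons_single] at ih ⊢
    simp only [gradeSign_cons, boundary_cons, map_neg, map_sub, ih]

lemma gradeSign_mem_supported {S : Set (List α)} {c : Chain R α} (hc : c ∈ supported R S) :
    gradeSign c ∈ supported R S :=
  map_mem_of_single _ (fun l hl => by
    rw [gradeSign_single]; exact single_mem_supported hl _) hc

/-- The cross product of two simplices: the signed sum of all staircase paths in the grid formed by
their vertices. -/
noncomputable def simplexCross : List α → List β → Chain R (α × β)
  | [], _ => 0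
  | _ :: _, [] => 0
  | x :: σ, y :: τ => cons (x, y) (Finsupp.single [] (if σ = [] ∧ τ = [] then 1 else 0)
      + simplexCross σ (y :: τ) + (-1 : R) ^ σ.length • simplexCross (x :: σ) τ)
  termination_by σ τ => σ.length + τ.length

/-- The bilinear extension of `simplexCross` to chains. -/
noncomputable def cross : Chain R α →ₗ[R] Chain R β →ₗ[R] Chain R (α × β) :=
  Finsupp.linearCombination R fun σ => Finsupp.linearCombination R (simplexCross σ)

@[simp] lemma cross_single_single (σ : List α) (τ : List β) (a b : R) :
    cross (Finsupp.single σ a) (Finsupp.single τ b) = a • b • simplexCross σ τ := by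
  simp [cross]

lemma hom_ext₂ {M : Type*} [AddCommGroup M] [Module R M]
    {f g : Chain R α →ₗ[R] Chain R β →ₗ[R] M}
    (h : ∀ σ τ, f (Finsupp.single σ 1) (Finsupp.single τ 1) =
      g (Finsupp.single σ 1) (Finsupp.single τ 1)) : f = g :=
  hom_ext fun σ => hom_ext fun τ => h σ τ

lemma cross_single_nil_left (a : R) (d : Chain R β) :
    cross (Finsupp.single ([] : List α) a) d = 0 :=
  LinearMap.congr_fun (f := cross (Finsupp.single [] a)) (g := 0)
    (hom_ext fun τ => by simp [simplexCross]) d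

lemma cross_single_nil_right (c : Chain R α) (b : R) :
    cross c (Finsupp.single ([] : List β) b) = 0 :=
  LinearMap.congr_fun (f := cross.flip (Finsupp.single [] b)) (g := 0)
    (hom_ext fun σ => by cases σ <;> simp [simplexCross]) c

lemma cross_cons_cons (x : α) (y : β) (c : Chain R α) (d : Chain R β) :
    cross (cons x c) (cons y d) = cons (x, y) (Finsupp.single [] (emptyCoeff c * emptyCoeff d)
      + cross c (cons y d) + cross (cons x (gradeSign c)) d) := by
  refine LinearMap.congr_fun₂ (f := (cross ∘ₗ cons x).compl₂ (cons y))
    (g := (((LinearMap.mul R R).compl₁₂ emptyCoeff emptyCoeff).compr₂ (Finsupp.lsingle [])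
      + cross.compl₂ (cons y) + cross ∘ₗ cons x ∘ₗ gradeSign).compr₂ (cons (x, y)))
    (hom_ext₂ fun σ τ => ?_) c d
  cases σ <;> cases τ <;> simp [simplexCross]

lemma boundary_cross_cons_cons (x : α) (y : β) {c : Chain R α} {d : Chain R β}
    (hc : boundary (cross c (cons y d)) = cross (boundary c) (cons y d)
      - cross (gradeSign c) (boundary (cons y d))
      + Finsupp.single [] (emptyCoeff (boundary c) * emptyCoeff (boundary (cons y d))))
    (hd : boundary (cross (cons x (gradeSign c)) d) = cross (boundary (cons x (gradeSign c))) d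
      - cross (gradeSign (cons x (gradeSign c))) (boundary d)
      + Finsupp.single []
          (emptyCoeff (boundary (cons x (gradeSign c))) * emptyCoeff (boundary d))) :
    boundary (cross (cons x c) (cons y d)) = cross (boundary (cons x c)) (cons y d)
      - cross (gradeSign (cons x c)) (boundary (cons y d))
      + Finsupp.single []
          (emptyCoeff (boundary (cons x c)) * emptyCoeff (boundary (cons y d))) := by
  have hinner : boundary (Finsupp.single [] (emptyCoeff c * emptyCoeff d)
        + cross c (cons y d) + cross (cons x (gradeSign c)) d) =
      (Finsupp.single [] (emptyCoeff (boundary c) * emptyCoeff d)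
        + cross (boundary c) (cons y d) + cross (cons x (gradeSign (boundary c))) d)
      + (Finsupp.single [] (emptyCoeff (gradeSign c) * emptyCoeff (boundary d))
        + cross (gradeSign c) (cons y (boundary d))
        + cross (cons x (gradeSign (gradeSign c))) (boundary d)) := by
    simp only [map_add, map_sub, map_neg, hc, hd, boundary_cons, gradeSign_cons,
      gradeSign_gradeSign, boundary_gradeSign, emptyCoeff_cons, emptyCoeff_gradeSign,
      LinearMap.sub_apply, LinearMap.neg_apply, boundary_single, simplexBoundary, smul_zero,
      neg_zero, sub_zero]
    abel
  rw [cross_cons_cons, boundary_cons, hinner, map_add (cons (x, y)), ← cross_cons_cons,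
    ← cross_cons_cons]
  simp only [boundary_cons, gradeSign_cons, map_sub, map_neg, LinearMap.sub_apply,
    LinearMap.neg_apply, emptyCoeff_cons, sub_zero]
  abel

lemma boundary_cross (c : Chain R α) (d : Chain R β) :
    boundary (cross c d) = cross (boundary c) d - cross (gradeSign c) (boundary d)
      + Finsupp.single [] (emptyCoeff (boundary c) * emptyCoeff (boundary d)) := by
  suffices boundary (cross c d) + cross (gradeSign c) (boundary d) = cross (boundary c) d
      + Finsupp.single [] (emptyCoeff (boundary c) * emptyCoeff (boundary d)) by
    rw [sub_add_eq_add_sub, ← this, add_sub_cancel_right]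
  refine LinearMap.congr_fun₂ (f := (cross (R := R) (α := α) (β := β)).compr₂ boundary
      + (cross (R := R) (α := α) (β := β)).compl₁₂ gradeSign boundary)
    (g := cross (R := R) (α := α) (β := β) ∘ₗ boundary
      + ((LinearMap.mul R R).compl₁₂ (emptyCoeff (α := α) ∘ₗ boundary)
          (emptyCoeff (α := β) ∘ₗ boundary)).compr₂ (Finsupp.lsingle []))
    (hom_ext₂ fun σ τ => ?_) c d
  simp only [LinearMap.compr₂_apply, LinearMap.add_apply,
    LinearMap.comp_apply, LinearMap.compl₁₂_apply, LinearMap.mul_apply', Finsupp.lsingle_apply]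
  rw [← eq_sub_iff_add_eq, add_sub_right_comm]
  induction σ, τ using simplexCross.induct with
  | case1 τ => simp [simplexBoundary, cross_single_nil_left, simplexCross]
  | case2 x σ => simp [simplexBoundary, cross_single_nil_right]
  | case3 x σ y τ ih_σ ih_τ =>
    simp only [← cons_single] at ih_σ ih_τ ⊢
    refine boundary_cross_cons_cons x y ih_σ ?_
    have hsign : gradeSign (Finsupp.single σ (1 : R)) =
        (-1 : R) ^ σ.length • Finsupp.single σ 1 := by simp
    rw [hsign]
    simp only [map_smul, LinearMap.smul_apply, ih_τ, smul_add, smul_sub, smul_eq_mul, mul_assoc]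
    rw [Finsupp.smul_single, smul_eq_mul]

lemma simplexCross_mem_supported (σ : List α) (τ : List β) :
    (simplexCross σ τ : Chain R (α × β)) ∈ supported R
      {l | l.length + 1 = σ.length + τ.length ∧ ∀ p ∈ l, p.1 ∈ σ ∧ p.2 ∈ τ} := by
  induction σ, τ using simplexCross.induct with
  | case1 τ => rw [simplexCross]; exact Submodule.zero_mem _
  | case2 x σ => rw [simplexCross]; exact Submodule.zero_mem _
  | case3 x σ y τ ih_σ ih_τ =>
    rw [simplexCross, map_add, map_add, map_smul, cons_single]
    refine Submodule.add_mem _ (Submodule.add_mem _ ?_ (cons_mem_supported ?_ ih_σ))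
      (Submodule.smul_mem _ _ (cons_mem_supported ?_ ih_τ))
    · split_ifs with h
      · exact single_mem_supported (by simp [h.1, h.2]) 1
      · simp
    · rintro l ⟨hlen, hmem⟩
      simp only [List.length_cons] at hlen
      refine ⟨by simp only [List.length_cons]; omega, ?_⟩
      refine List.forall_mem_cons.2 ⟨by simp, fun p hp => ?_⟩
      exact ⟨List.mem_cons_of_mem _ (hmem p hp).1, (hmem p hp).2⟩
    · rintro l ⟨hlen, hmem⟩
      simp only [List.length_cons] at hlen
      refine ⟨by simp only [List.length_cons]; omega, ?_⟩
      refine List.forall_mem_cons.2 ⟨by simp, fun p hp => ?_⟩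
      exact ⟨(hmem p hp).1, List.mem_cons_of_mem _ (hmem p hp).2⟩

lemma cross_mem_supported {S : Set (List α)} {T : Set (List β)} {U : Set (List (α × β))}
    (h : ∀ σ ∈ S, ∀ τ ∈ T, ∀ l : List (α × β), l.length + 1 = σ.length + τ.length →
      (∀ p ∈ l, p.1 ∈ σ ∧ p.2 ∈ τ) → l ∈ U)
    {c : Chain R α} {d : Chain R β} (hc : c ∈ supported R S) (hd : d ∈ supported R T) :
    cross c d ∈ supported R U := by
  refine map_mem_of_single (cross.flip d) (fun σ hσ => ?_) hc
  refine map_mem_of_single (cross (Finsupp.single σ 1)) (fun τ hτ => ?_) hd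
  rw [cross_single_single, one_smul, one_smul]
  exact supported_mono (simplexCross_mem_supported σ τ) fun l hl => h σ hσ τ hτ l hl.1 hl.2

lemma simplexCross_cons_mem_supported (x : α) (σ : List α) (τ : List β) :
    (simplexCross (x :: σ) τ : Chain R (α × β)) ∈ supported R {l | ∃ y l', l = (x, y) :: l'} := by
  cases τ with
  | nil => rw [simplexCross]; exact Submodule.zero_mem _
  | cons y τ =>
    rw [simplexCross]
    exact cons_mem_supported (S := Set.univ) (fun l _ => by exact ⟨y, l, rfl⟩)
      (by simp [supported])

lemma simplexCross_singleton (x : α) {τ : List β} (h : τ ≠ []) :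
    (simplexCross [x] τ : Chain R (α × β)) = Finsupp.single (τ.map (x, ·)) 1 := by
  induction τ with
  | nil => exact absurd rfl h
  | cons y τ ih =>
    rw [simplexCross, simplexCross]
    rcases eq_or_ne τ [] with rfl | hτ
    · simp [simplexCross]
    · simp [ih hτ, hτ]

/-- The cross product of a cochain on simplices with `k + 1` vertices with another cochain: evaluate
the first on the front `k + 1` vertices and the second on the back, the vertex with index `k` being
shared. -/
def crossCochain (k : ℕ) (f : List α → R) (g : List β → R) (l : List (α × β)) : R :=
  f ((l.take (k + 1)).map Prod.fst) * g ((l.drop k).map Prod.snd)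

lemma crossCochain_succ_cons (k : ℕ) (f : List α → R) (g : List β → R) (p : α × β)
    (l : List (α × β)) :
    crossCochain (k + 1) f g (p :: l) = crossCochain k (fun l => f (p.1 :: l)) g l :=
  rfl

lemma coboundary_crossCochain (k : ℕ) (f : List α → R) (g : List β → R) {l : List (α × β)}
    (hl : k + 2 ≤ l.length) :
    coboundary (crossCochain k f g) l = crossCochain (k + 1) (coboundary f) g l
      + (-1) ^ k * crossCochain k f (coboundary g) l := by
  induction k generalizing f l with
  | zero =>
    match l, hl with
    | p :: q :: l, _ =>
      have hfront : coboundary (fun l => crossCochain 0 f g (p :: l)) (q :: l) =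
          f [p.1] * coboundary (fun l => g (p.2 :: l)) ((q :: l).map Prod.snd) := by
        rw [← coboundary_comp_map, ← coboundary_const_mul]
        rfl
      rw [coboundary_cons, hfront]
      simp only [crossCochain, List.map_cons, coboundary_cons, List.take_succ_cons,
        List.take_zero, List.drop_succ_cons, List.drop_zero, List.map_nil, coboundary_nil,
        zero_add, sub_zero, pow_zero]
      ring
  | succ k ih =>
    match l, hl with
    | p :: l, hl =>
      have hl' : k + 2 ≤ l.length := by simpa using hl
      rw [coboundary_cons, crossCochain_succ_cons]
      simp only [crossCochain_succ_cons, ih _ hl', coboundary_cons]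
      simp only [crossCochain]
      ring

lemma pairing_simplexCross {k : ℕ} {f : List α → R}
    (hf : ∀ l₁ x l₂, f (l₁ ++ x :: x :: l₂) = 0) (g : List β → R) {σ : List α}
    (hσ : σ.length = k + 1) {τ : List β} (hτ : τ ≠ []) :
    pairing (crossCochain k f g) (simplexCross σ τ) = f σ * g τ := by
  obtain ⟨y, τ, rfl⟩ := List.exists_cons_of_ne_nil hτ
  induction k generalizing f σ with
  | zero =>
    obtain ⟨x, rfl⟩ := List.length_eq_one_iff.1 hσ
    simp [simplexCross_singleton, crossCochain]
  | succ k ih =>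
    obtain ⟨x, σ, rfl⟩ := List.exists_cons_of_length_eq_add_one hσ
    have hσ' : σ.length = k + 1 := by simpa using hσ
    have hne : σ ≠ [] := by rintro rfl; simp at hσ'
    have hstep : pairing (crossCochain k (fun l => f (x :: l)) g) (simplexCross σ (y :: τ)) =
        f (x :: σ) * g (y :: τ) :=
      ih (fun l₁ z l₂ => hf (x :: l₁) z l₂) hσ'
    have hrepeat : pairing (crossCochain k (fun l => f (x :: l)) g) (simplexCross (x :: σ) τ) =
        0 := by
      refine pairing_eq_zero ?_ (simplexCross_cons_mem_supported x σ τ)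
      rintro _ ⟨y', l', rfl⟩
      have hf_front := hf [] x ((l'.take k).map Prod.fst)
      simp_all [crossCochain]
    simp [simplexCross, pairing_cons, crossCochain_succ_cons, hne, hstep, hrepeat]

lemma pairing_cross {k : ℕ} {f : List α → R} (hf : ∀ l₁ x l₂, f (l₁ ++ x :: x :: l₂) = 0)
    (g : List β → R) {c : Chain R α} {d : Chain R β}
    (hc : c ∈ supported R {l | l.length = k + 1}) (hd : d ∈ supported R {l | l ≠ []}) :
    pairing (crossCochain k f g) (cross c d) = pairing f c * pairing g d := by
  refine map_congr_of_single (f := pairing (crossCochain k f g) ∘ₗ cross.flip d)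
    (g := (LinearMap.mul R R).flip (pairing g d) ∘ₗ pairing f) (fun σ hσ => ?_) hc
  refine map_congr_of_single
    (f := pairing (crossCochain k f g) ∘ₗ cross (Finsupp.single σ 1))
    (g := LinearMap.mul R R (pairing f (Finsupp.single σ 1)) ∘ₗ pairing g) (fun τ hτ => ?_) hd
  simp [pairing_simplexCross hf g hσ hτ]

end Cross

section Homotopy

variable {R : Type*} [CommRing R] {α : Type*} [LinearOrder α]

/-- Cone construction, by recursion on the number `d` of vertices, of a homotopy from the identity
to the simplicial map induced by `φ` followed by alternation. -/
noncomputable def simplexHomotopy (φ : α → α) : ℕ → List α → Chain R α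
  | 0, _ => 0
  | _ + 1, [] => 0
  | d + 1, x :: l => cons x (Finsupp.single (x :: l) 1 - simplexAlternation ((x :: l).map φ)
      - Finsupp.linearCombination R (simplexHomotopy φ d) (simplexBoundary (x :: l)))

/-- The linear extension of `simplexHomotopy` to chains of simplices with `d` vertices. -/
noncomputable def homotopy (φ : α → α) (d : ℕ) : Chain R α →ₗ[R] Chain R α :=
  Finsupp.linearCombination R (simplexHomotopy φ d)

@[simp] lemma homotopy_single (φ : α → α) (d : ℕ) (l : List α) (a : R) :
    homotopy φ d (Finsupp.single l a) = a • simplexHomotopy φ d l := by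
  simp [homotopy]

lemma simplexHomotopy_nil (φ : α → α) (d : ℕ) : (simplexHomotopy φ d [] : Chain R α) = 0 := by
  cases d <;> rfl

lemma simplexHomotopy_succ_cons (φ : α → α) (d : ℕ) (x : α) (l : List α) :
    (simplexHomotopy φ (d + 1) (x :: l) : Chain R α) = cons x (Finsupp.single (x :: l) 1
      - simplexAlternation ((x :: l).map φ) - homotopy φ d (simplexBoundary (x :: l))) :=
  rfl

lemma boundary_homotopy (φ : α → α) {d : ℕ} {c : Chain R α}
    (hc : c ∈ supported R {l | l.length = d}) :
    boundary (homotopy φ d c) =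
      c - alternation (map φ c) - homotopy φ (d - 1) (boundary c) := by
  refine map_congr_of_single (f := boundary ∘ₗ homotopy φ d)
    (g := LinearMap.id - alternation ∘ₗ map φ - homotopy φ (d - 1) ∘ₗ boundary)
    (fun l hl => ?_) hc
  suffices boundary (simplexHomotopy φ d l) = Finsupp.single l (1 : R)
      - simplexAlternation (l.map φ) - homotopy φ (d - 1) (simplexBoundary l) by simpa
  induction d generalizing l c with
  | zero =>
    rw [List.length_eq_zero_iff.1 hl]
    simp [simplexHomotopy, simplexBoundary, simplexAlternation]
  | succ d ih =>
    obtain ⟨x, l, rfl⟩ := List.exists_cons_of_length_eq_add_one hl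
    have hfaces : (simplexBoundary (x :: l) : Chain R α) ∈ supported R {l' | l'.length = d} :=
      supported_mono (simplexBoundary_mem_supported _) fun l' hl' => by
        simpa using hl'.2.trans hl
    have hboundary : boundary (homotopy φ d (simplexBoundary (x :: l))) =
        simplexBoundary (x :: l) - alternation (map φ (simplexBoundary (x :: l) : Chain R α)) := by
      have := map_congr_of_single (f := boundary ∘ₗ homotopy φ d)
        (g := LinearMap.id - alternation ∘ₗ map φ - homotopy φ (d - 1) ∘ₗ boundary)
        (fun l' hl' => by simpa using ih hfaces l' hl') hfaces
      simpa [boundary_simplexBoundary] using this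
    have hcycle : boundary (Finsupp.single (x :: l) (1 : R)
        - simplexAlternation ((x :: l).map φ) - homotopy φ d (simplexBoundary (x :: l))) = 0 := by
      rw [map_sub, map_sub, hboundary, boundary_simplexAlternation, map_simplexBoundary,
        boundary_single, one_smul, sub_self]
    rw [simplexHomotopy_succ_cons, boundary_cons, hcycle, map_zero, sub_zero, Nat.add_sub_cancel]

lemma simplexHomotopy_mem_supported (φ : α → α) (d : ℕ) (l : List α) :
    (simplexHomotopy φ d l : Chain R α) ∈ supported R
      {l' | l'.length = l.length + 1 ∧ ∀ x ∈ l', ∃ y ∈ l, x = y ∨ x = φ y} := by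
  induction d generalizing l with
  | zero => exact Submodule.zero_mem _
  | succ d ih =>
    cases l with
    | nil => exact Submodule.zero_mem _
    | cons x l =>
      rw [simplexHomotopy_succ_cons]
      refine cons_mem_supported (S := {l' | l'.length = l.length + 1 ∧
          ∀ z ∈ l', ∃ y ∈ x :: l, z = y ∨ z = φ y}) ?_
        (Submodule.sub_mem _ (Submodule.sub_mem _ ?_ ?_) ?_)
      · rintro l' ⟨hlen, hmem⟩
        exact ⟨by simp [hlen], List.forall_mem_cons.2
          ⟨⟨x, List.mem_cons_self, Or.inl rfl⟩, hmem⟩⟩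
      · exact single_mem_supported (by exact ⟨rfl, fun z hz => ⟨z, hz, Or.inl rfl⟩⟩) 1
      · refine supported_mono (simplexAlternation_mem_supported _) ?_
        rintro l' ⟨hperm, -⟩
        refine ⟨by simpa using hperm.length_eq, fun z hz => ?_⟩
        obtain ⟨y, hy, rfl⟩ := List.mem_map.1 (hperm.mem_iff.1 hz)
        exact ⟨y, hy, Or.inr rfl⟩
      · refine map_mem_of_single _ ?_ (simplexBoundary_mem_supported (x :: l))
        rintro τ ⟨hsub, hlen⟩
        rw [homotopy_single, one_smul]
        refine supported_mono (ih τ) ?_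
        rintro l' ⟨hlen', hmem⟩
        refine ⟨by simp only [List.length_cons] at hlen; omega, fun z hz => ?_⟩
        obtain ⟨y, hy, h⟩ := hmem z hz
        exact ⟨y, hsub.subset hy, h⟩

end Homotopy

section Fine

variable {α β : Type*} [PseudoMetricSpace α] [PseudoMetricSpace β]

/-- A simplex all of whose vertices are at distance less than `ε` from each other; the `ε`-fine
simplices form the Vietoris–Rips complex at scale `ε`. -/
def IsFine (ε : ℝ) (l : List α) : Prop :=
  ∀ x ∈ l, ∀ y ∈ l, dist x y < ε

lemma IsFine.mono {ε δ : ℝ} {l : List α} (h : IsFine ε l) (hεδ : ε ≤ δ) : IsFine δ l :=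
  fun x hx y hy => (h x hx y hy).trans_le hεδ

lemma IsFine.subset {ε : ℝ} {l l' : List α} (h : IsFine ε l) (hl : l' ⊆ l) : IsFine ε l' :=
  fun x hx y hy => h x (hl hx) y (hl hy)

lemma IsFine.map {ε : ℝ} {l : List α} (h : IsFine ε l) {φ : α → β}
    (hφ : ∀ x y, dist (φ x) (φ y) ≤ dist x y) : IsFine ε (l.map φ) := by
  simp only [IsFine, List.forall_mem_map]
  exact fun x hx y hy => (hφ x y).trans_lt (h x hx y hy)

lemma IsFine.of_near {ε : ℝ} {l l' : List α} (h : IsFine (ε / 4) l)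
    (hl' : ∀ x ∈ l', ∃ y ∈ l, dist x y < ε / 4) : IsFine ε l' := by
  intro x hx y hy
  obtain ⟨x', hx', hxx'⟩ := hl' x hx
  obtain ⟨y', hy', hyy'⟩ := hl' y hy
  have := h x' hx' y' hy'
  linarith [dist_nonneg.trans_lt hxx', dist_triangle4 x x' y' y, dist_comm y y']

end Fine

section Detected

open Metric

variable {R : Type*} [CommRing R] {α β : Type*} [PseudoMetricSpace α] [PseudoMetricSpace β]

/-- A relative Vietoris–Rips cocycle `ω` of degree `N` at scale `ε`, vanishing near each member of
`𝒜`, which is homologically nontrivial: it takes the value `1` on relative cycles of arbitrarily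
small scale. -/
structure IsDetected (𝒜 : Set (Set α)) (N : ℕ) (ε : ℝ) (ω : List α → R) : Prop where
  coboundary_eq_zero : ∀ l, l.length = N + 2 → IsFine ε l → coboundary ω l = 0
  eq_zero : ∀ l, l.length = N + 1 → IsFine ε l →
    ∀ A ∈ 𝒜, (∀ x ∈ l, x ∈ thickening ε A) → ω l = 0
  exists_cycle : ∀ ρ > 0, ∃ z ∈ supported R {l | l.length = N + 1 ∧ IsFine ρ l},
    boundary z ∈ supported R {l | l = [] ∨ ∃ A ∈ 𝒜, ∀ x ∈ l, x ∈ A} ∧ pairing ω z = 1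

variable {𝒜 : Set (Set α)} {N : ℕ} {ε : ℝ} {ω : List α → R}

lemma IsDetected.pairing_boundary_homotopy [LinearOrder α] (h : IsDetected 𝒜 N ε ω) {φ : α → α}
    (hε : 0 < ε) (hφ : ∀ x, dist (φ x) x < ε / 4) {z : Chain R α}
    (hz : z ∈ supported R {l | l.length = N + 1 ∧ IsFine (ε / 4) l}) :
    pairing ω (boundary (homotopy φ (N + 1) z)) = 0 := by
  rw [pairing_boundary]
  refine map_eq_zero_of_single (pairing (coboundary ω) ∘ₗ homotopy φ (N + 1)) ?_ hz
  rintro l ⟨hlen, hfine⟩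
  rw [LinearMap.comp_apply, homotopy_single, one_smul]
  refine pairing_eq_zero ?_ (simplexHomotopy_mem_supported φ (N + 1) l)
  rintro l' ⟨hlen', hmem⟩
  refine h.coboundary_eq_zero l' (by omega) (hfine.of_near fun x hx => ?_)
  obtain ⟨y, hy, rfl | rfl⟩ := hmem x hx
  · exact ⟨x, hy, by simpa using hε⟩
  · exact ⟨y, hy, hφ y⟩

lemma IsDetected.pairing_homotopy_boundary [LinearOrder α] (h : IsDetected 𝒜 N ε ω) {φ : α → α}
    (hε : 0 < ε) (hφ : ∀ x, dist (φ x) x < ε / 4) {z : Chain R α}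
    (hz : z ∈ supported R {l | l.length = N + 1 ∧ IsFine (ε / 4) l})
    (hbz : boundary z ∈ supported R {l | l = [] ∨ ∃ A ∈ 𝒜, ∀ x ∈ l, x ∈ A}) :
    pairing ω (homotopy φ N (boundary z)) = 0 := by
  have hfaces : boundary z ∈ supported R {l | l.length = N ∧ IsFine (ε / 4) l} :=
    boundary_mem_supported (fun l hl l' hsub hlen => by
      exact ⟨by have := hl.1; omega, hl.2.subset hsub.subset⟩) hz
  refine map_eq_zero_of_single (pairing ω ∘ₗ homotopy φ N) ?_ (supported_inter hbz hfaces)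
  rintro l ⟨rfl | ⟨A, hA, hlA⟩, hlen, hfine⟩
  · simp [simplexHomotopy_nil]
  rw [LinearMap.comp_apply, homotopy_single, one_smul]
  refine pairing_eq_zero ?_ (simplexHomotopy_mem_supported φ N l)
  rintro l' ⟨hlen', hmem⟩
  have hnear : ∀ x ∈ l', ∃ y ∈ l, dist x y < ε / 4 := by
    intro x hx
    obtain ⟨y, hy, rfl | rfl⟩ := hmem x hx
    · exact ⟨x, hy, by simpa using hε⟩
    · exact ⟨y, hy, hφ y⟩
  refine h.eq_zero l' (by omega) (hfine.of_near hnear) A hA fun x hx => ?_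
  obtain ⟨y, hy, hxy⟩ := hnear x hx
  exact mem_thickening_iff.2 ⟨y, hlA y hy, by linarith⟩

lemma IsDetected.exists_nodup_map [Nontrivial R] (h : IsDetected 𝒜 N ε ω) {φ : α → α}
    (hε : 0 < ε) (hφ : ∀ x, dist (φ x) x < ε / 4) {ρ : ℝ} (hρ : 0 < ρ) :
    ∃ l, l.length = N + 1 ∧ IsFine ρ l ∧ (l.map φ).Nodup := by
  by_contra! hno
  let _ : LinearOrder α := IsWellOrder.linearOrder WellOrderingRel
  obtain ⟨z, hz, hbz, hωz⟩ := h.exists_cycle (min ρ (ε / 4)) (by positivity)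
  have hz_fine : z ∈ supported R {l | l.length = N + 1 ∧ IsFine (ε / 4) l} :=
    supported_mono hz fun l hl => by exact ⟨hl.1, hl.2.mono (min_le_right _ _)⟩
  have halternation : alternation (map φ z) = 0 := by
    refine map_eq_zero_of_single (alternation ∘ₗ map φ) (fun l hl => ?_) hz
    simp [simplexAlternation_eq_zero (hno l hl.1 (hl.2.mono (min_le_left _ _)))]
  have hpairing := congrArg (pairing ω)
    (boundary_homotopy φ (supported_mono hz fun l hl => hl.1))
  rw [map_sub, map_sub, h.pairing_boundary_homotopy hε hφ hz_fine, halternation,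
    Nat.add_sub_cancel, h.pairing_homotopy_boundary hε hφ hz_fine hbz, hωz] at hpairing
  simp at hpairing

/-- The Lebesgue number lemma turns a fine simplex with distinct images into a point common to many
members of the cover. -/
lemma IsDetected.le_ord [Nontrivial R] [CompactSpace α] (h : IsDetected 𝒜 N ε ω) (hε : 0 < ε)
    {γ : Set (Set α)} (hγ : IsOpenCover γ)
    (hfine : ∀ U ∈ γ, ∀ x ∈ U, ∀ y ∈ U, dist x y < ε / 4) : (N : ℕ∞) ≤ ord γ := by
  obtain ⟨r, hr, hball⟩ := lebesgue_number_lemma_of_metric_sUnion isCompact_univ hγ.1 hγ.2.ge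
  choose U hU hball using fun x => hball x (mem_univ x)
  have hself : ∀ x, x ∈ U x := fun x => hball x (mem_ball_self hr)
  let φ : α → α := fun x => Set.Nonempty.some (s := U x) ⟨x, hself x⟩
  have hφU : ∀ x, φ x ∈ U x := fun x => Set.Nonempty.some_mem _
  have hφ_congr : ∀ x y, U x = U y → φ x = φ y := by
    intro x y hxy
    simp only [φ, hxy]
  obtain ⟨l, hlen, hl, hnodup⟩ := h.exists_nodup_map hε
    (fun x => hfine (U x) (hU x) _ (hφU x) x (hself x)) hr
  obtain rfl : N = l.length - 1 := by omega
  let vertex : Fin (l.length - 1 + 1) → α := fun i => l.get (i.cast hlen.symm)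
  have hinj : Function.Injective fun i => φ (vertex i) := by
    intro i j hij
    have hvertex := List.inj_on_of_nodup_map hnodup (List.get_mem _ _) (List.get_mem _ _) hij
    simpa using (List.Nodup.of_map φ hnodup).injective_get hvertex
  refine le_iSup₂_of_le (l.length - 1) ⟨fun i => U (vertex i), ?_, fun i => hU _, ?_⟩ le_rfl
  · exact fun i j hij => hinj (hφ_congr _ _ hij)
  · refine ⟨vertex 0, mem_iInter.2 fun i => hball _ (mem_ball.2 ?_)⟩
    exact hl _ (List.get_mem _ _) _ (List.get_mem _ _)

end Detected

end Chain

section Widim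

variable {α : Type*} [PseudoMetricSpace α] [CompactSpace α]

lemma dist_le_mesh {γ : Set (Set α)} {U : Set α} (hU : U ∈ γ) {x y : α} (hx : x ∈ U)
    (hy : y ∈ U) : dist x y ≤ mesh (fun x y => dist x y) γ := by
  obtain ⟨D, hD⟩ : ∃ D, ∀ x y : α, dist x y ≤ D := by
    obtain ⟨D, hD⟩ := Metric.isBounded_iff.1 (isCompact_univ (X := α)).isBounded
    exact ⟨D, fun x y => hD (mem_univ x) (mem_univ y)⟩
  have hdiam : dist x y ≤ diamD (fun x y => dist x y) U :=
    le_csSup ⟨D, by rintro _ ⟨a, -, b, -, rfl⟩; exact hD a b⟩ ⟨x, hx, y, hy, rfl⟩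
  refine hdiam.trans (le_csSup ⟨D, ?_⟩ (mem_image_of_mem _ hU))
  rintro _ ⟨V, -, rfl⟩
  refine Real.sSup_le ?_ (dist_nonneg.trans (hD x y))
  rintro _ ⟨a, -, b, -, rfl⟩
  exact hD a b

lemma le_widim_of_le_ord {N : ℕ∞} {ε : ℝ}
    (h : ∀ γ : Set (Set α), IsOpenCover γ → (∀ U ∈ γ, ∀ x ∈ U, ∀ y ∈ U, dist x y < ε) →
      N ≤ ord γ) : N ≤ widim ε (fun x y : α => dist x y) := by
  refine le_iInf₂ fun γ hγ => le_iInf₂ fun γ' hγ' => h γ' hγ'.1 fun V hV x hx y hy => ?_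
  obtain ⟨U, hU, hVU⟩ := hγ'.2 V hV
  exact (dist_le_mesh hU (hVU hx) (hVU hy)).trans_lt hγ.2

lemma Chain.IsDetected.le_widim {R : Type*} [CommRing R] [Nontrivial R] {𝒜 : Set (Set α)} {N : ℕ}
    {ε : ℝ} {ω : List α → R} (h : IsDetected 𝒜 N ε ω) (hε : 0 < ε) :
    (N : ℕ∞) ≤ widim (ε / 4) (fun x y : α => dist x y) :=
  le_widim_of_le_ord fun _ hγ hfine => h.le_ord hε hγ hfine

end Widim

namespace Chain

section DetectedProduct

open Metric

variable {R : Type*} [CommRing R] {α β : Type*} [PseudoMetricSpace α] [PseudoMetricSpace β]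
  {𝒜 : Set (Set α)} {ℬ : Set (Set β)} {k m : ℕ} {ε : ℝ} {f : List α → R} {g : List β → R}

lemma dist_fst_le (p q : α × β) : dist p.1 q.1 ≤ dist p q := le_max_left _ _

lemma dist_snd_le (p q : α × β) : dist p.2 q.2 ≤ dist p q := le_max_right _ _

lemma exists_cycle_cross (hf : IsDetected 𝒜 k ε f) (hg : IsDetected ℬ m ε g)
    (hf_repeat : ∀ l₁ x l₂, f (l₁ ++ x :: x :: l₂) = 0) {ρ : ℝ} (hρ : 0 < ρ) :
    ∃ z ∈ supported R {l : List (α × β) | l.length = k + m + 1 ∧ IsFine ρ l},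
      boundary z ∈ supported R {l | l = [] ∨
        ∃ C ∈ (Prod.fst ⁻¹' ·) '' 𝒜 ∪ (Prod.snd ⁻¹' ·) '' ℬ, ∀ p ∈ l, p ∈ C} ∧
      pairing (crossCochain k f g) z = 1 := by
  obtain ⟨c, hc, hbc, hfc⟩ := hf.exists_cycle ρ hρ
  obtain ⟨d, hd, hbd, hgd⟩ := hg.exists_cycle ρ hρ
  refine ⟨cross c d, cross_mem_supported ?_ hc hd, ?_, ?_⟩
  · rintro σ ⟨hσ, hσ_fine⟩ τ ⟨hτ, hτ_fine⟩ l hlen hl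
    refine ⟨by omega, fun p hp q hq => max_lt ?_ ?_⟩
    · exact hσ_fine _ (hl p hp).1 _ (hl q hq).1
    · exact hτ_fine _ (hl p hp).2 _ (hl q hq).2
  · rw [boundary_cross]
    refine Submodule.add_mem _ (Submodule.sub_mem _ ?_ ?_) ?_
    · refine cross_mem_supported (fun σ hσ τ _ l _ hl => ?_) hbc hd
      rcases hσ with rfl | ⟨A, hA, hσA⟩
      · exact Or.inl (List.eq_nil_iff_forall_not_mem.2 fun p hp => by simpa using (hl p hp).1)
      · exact Or.inr ⟨_, Or.inl ⟨A, hA, rfl⟩, fun p hp => hσA _ (hl p hp).1⟩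
    · refine cross_mem_supported (fun σ _ τ hτ l _ hl => ?_) (gradeSign_mem_supported hc) hbd
      rcases hτ with rfl | ⟨B, hB, hτB⟩
      · exact Or.inl (List.eq_nil_iff_forall_not_mem.2 fun p hp => by simpa using (hl p hp).2)
      · exact Or.inr ⟨_, Or.inr ⟨B, hB, rfl⟩, fun p hp => hτB _ (hl p hp).2⟩
    · exact single_mem_supported (Or.inl rfl) _
  · rw [pairing_cross hf_repeat g (supported_mono hc fun σ hσ => hσ.1)
      (supported_mono hd fun τ hτ => by rintro rfl; simp at hτ), hfc, hgd, one_mul]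

lemma IsDetected.cross (hf : IsDetected 𝒜 k ε f) (hg : IsDetected ℬ m ε g)
    (hf_repeat : ∀ l₁ x l₂, f (l₁ ++ x :: x :: l₂) = 0) :
    IsDetected ((Prod.fst ⁻¹' ·) '' 𝒜 ∪ (Prod.snd ⁻¹' ·) '' ℬ) (k + m) ε (crossCochain k f g) where
  coboundary_eq_zero l hlen hl := by
    have hfront := hf.coboundary_eq_zero ((l.take (k + 2)).map Prod.fst) (by simp; omega)
      ((hl.subset (List.take_subset _ _)).map dist_fst_le)
    have hback := hg.coboundary_eq_zero ((l.drop k).map Prod.snd) (by simp; omega)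
      ((hl.subset (List.drop_subset _ _)).map dist_snd_le)
    rw [coboundary_crossCochain k f g (by omega), crossCochain, crossCochain, hfront, hback]
    ring
  eq_zero l hlen hl := by
    rintro _ (⟨A, hA, rfl⟩ | ⟨B, hB, rfl⟩) hlA
    · rw [crossCochain, hf.eq_zero _ (by simp; omega)
        ((hl.subset (List.take_subset _ _)).map dist_fst_le) A hA ?_, zero_mul]
      refine List.forall_mem_map.2 fun p hp => ?_
      obtain ⟨q, hq, hpq⟩ := mem_thickening_iff.1 (hlA p (List.take_subset _ _ hp))
      exact mem_thickening_iff.2 ⟨q.1, hq, (dist_fst_le p q).trans_lt hpq⟩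
    · rw [crossCochain, hg.eq_zero _ (by simp; omega)
        ((hl.subset (List.drop_subset _ _)).map dist_snd_le) B hB ?_, mul_zero]
      refine List.forall_mem_map.2 fun p hp => ?_
      obtain ⟨q, hq, hpq⟩ := mem_thickening_iff.1 (hlA p (List.drop_subset _ _ hp))
      exact mem_thickening_iff.2 ⟨q.2, hq, (dist_snd_le p q).trans_lt hpq⟩
  exists_cycle _ hρ := exists_cycle_cross hf hg hf_repeat hρ

lemma IsDetected.comp_isometryEquiv (h : IsDetected 𝒜 m ε f) (e : α ≃ᵢ β) :
    IsDetected ((e.symm ⁻¹' ·) '' 𝒜) m ε (fun l => f (l.map e.symm)) where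
  coboundary_eq_zero l hlen hl := by
    rw [coboundary_comp_map]
    exact h.coboundary_eq_zero _ (by simpa) (hl.map fun x y => (e.symm.dist_eq x y).le)
  eq_zero l hlen hl := by
    rintro _ ⟨A, hA, rfl⟩ hlA
    refine h.eq_zero _ (by simpa) (hl.map fun x y => (e.symm.dist_eq x y).le) A hA ?_
    refine List.forall_mem_map.2 fun x hx => ?_
    obtain ⟨y, hy, hxy⟩ := mem_thickening_iff.1 (hlA x hx)
    exact mem_thickening_iff.2 ⟨e.symm y, hy, by rwa [e.symm.dist_eq]⟩
  exists_cycle ρ hρ := by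
    obtain ⟨z, hz, hbz, hfz⟩ := h.exists_cycle ρ hρ
    refine ⟨map e z, map_mem_supported ?_ hz, ?_, ?_⟩
    · exact fun l hl => ⟨by simpa using hl.1, hl.2.map fun x y => (e.dist_eq x y).le⟩
    · rw [← map_boundary]
      refine map_mem_supported ?_ hbz
      rintro l (rfl | ⟨A, hA, hlA⟩)
      · exact Or.inl rfl
      · exact Or.inr ⟨_, ⟨A, hA, rfl⟩, List.forall_mem_map.2 fun x hx => by
          simpa using hlA x hx⟩
    · simpa [pairing_map, Function.comp_def] using hfz

/-- The decomposition of a tuple into its first entry and the others is isometric for the sup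
distances. -/
def consIsometryEquiv (α : Type*) [PseudoMetricSpace α] (n : ℕ) :
    α × (Fin n → α) ≃ᵢ (Fin (n + 1) → α) where
  toEquiv := Fin.consEquiv fun _ => α
  isometry_toFun := Isometry.of_dist_eq fun p q => by
    refine le_antisymm ((dist_pi_le_iff dist_nonneg).2 fun i => ?_) (max_le ?_ ?_)
    · cases i using Fin.cases with
      | zero => exact le_max_left _ _
      | succ i => exact (dist_le_pi_dist p.2 q.2 i).trans (le_max_right _ _)
    · exact dist_le_pi_dist (Fin.cons p.1 p.2 : Fin (n + 1) → α) (Fin.cons q.1 q.2) 0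
    · exact (dist_pi_le_iff dist_nonneg).2 fun i =>
        dist_le_pi_dist (Fin.cons p.1 p.2 : Fin (n + 1) → α) (Fin.cons q.1 q.2) i.succ

lemma isDetected_pi_zero (ε : ℝ) :
    IsDetected ∅ 0 ε (fun _ : List (Fin 0 → α) => (1 : R)) where
  coboundary_eq_zero l hlen _ := by
    obtain ⟨x, y, rfl⟩ := List.length_eq_two.1 hlen
    simp [coboundary_cons]
  eq_zero _ _ _ A hA := absurd hA (notMem_empty A)
  exists_cycle ρ hρ := by
    refine ⟨Finsupp.single [Fin.elim0] 1, single_mem_supported ?_ 1, ?_, by simp⟩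
    · exact ⟨rfl, by simpa [IsFine] using hρ⟩
    · rw [boundary_single, one_smul]
      simp only [simplexBoundary, map_zero, sub_zero]
      exact single_mem_supported (Or.inl rfl) 1

lemma IsDetected.exists_pi (hf : IsDetected 𝒜 k ε f)
    (hf_repeat : ∀ l₁ x l₂, f (l₁ ++ x :: x :: l₂) = 0) (n : ℕ) :
    ∃ (ℬ : Set (Set (Fin n → α))) (g : List (Fin n → α) → R), IsDetected ℬ (n * k) ε g := by
  induction n with
  | zero => exact ⟨∅, _, by simpa using isDetected_pi_zero ε⟩
  | succ n ih =>
    obtain ⟨ℬ, g, hg⟩ := ih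
    have hcross := (hf.cross hg hf_repeat).comp_isometryEquiv (consIsometryEquiv α n)
    rw [show k + n * k = (n + 1) * k by ring] at hcross
    exact ⟨_, _, hcross⟩

lemma IsDetected.mul_le_widim_pi [Nontrivial R] [CompactSpace α] (hf : IsDetected 𝒜 k ε f)
    (hf_repeat : ∀ l₁ x l₂, f (l₁ ++ x :: x :: l₂) = 0) (hε : 0 < ε) (n : ℕ) :
    ((n * k : ℕ) : ℕ∞) ≤ widim (ε / 4) (fun x y : Fin n → α => dist x y) := by
  obtain ⟨ℬ, g, hg⟩ := hf.exists_pi hf_repeat n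
  exact hg.le_widim hε

end DetectedProduct

end Chain

lemma exists_dual_comp_eqOn {F V W : Type*} [Field F] [AddCommGroup V] [Module F V]
    [AddCommGroup W] [Module F W] (S : Submodule F V) (D : V →ₗ[F] W) (φ : V →ₗ[F] F)
    (h : ∀ z ∈ S, D z = 0 → φ z = 0) : ∃ B : W →ₗ[F] F, ∀ z ∈ S, B (D z) = φ z := by
  have hφ : φ ∘ₗ S.subtype ∈ (LinearMap.ker (D ∘ₗ S.subtype)).dualAnnihilator :=
    (Submodule.mem_dualAnnihilator _).2 fun z hz => h z z.2 hz
  rw [← LinearMap.range_dualMap_eq_dualAnnihilator_ker] at hφ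
  obtain ⟨B, hB⟩ := hφ
  exact ⟨B, fun z hz => LinearMap.congr_fun hB ⟨z, hz⟩⟩

namespace Chain

section Alternating

variable {R : Type*} [CommRing R] {α : Type*} [LinearOrder α]

lemma boundary_alternation (c : Chain R α) :
    boundary (alternation c) = alternation (boundary c) := by
  have hcomp : boundary ∘ₗ alternation = alternation ∘ₗ (boundary : Chain R α →ₗ[R] Chain R α) :=
    hom_ext fun l => by
      simp only [LinearMap.comp_apply, alternation_single, boundary_single, one_smul,
        boundary_simplexAlternation]
  exact LinearMap.congr_fun hcomp c

lemma coboundary_pairing_simplexAlternation (f : List α → R) (l : List α) :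
    coboundary (fun l => pairing f (simplexAlternation l)) l =
      pairing (coboundary f) (simplexAlternation l) := by
  have hpairing : pairing (fun l => pairing f (simplexAlternation l)) =
      pairing f ∘ₗ (alternation : Chain R α →ₗ[R] Chain R α) :=
    hom_ext fun l => by simp
  rw [coboundary, hpairing, LinearMap.comp_apply, ← boundary_simplexAlternation, pairing_boundary]

end Alternating

section LabelCocycle

/-- The facet of the simplex with vertex set `Fin (m + 1)` that omits the last vertex. -/
def lastFacet (m : ℕ) : List (Fin (m + 1)) := (List.finRange m).map Fin.castSucc

/-- The alternating cochain dual to `lastFacet m`. -/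
noncomputable def facetCochain (m : ℕ) (l : List (Fin (m + 1))) : ℤ :=
  (simplexAlternation l : Chain ℤ (Fin (m + 1))) (lastFacet m)

/-- The alternating cocycle of degree `m` on `Fin (m + 1)` generating the top cohomology of the
`m`-simplex relative to its boundary. -/
noncomputable def labelCocycle (m : ℕ) : List (Fin (m + 1)) → ℤ :=
  coboundary (facetCochain m)

variable {α : Type*} {m : ℕ}

lemma pairing_facetCochain (c : Chain ℤ (Fin (m + 1))) :
    pairing (facetCochain m) c = alternation c (lastFacet m) :=
  LinearMap.congr_fun (f := pairing (facetCochain m))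
    (g := Finsupp.lapply (lastFacet m) ∘ₗ alternation)
    (hom_ext fun l => by simp [facetCochain]) c

lemma labelCocycle_eq_boundary (l : List (Fin (m + 1))) :
    labelCocycle m l =
      boundary (simplexAlternation l : Chain ℤ (Fin (m + 1))) (lastFacet m) := by
  rw [labelCocycle, coboundary, pairing_facetCochain, boundary_simplexAlternation]

lemma labelCocycle_eq_zero {l : List (Fin (m + 1))} (h : ¬ l.Nodup) : labelCocycle m l = 0 := by
  rw [labelCocycle_eq_boundary, simplexAlternation_eq_zero h, map_zero, Finsupp.zero_apply]

lemma labelCocycle_eq_zero_of_notMem {l : List (Fin (m + 1))} (hl : l.length = m + 1)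
    {j : Fin (m + 1)} (hj : j ∉ l) : labelCocycle m l = 0 := by
  refine labelCocycle_eq_zero fun hnodup => ?_
  have huniv : l.toFinset = Finset.univ := by
    rw [← Finset.card_eq_iff_eq_univ, List.toFinset_card_of_nodup hnodup, hl, Fintype.card_fin]
  exact hj (List.mem_toFinset.1 (huniv ▸ Finset.mem_univ j))

lemma pairing_labelCocycle_simplexAlternation [LinearOrder α] (lam : α → Fin (m + 1))
    (l : List α) :
    pairing (fun l => labelCocycle m (l.map lam)) (simplexAlternation l) =
      labelCocycle m (l.map lam) := by
  rw [← pairing_map, labelCocycle, ← pairing_boundary, pairing_facetCochain,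
    ← boundary_alternation, alternation_map_simplexAlternation, ← labelCocycle,
    labelCocycle_eq_boundary]

lemma coboundary_labelCocycle (lam : α → Fin (m + 1)) (l : List α) :
    coboundary (fun l => labelCocycle m (l.map lam)) l = 0 := by
  rw [coboundary_comp_map, labelCocycle, coboundary_coboundary]

end LabelCocycle

lemma exists_coboundary_eq {F : Type*} [Field F] {α : Type*} (ω : List α → F)
    {I A : Set (List α)}
    (h : ∀ z ∈ supported F I, boundary z ∈ supported F A → pairing ω z ≠ 1) :
    ∃ b : List α → F, (∀ l ∈ A, b l = 0) ∧ ∀ l ∈ I, coboundary b l = ω l := by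
  obtain ⟨B, hB⟩ := exists_dual_comp_eqOn (supported F I) ((supported F A).mkQ ∘ₗ boundary)
    (pairing ω) fun z hz hbz => by
      by_contra hne
      refine h ((pairing ω z)⁻¹ • z) (Submodule.smul_mem _ _ hz) ?_ ?_
      · rw [map_smul]
        exact Submodule.smul_mem _ _ ((Submodule.Quotient.mk_eq_zero _).1 hbz)
      · rw [map_smul]
        exact inv_mul_cancel₀ hne
  refine ⟨fun l => B ((supported F A).mkQ (Finsupp.single l 1)), fun l hl => ?_, fun l hl => ?_⟩
  · have hzero : (supported F A).mkQ (Finsupp.single l 1) = 0 := by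
      simpa using single_mem_supported hl (1 : F)
    simp only [hzero, map_zero]
  · have hpairing : pairing (fun l => B ((supported F A).mkQ (Finsupp.single l 1))) =
        B ∘ₗ (supported F A).mkQ :=
      hom_ext fun l => by simp
    rw [coboundary, hpairing]
    simpa using hB _ (single_mem_supported hl 1)

end Chain

lemma exists_finite_range_dist_lt {α L : Type*} [PseudoMetricSpace α] [CompactSpace α] [Finite L]
    (f : α → L) {ε : ℝ} (hε : 0 < ε) :
    ∃ ν : α → α, (range ν).Finite ∧ (∀ x, dist (ν x) x < ε) ∧ ∀ x, f (ν x) = f x := by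
  obtain ⟨t, -, ht, hcover⟩ := (isCompact_univ (X := α)).finite_cover_balls (half_pos hε)
  have : Finite t := ht
  have hnear : ∀ x : α, ∃ y : t, dist x y < ε / 2 := fun x => by
    simpa using hcover (mem_univ x)
  choose q hq using hnear
  let Q : α → t × L := fun x => (q x, f x)
  have hQ : ∀ x, Q (rangeSplitting Q (rangeFactorization Q x)) = Q x := fun x =>
    apply_rangeSplitting Q (rangeFactorization Q x)
  refine ⟨fun x => rangeSplitting Q (rangeFactorization Q x), ?_, fun x => ?_, fun x => ?_⟩
  · exact (finite_range (rangeSplitting Q)).subset (range_subset_iff.2 fun x => mem_range_self _)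
  · have hnear := hq (rangeSplitting Q (rangeFactorization Q x))
    rw [show q (rangeSplitting Q _) = q x from congrArg Prod.fst (hQ x)] at hnear
    calc dist _ x ≤ dist _ (q x : α) + dist x (q x : α) := dist_triangle_right _ _ _
      _ < ε / 2 + ε / 2 := add_lt_add hnear (hq x)
      _ = ε := add_halves ε
  · exact congrArg Prod.snd (hQ x)

lemma exists_pos_forall_intCast_eq_mul {S : Set ℚ} (hS : S.Finite) :
    ∃ D : ℕ, 0 < D ∧ ∀ q ∈ S, (((D * q).num : ℤ) : ℚ) = D * q := by
  refine ⟨∏ q ∈ hS.toFinset, q.den, Finset.prod_pos fun q _ => q.pos, fun q hq => ?_⟩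
  obtain ⟨e, he⟩ := Finset.dvd_prod_of_mem Rat.den (hS.mem_toFinset.2 hq)
  have hint : ((∏ q ∈ hS.toFinset, q.den : ℕ) : ℚ) * q = ((e * q.num : ℤ) : ℚ) := by
    rw [he]
    push_cast
    rw [mul_right_comm, Rat.den_mul_eq_num, mul_comm]
  rw [hint, Rat.num_intCast]

namespace Chain

section RelCoboundary

open Metric

variable {α : Type*} [PseudoMetricSpace α] {A : Set α} {ε : ℝ} {m : ℕ}

/-- At scale `ε` the Vietoris–Rips cochain `u`, on simplices with `m + 1` vertices, is the
coboundary of an integral cochain vanishing on the simplices in `A`. -/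
def IsRelCoboundary (A : Set α) (ε : ℝ) (m : ℕ) (u : List α → ℤ) : Prop :=
  ∃ c : List α → ℤ, (∀ l, l.length = m → IsFine ε l → (∀ x ∈ l, x ∈ A) → c l = 0) ∧
    ∀ l, l.length = m + 1 → IsFine ε l → coboundary c l = u l

lemma IsRelCoboundary.exists_alternating {u : List α → ℤ} [LinearOrder α]
    (h : IsRelCoboundary A ε m u) (hu : ∀ l, pairing u (simplexAlternation l) = u l) :
    ∃ c : List α → ℤ, (∀ l, l.length = m → IsFine ε l → (∀ x ∈ l, x ∈ A) → c l = 0) ∧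
      (∀ l, l.length = m + 1 → IsFine ε l → coboundary c l = u l) ∧
      ∀ l, ¬ l.Nodup → c l = 0 := by
  obtain ⟨c, hcA, hc⟩ := h
  refine ⟨fun l => pairing c (simplexAlternation l), fun l hlen hl hlA => ?_,
    fun l hlen hl => ?_, fun l hl => ?_⟩
  · refine pairing_eq_zero ?_ (simplexAlternation_mem_supported l)
    rintro l' ⟨hperm, -⟩
    exact hcA l' (hperm.length_eq.trans hlen) (hl.subset hperm.subset)
      fun x hx => hlA x (hperm.subset hx)
  · rw [coboundary_pairing_simplexAlternation, ← hu l]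
    refine pairing_congr ?_ (simplexAlternation_mem_supported l)
    rintro l' ⟨hperm, -⟩
    exact hc l' (hperm.length_eq.trans hlen) (hl.subset hperm.subset)
  · simp only [simplexAlternation_eq_zero hl, map_zero]

/-- If the reduction of `f` modulo `p` were the coboundary of `b`, subtracting a lift of the
coboundary of `b` from `f` and dividing by `p` would make `u` a relative coboundary. -/
lemma isDetected_zmod {k : ℕ} (p : ℕ) [hp : Fact p.Prime] {f u : List α → ℤ} (hε : 0 < ε)
    (hf : ∀ l, l.length = k + 2 → IsFine ε l → coboundary f l = p * u l)
    (hfA : ∀ l, l.length = k + 1 → IsFine ε l → (∀ x ∈ l, x ∈ thickening ε A) → f l = 0)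
    (hu : ∀ ρ > 0, ¬ IsRelCoboundary A ρ (k + 1) u) :
    IsDetected {A} k ε (fun l => (f l : ZMod p)) where
  coboundary_eq_zero l hlen hl := by
    have := coboundary_ringHom (Int.castRingHom (ZMod p)) f l
    simp only [eq_intCast] at this
    rw [this, hf l hlen hl]
    simp
  eq_zero l hlen hl := by
    rintro _ rfl hlA
    rw [hfA l hlen hl hlA, Int.cast_zero]
  exists_cycle ρ hρ := by
    by_contra! hno
    obtain ⟨b, hbA, hb⟩ := exists_coboundary_eq (fun l => (f l : ZMod p))
      (I := {l | l.length = k + 1 ∧ IsFine (min ρ ε) l}) fun z hz =>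
        hno z (supported_mono hz fun l hl => by exact ⟨hl.1, hl.2.mono (min_le_left ρ ε)⟩)
    let lift : List α → ℤ := fun l => (b l).val
    have hdvd : ∀ l, l.length = k + 1 → IsFine (min ρ ε) l →
        (p : ℤ) ∣ f l - coboundary lift l := by
      intro l hlen hl
      have hlift : ((coboundary lift l : ℤ) : ZMod p) = coboundary b l :=
        (coboundary_ringHom (Int.castRingHom (ZMod p)) lift l).symm.trans
          (coboundary_congr fun l' _ _ => by simp [lift])
      rw [← ZMod.intCast_zmod_eq_zero_iff_dvd, Int.cast_sub, hlift, hb l ⟨hlen, hl⟩, sub_self]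
    have hp0 : (p : ℤ) ≠ 0 := Int.natCast_ne_zero.2 hp.1.ne_zero
    refine hu (min ρ ε) (lt_min hρ hε) ⟨fun l => (f l - coboundary lift l) / p, ?_, ?_⟩
    · intro l hlen hl hlA
      have hlift : coboundary lift l = 0 := coboundary_eq_zero fun l' hsub _ => by
        simp [lift, hbA l' (Or.inr ⟨A, rfl, fun x hx => hlA x (hsub.subset hx)⟩)]
      beta_reduce
      rw [hlift, hfA l hlen (hl.mono (min_le_right _ _))
        (fun x hx => self_subset_thickening hε A (hlA x hx)), sub_zero, Int.zero_ediv]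
    · intro l hlen hl
      refine mul_left_cancel₀ hp0 ?_
      rw [← coboundary_const_mul, ← hf l hlen (hl.mono (min_le_right _ _)),
        ← sub_zero (coboundary f l), ← coboundary_coboundary lift l, ← coboundary_sub]
      exact coboundary_congr fun l' hsub hlen' =>
        Int.mul_ediv_cancel' (hdvd l' (by omega) (hl.subset hsub.subset))

/-- Precomposing a rational cochain with a finite net leaves finitely many values, which have a
common denominator `N`. -/
lemma exists_isRelCoboundary_of_rat [CompactSpace α] {L : Type*} [Finite L] {v : List L → ℤ}
    (lam : α → L) {ρ : ℝ} (hρ : 0 < ρ) {b : List α → ℚ}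
    (hbA : ∀ l, (∀ x ∈ l, x ∈ A) → b l = 0)
    (hb : ∀ l, l.length = m + 1 → IsFine ρ l → coboundary b l = v (l.map lam)) :
    ∃ N : ℕ, 0 < N ∧ IsRelCoboundary A (ρ / 3) m (fun l => N * v (l.map lam)) := by
  obtain ⟨ν, hν_finite, hν_dist, hν⟩ := exists_finite_range_dist_lt
    (fun x => (lam x, (x ∈ A : Prop))) (div_pos hρ three_pos)
  have hν_lam : lam ∘ ν = lam := funext fun x => congrArg Prod.fst (hν x)
  have hν_mem : ∀ x, (ν x ∈ A) = (x ∈ A) := fun x => congrArg Prod.snd (hν x)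
  have hfinite : {q | ∃ l : List α, l.length = m ∧ q = b (l.map ν)}.Finite := by
    have : Finite (range ν) := hν_finite
    refine ((List.finite_length_eq (range ν) m).image fun l => b (l.map (↑))).subset ?_
    rintro _ ⟨l, hlen, rfl⟩
    refine ⟨l.map (rangeFactorization ν), by simpa using hlen, ?_⟩
    simp only [List.map_map]
    rfl
  obtain ⟨N, hN, hN_int⟩ := exists_pos_forall_intCast_eq_mul hfinite
  refine ⟨N, hN, fun l => (N * b (l.map ν)).num, fun l _ _ hlA => ?_, fun l hlen hl => ?_⟩
  · beta_reduce
    rw [hbA _ (List.forall_mem_map.2 fun x hx => (hν_mem x).mpr (hlA x hx)), mul_zero,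
      Rat.num_zero]
  · have hfine : IsFine ρ (l.map ν) := by
      simp only [IsFine, List.forall_mem_map]
      intro x hx y hy
      linarith [hl x hx y hy, hν_dist x, hν_dist y, dist_triangle4 (ν x) x y (ν y),
        dist_comm y (ν y)]
    have hcast : ((coboundary (fun l => (N * b (l.map ν)).num) l : ℤ) : ℚ) =
        N * v (l.map lam) :=
      calc _ = coboundary (fun l => (((N * b (l.map ν)).num : ℤ) : ℚ)) l :=
            (coboundary_ringHom (Int.castRingHom ℚ) _ l).symm
        _ = coboundary (fun l => N * b (l.map ν)) l :=
            coboundary_congr fun l' _ hlen' => hN_int _ ⟨l', by omega, rfl⟩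
        _ = N * coboundary b (l.map ν) := by rw [coboundary_const_mul, coboundary_comp_map]
        _ = N * v (l.map lam) := by rw [hb _ (by simpa) hfine, List.map_map, hν_lam]
    exact_mod_cast hcast

lemma isDetected_rat [CompactSpace α] {L : Type*} [Finite L] {v : List L → ℤ} (lam : α → L)
    (hv : ∀ l, l.length = m + 2 → IsFine ε l → coboundary (fun l => v (l.map lam)) l = 0)
    (hvA : ∀ l, l.length = m + 1 → IsFine ε l → (∀ x ∈ l, x ∈ thickening ε A) →
      v (l.map lam) = 0)
    (h : ∀ ρ > 0, ∀ N : ℕ, 0 < N → ¬ IsRelCoboundary A ρ m (fun l => N * v (l.map lam))) :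
    IsDetected {A} m ε (fun l => (v (l.map lam) : ℚ)) where
  coboundary_eq_zero l hlen hl := by
    have := coboundary_ringHom (Int.castRingHom ℚ) (fun l => v (l.map lam)) l
    simp only [eq_intCast] at this
    rw [this, hv l hlen hl, Int.cast_zero]
  eq_zero l hlen hl := by
    rintro _ rfl hlA
    rw [hvA l hlen hl hlA, Int.cast_zero]
  exists_cycle ρ hρ := by
    by_contra! hno
    obtain ⟨b, hbA, hb⟩ := exists_coboundary_eq _ hno
    obtain ⟨N, hN, hrel⟩ := exists_isRelCoboundary_of_rat lam hρ
      (fun l hl => hbA l (Or.inr ⟨A, rfl, hl⟩)) (fun l hlen hl => hb l ⟨hlen, hl⟩)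
    exact h (ρ / 3) (by positivity) N hN hrel

lemma not_nodup_map_append_cons_cons {α β : Type*} (f : α → β) (l₁ : List α) (x : α)
    (l₂ : List α) : ¬ ((l₁ ++ x :: x :: l₂).map f).Nodup := by
  simp [List.nodup_append]

lemma exists_mul_le_widim_pi_of_minimal_isRelCoboundary [CompactSpace α] {k N : ℕ} {δ : ℝ}
    {A' : Set α} (lam : α → Fin (k + 2)) (hε : 0 < ε) (hδ : 0 < δ)
    (hthick : thickening δ A' ⊆ A) (hN : 1 < N)
    (hrel : IsRelCoboundary A ε (k + 1) (fun l => N * labelCocycle (k + 1) (l.map lam)))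
    (hmin : ∀ N' < N, 0 < N' → ∀ ρ > 0,
      ¬ IsRelCoboundary A' ρ (k + 1) (fun l => N' * labelCocycle (k + 1) (l.map lam))) :
    ∃ ρ > 0, ∀ n : ℕ, ((n * k : ℕ) : ℕ∞) ≤ widim ρ (fun x y : Fin n → α => dist x y) := by
  have hprime : N.minFac.Prime := Nat.minFac_prime hN.ne'
  have : Fact N.minFac.Prime := ⟨hprime⟩
  have hquot : N.minFac * (N / N.minFac) = N := Nat.mul_div_cancel' (Nat.minFac_dvd N)
  let _ : LinearOrder α := IsWellOrder.linearOrder WellOrderingRel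
  obtain ⟨f, hfA, hf, hf_nodup⟩ := hrel.exists_alternating fun l => by
    rw [pairing_const_mul, pairing_labelCocycle_simplexAlternation]
  have hdetected : IsDetected {A'} k (min ε δ) (fun l => (f l : ZMod N.minFac)) :=
    isDetected_zmod N.minFac (u := fun l => (N / N.minFac : ℕ) * labelCocycle (k + 1) (l.map lam))
      (lt_min hε hδ)
      (fun l hlen hl => by
        rw [hf l hlen (hl.mono (min_le_left _ _)), ← mul_assoc, ← Nat.cast_mul, hquot])
      (fun l hlen hl hlA => hfA l hlen (hl.mono (min_le_left _ _)) fun x hx =>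
        hthick (thickening_mono (min_le_right _ _) _ (hlA x hx)))
      (hmin (N / N.minFac) (Nat.div_lt_self hN.pos hprime.one_lt)
        (Nat.div_pos (Nat.minFac_le hN.pos) hprime.pos))
  refine ⟨min ε δ / 4, by positivity,
    hdetected.mul_le_widim_pi (fun l₁ x l₂ => ?_) (lt_min hε hδ)⟩
  rw [hf_nodup _ (by simpa using not_nodup_map_append_cons_cons id l₁ x l₂), Int.cast_zero]

lemma exists_mul_le_widim_pi_of_not_isRelCoboundary [CompactSpace α] {δ : ℝ} {A' : Set α}
    (lam : α → Fin (m + 1)) (hε : 0 < ε) (hδ : 0 < δ) (hthick : thickening δ A' ⊆ A)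
    (hmiss : ∀ l, IsFine ε l → (∀ x ∈ l, x ∈ A) → ∃ j, ∀ x ∈ l, lam x ≠ j)
    (h : ∀ ρ > 0, ∀ N : ℕ, 0 < N →
      ¬ IsRelCoboundary A' ρ m (fun l => N * labelCocycle m (l.map lam))) :
    ∃ ρ > 0, ∀ n : ℕ, ((n * m : ℕ) : ℕ∞) ≤ widim ρ (fun x y : Fin n → α => dist x y) := by
  have hdetected : IsDetected {A'} m (min ε δ) (fun l => (labelCocycle m (l.map lam) : ℚ)) := by
    refine isDetected_rat lam (fun l _ _ => coboundary_labelCocycle lam l)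
      (fun l hlen hl hlA => ?_) h
    obtain ⟨j, hj⟩ := hmiss l (hl.mono (min_le_left _ _)) fun x hx =>
      hthick (thickening_mono (min_le_right _ _) _ (hlA x hx))
    exact labelCocycle_eq_zero_of_notMem (by simpa) (j := j) fun hmem => by
      obtain ⟨x, hx, hxj⟩ := List.mem_map.1 hmem
      exact hj x hx hxj
  refine ⟨min ε δ / 4, by positivity,
    hdetected.mul_le_widim_pi (fun l₁ x l₂ => ?_) (lt_min hε hδ)⟩
  rw [labelCocycle_eq_zero (not_nodup_map_append_cons_cons lam l₁ x l₂), Int.cast_zero]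

/-- Either some multiple of the label cocycle is a relative coboundary, and reducing the cobounding
cochain of the least multiple modulo a prime detects in degree `k`, or the label cocycle itself
detects rationally, in degree `k + 1`. -/
lemma exists_forall_mul_le_widim_pi [CompactSpace α] {k : ℕ} (lam : α → Fin (k + 2))
    {A : ℝ → Set α} {τ : ℝ} (hτ : 0 < τ)
    (hA : ∀ η η', η < η' → ∃ ε > 0, thickening ε (A η) ⊆ A η')
    (hlam : ∀ η ∈ Ioo 0 τ, ∃ ε > 0, ∀ l, IsFine ε l → (∀ x ∈ l, x ∈ A η) →
      ∃ j, ∀ x ∈ l, lam x ≠ j)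
    (h : ∀ η ∈ Ioo 0 τ, ∀ ε > 0,
      ¬ IsRelCoboundary (A η) ε (k + 1) (fun l => labelCocycle (k + 1) (l.map lam))) :
    ∃ (k' : ℕ) (ε : ℝ), k ≤ k' ∧ 0 < ε ∧
      ∀ n : ℕ, ((n * k' : ℕ) : ℕ∞) ≤ widim ε (fun x y : Fin n → α => dist x y) := by
  classical
  let IsMultiple : ℕ → Prop := fun N => 0 < N ∧ ∃ η ∈ Ioo 0 τ, ∃ ε > 0,
    IsRelCoboundary (A η) ε (k + 1) (fun l => N * labelCocycle (k + 1) (l.map lam))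
  by_cases hex : ∃ N, IsMultiple N
  · obtain ⟨N, ⟨hN, η, hη, ε, hε, hrel⟩, hmin⟩ :
        ∃ N, IsMultiple N ∧ ∀ N' < N, ¬ IsMultiple N' :=
      ⟨Nat.find hex, Nat.find_spec hex, fun _ => Nat.find_min hex⟩
    have hN1 : N ≠ 1 := by
      rintro rfl
      exact h η hη ε hε (by simpa using hrel)
    obtain ⟨δ, hδ, hthick⟩ := hA (η / 2) η (half_lt_self hη.1)
    obtain ⟨ρ, hρ, hwidim⟩ := exists_mul_le_widim_pi_of_minimal_isRelCoboundary lam hε hδ hthick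
      (by omega) hrel fun N' hlt hpos ρ hρ hrel' =>
        hmin N' hlt ⟨hpos, η / 2, ⟨half_pos hη.1, (half_lt_self hη.1).trans hη.2⟩, ρ, hρ, hrel'⟩
    exact ⟨k, ρ, le_rfl, hρ, hwidim⟩
  · obtain ⟨ε, hε, hmiss⟩ := hlam (τ / 2) ⟨half_pos hτ, half_lt_self hτ⟩
    obtain ⟨δ, hδ, hthick⟩ := hA (τ / 4) (τ / 2) (by linarith)
    obtain ⟨ρ, hρ, hwidim⟩ := exists_mul_le_widim_pi_of_not_isRelCoboundary lam hε hδ hthick hmiss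
      fun ρ hρ N hN hrel => hex ⟨N, hN, τ / 4, ⟨by linarith, by linarith⟩, ρ, hρ, hrel⟩
    exact ⟨k + 1, ρ, Nat.le_succ k, hρ, hwidim⟩

end RelCoboundary

end Chain

section TopSets

variable {V : Type*} [Fintype V] [DecidableEq V]

/-- A weight which is positive exactly when `F` is a *top set* of `s`: the values of `s` on `F` are
positive and exceed all values of `s` outside `F`. If `s` is a partition of unity, the top sets at a
point are the flag of faces describing a simplex of the barycentric subdivision of its nerve. -/
def topWeight (s : V → ℝ) (F : Finset V) : ℝ :=
  (∏ v ∈ F, ∏ w ∈ Fᶜ, max (s v - s w) 0) * ∏ v ∈ F, max (s v) 0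

lemma topWeight_nonneg (s : V → ℝ) (F : Finset V) : 0 ≤ topWeight s F :=
  mul_nonneg
    (Finset.prod_nonneg fun _ _ => Finset.prod_nonneg fun _ _ => le_max_right _ _)
    (Finset.prod_nonneg fun _ _ => le_max_right _ _)

lemma topWeight_pos_iff {s : V → ℝ} {F : Finset V} :
    0 < topWeight s F ↔ (∀ v ∈ F, ∀ w ∉ F, s w < s v) ∧ ∀ v ∈ F, 0 < s v := by
  have max_ne_zero (a : ℝ) : max a 0 ≠ 0 ↔ 0 < a := by
    rw [Ne, max_eq_right_iff, not_le]
  rw [(topWeight_nonneg s F).lt_iff_ne', topWeight, mul_ne_zero_iff, Finset.prod_ne_zero_iff,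
    Finset.prod_ne_zero_iff]
  simp only [Finset.prod_ne_zero_iff, max_ne_zero, Finset.mem_compl, sub_pos]

lemma subset_of_topWeight_pos {s : V → ℝ} {F G : Finset V} (hF : 0 < topWeight s F)
    (hG : 0 < topWeight s G) (hcard : F.card ≤ G.card) : F ⊆ G := by
  rw [topWeight_pos_iff] at hF hG
  intro v hvF
  by_contra hvG
  obtain ⟨w, hwG, hwF⟩ : ∃ w ∈ G, w ∉ F := by
    by_contra! hGF
    exact hvG (Finset.eq_of_subset_of_card_le hGF hcard ▸ hvF)
  exact (hF.1 v hvF w hwF).asymm (hG.1 w hwG v hvG)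

lemma eq_of_topWeight_pos {s : V → ℝ} {F G : Finset V} (hF : 0 < topWeight s F)
    (hG : 0 < topWeight s G) (hcard : F.card = G.card) : F = G :=
  (subset_of_topWeight_pos hF hG hcard.le).antisymm (subset_of_topWeight_pos hG hF hcard.ge)

lemma exists_topWeight_pos {s : V → ℝ} (h : ∃ v, 0 < s v) :
    ∃ F : Finset V, F.Nonempty ∧ 0 < topWeight s F := by
  obtain ⟨v₀, hv₀⟩ := h
  obtain ⟨v, -, hmax⟩ := Finset.exists_max_image Finset.univ s ⟨v₀, Finset.mem_univ _⟩
  refine ⟨Finset.univ.filter (s · = s v), ⟨v, by simp⟩,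
    topWeight_pos_iff.2 ⟨fun u hu w hw => ?_, fun u hu => ?_⟩⟩
  · rw [(Finset.mem_filter.1 hu).2]
    exact (hmax w (Finset.mem_univ _)).lt_of_ne fun h => hw (by simp [h])
  · rw [(Finset.mem_filter.1 hu).2]
    exact hv₀.trans_le (hmax v₀ (Finset.mem_univ _))

lemma card_le_of_topWeight_pos {s : V → ℝ} {F : Finset V} (hF : 0 < topWeight s F) :
    F.card ≤ Finset.card {v | 0 < s v} :=
  Finset.card_le_card fun v hv => by simpa using (topWeight_pos_iff.1 hF).2 v hv

lemma continuous_topWeight {Y : Type*} [TopologicalSpace Y] {s : V → Y → ℝ}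
    (hs : ∀ v, Continuous (s v)) (F : Finset V) : Continuous fun x => topWeight (s · x) F :=
  (continuous_finsetProd _ fun v _ => continuous_finsetProd _ fun w _ =>
    ((hs v).sub (hs w)).max continuous_const).mul
    (continuous_finsetProd _ fun v _ => (hs v).max continuous_const)

open Classical in
/-- The total weight of the nonempty top sets of `s` which carry the label `i` under the labelling
`L`. -/
noncomputable def labelWeight {ι : Type*} (L : Finset V → ι) (s : V → ℝ) (i : ι) : ℝ :=
  ∑ F with F.Nonempty ∧ L F = i, topWeight s F

section LabelWeight

variable {ι : Type*} (L : Finset V → ι)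

lemma labelWeight_nonneg (s : V → ℝ) (i : ι) : 0 ≤ labelWeight L s i :=
  Finset.sum_nonneg fun F _ => topWeight_nonneg s F

lemma labelWeight_pos_iff {s : V → ℝ} {i : ι} :
    0 < labelWeight L s i ↔ ∃ F, (F.Nonempty ∧ L F = i) ∧ 0 < topWeight s F := by
  rw [labelWeight, Finset.sum_pos_iff_of_nonneg fun F _ => topWeight_nonneg s F]
  simp only [Finset.mem_filter, Finset.mem_univ, true_and]

lemma continuous_labelWeight {Y : Type*} [TopologicalSpace Y] {s : V → Y → ℝ}
    (hs : ∀ v, Continuous (s v)) (i : ι) : Continuous fun x => labelWeight L (s · x) i :=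
  continuous_finsetSum _ fun F _ => continuous_topWeight hs F

end LabelWeight

/-- The weight of the top set of `s` that spans a `j`-dimensional face. -/
noncomputable def dimWeight (s : V → ℝ) (j : ℕ) : ℝ := labelWeight Finset.card s (j + 1)

lemma dimWeight_nonneg (s : V → ℝ) (j : ℕ) : 0 ≤ dimWeight s j := labelWeight_nonneg _ s _

lemma dimWeight_pos_iff {s : V → ℝ} {j : ℕ} :
    0 < dimWeight s j ↔ ∃ F, F.card = j + 1 ∧ 0 < topWeight s F := by
  refine (labelWeight_pos_iff _).trans ⟨fun ⟨F, hF, hpos⟩ => ⟨F, hF.2, hpos⟩,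
    fun ⟨F, hF, hpos⟩ => ⟨F, ⟨Finset.card_pos.1 (by omega), hF⟩, hpos⟩⟩

lemma continuous_dimWeight {Y : Type*} [TopologicalSpace Y] {s : V → Y → ℝ}
    (hs : ∀ v, Continuous (s v)) (j : ℕ) : Continuous fun x => dimWeight (s · x) j :=
  continuous_labelWeight _ hs _

lemma exists_dimWeight_pos {s : V → ℝ} {m : ℕ} (h : ∃ v, 0 < s v)
    (hcard : Finset.card {v | 0 < s v} ≤ m + 1) : ∃ j : Fin (m + 1), 0 < dimWeight s j := by
  obtain ⟨F, hne, hF⟩ := exists_topWeight_pos h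
  have hle := card_le_of_topWeight_pos hF
  have hpos := hne.card_pos
  exact ⟨⟨F.card - 1, by omega⟩, dimWeight_pos_iff.2 ⟨F, by simp only; omega, hF⟩⟩

end TopSets

/-- A partition of unity (not normalised) subordinate to the cover `𝒰`, at most `m + 1` of whose
functions are positive at any given point. -/
structure IsSubordinate {V K : Type*} [Fintype V] [TopologicalSpace K] (𝒰 : Set (Set K)) (m : ℕ)
    (s : V → K → ℝ) : Prop where
  continuous : ∀ v, Continuous (s v)
  exists_pos : ∀ x, ∃ v, 0 < s v x
  exists_mem : ∀ v, ∃ U ∈ 𝒰, ∀ x, 0 < s v x → x ∈ U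
  card_le : ∀ x, Finset.card {v | 0 < s v x} ≤ m + 1

lemma le_ord {Y : Type*} {β : Set (Set Y)} {n : ℕ} (f : Fin (n + 1) → Set Y)
    (hf : f.Injective) (hfβ : ∀ i, f i ∈ β) (hne : (⋂ i, f i).Nonempty) : (n : ℕ∞) ≤ ord β :=
  le_iSup₂_of_le (f := fun (n : ℕ) (_ : n ∈ {n : ℕ | ∃ f : Fin (n + 1) → Set Y,
    f.Injective ∧ (∀ i, f i ∈ β) ∧ (⋂ i, f i).Nonempty}) => (n : ℕ∞)) n ⟨f, hf, hfβ, hne⟩ le_rfl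

lemma card_filter_mem_le_of_ord_le {Y : Type*} {β : Set (Set Y)} {m N : ℕ} (hβ : ord β ≤ m)
    {f : Fin N → Set Y} (hf : f.Injective) (hfβ : ∀ i, f i ∈ β) (x : Y) [DecidablePred (x ∈ f ·)] :
    Finset.card {i | x ∈ f i} ≤ m + 1 := by
  by_contra! hcard
  obtain ⟨W, hW, hWcard⟩ := Finset.exists_subset_card_eq hcard
  let e := W.equivFinOfCardEq hWcard
  have hord : ((m + 1 : ℕ) : ℕ∞) ≤ ord β :=
    le_ord (fun i => f (e.symm i)) (hf.comp (Subtype.val_injective.comp e.symm.injective))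
      (fun i => hfβ _)
      ⟨x, mem_iInter.2 fun i => (Finset.mem_filter.1 (hW (e.symm i).2)).2⟩
  exact absurd (hord.trans hβ) (by norm_cast; omega)

lemma exists_continuous_pos_iff_mem {K : Type*} [PseudoMetricSpace K] {U : Set K} (hU : IsOpen U) :
    ∃ s : K → ℝ, Continuous s ∧ ∀ x, 0 < s x ↔ x ∈ U := by
  rcases Uᶜ.eq_empty_or_nonempty with hne | hne
  · exact ⟨fun _ => 1, continuous_const, fun x => by simp [compl_empty_iff.1 hne]⟩
  · refine ⟨fun x => Metric.infDist x Uᶜ, Metric.continuous_infDist_pt _, fun x => ?_⟩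
    rw [← hU.isClosed_compl.notMem_iff_infDist_pos hne, notMem_compl_iff]

lemma exists_isSubordinate {K : Type*} [PseudoMetricSpace K] [CompactSpace K] {m : ℕ}
    (hm : topDim K ≤ m) {𝒰 : Set (Set K)} (h𝒰 : IsOpenCover 𝒰) :
    ∃ (N : ℕ) (s : Fin N → K → ℝ), IsSubordinate 𝒰 m s := by
  have hcovD : covD 𝒰 ≤ m :=
    (le_iSup₂ (f := fun (α : Set (Set K)) (_ : α ∈ {α | IsOpenCover α}) => covD α) 𝒰 h𝒰).trans hm
  obtain ⟨β, ⟨⟨hβo, hβc⟩, hβr⟩, hβ⟩ : ∃ β, (IsOpenCover β ∧ Refines β 𝒰) ∧ ord β ≤ m := by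
    have hlt : covD 𝒰 < ((m + 1 : ℕ) : ℕ∞) := hcovD.trans_lt (by exact_mod_cast m.lt_succ_self)
    simp only [covD, iInf_lt_iff] at hlt
    obtain ⟨β, h, hβ⟩ := hlt
    exact ⟨β, h, Order.le_of_lt_add_one (by exact_mod_cast hβ)⟩
  obtain ⟨T, hT, hTfin, hTc⟩ := isCompact_univ.elim_finite_subcover_image (b := β) (c := id) hβo
    (by rw [← hβc, sUnion_eq_biUnion]; rfl)
  obtain ⟨N, f, hf, rfl⟩ := hTfin.fin_param
  have hfβ (i : Fin N) : f i ∈ β := hT (mem_range_self i)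
  choose s hs hpos using fun i => exists_continuous_pos_iff_mem (hβo _ (hfβ i))
  refine ⟨N, s, hs, fun x => ?_, fun i => ?_, fun x => ?_⟩
  · obtain ⟨i, hi⟩ : ∃ i, x ∈ f i := by simpa using hTc (mem_univ x)
    exact ⟨i, (hpos i x).2 hi⟩
  · obtain ⟨U, hU, hsub⟩ := hβr _ (hfβ i)
    exact ⟨U, hU, fun x hx => hsub ((hpos i x).1 hx)⟩
  · classical
    simpa only [hpos] using card_filter_mem_le_of_ord_le hβ hf hfβ x

/-- The sets where a given top set and a given coordinate of `ℓ` are both positive refine `𝒰`, and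
at most `m + 1` of them meet at a point since some coordinate of `ℓ` vanishes there. -/
lemma covD_le_of_exists_eq_zero {K V : Type*} [TopologicalSpace K] [Fintype V] [DecidableEq V]
    {𝒰 : Set (Set K)} {m : ℕ} {s : V → K → ℝ} (hs : ∀ v, Continuous (s v))
    (hmem : ∀ v, ∃ U ∈ 𝒰, ∀ x, 0 < s v x → x ∈ U) {ℓ : K → Fin (m + 2) → ℝ} (hℓ : Continuous ℓ)
    (hpos : ∀ x, ∃ j, 0 < ℓ x j) (hzero : ∀ x, ∃ j, ℓ x j = 0)
    (hdim : ∀ x j, 0 < ℓ x j → 0 < dimWeight (s · x) j) : covD 𝒰 ≤ m := by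
  let W (j : Fin (m + 2)) (F : Finset V) : Set K := {x | 0 < topWeight (s · x) F ∧ 0 < ℓ x j}
  let β : Set (Set K) := {U | ∃ j : Fin (m + 2), ∃ F : Finset V, F.card = j + 1 ∧ U = W j F}
  have hβ : IsOpenCover β := by
    refine ⟨?_, eq_univ_of_forall fun x => ?_⟩
    · rintro U ⟨j, F, -, rfl⟩
      exact (isOpen_lt continuous_const (continuous_topWeight hs F)).inter
        (isOpen_lt continuous_const ((continuous_apply j).comp hℓ))
    · obtain ⟨j, hj⟩ := hpos x
      obtain ⟨F, hF, hFpos⟩ := dimWeight_pos_iff.1 (hdim x j hj)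
      exact ⟨W j F, ⟨j, F, hF, rfl⟩, hFpos, hj⟩
  have hrefines : Refines β 𝒰 := by
    rintro U ⟨j, F, hF, rfl⟩
    obtain ⟨v, hv⟩ : F.Nonempty := Finset.card_pos.1 (by omega)
    obtain ⟨U, hU, hsub⟩ := hmem v
    exact ⟨U, hU, fun x hx => hsub x ((topWeight_pos_iff.1 hx.1).2 v hv)⟩
  refine (iInf₂_le β ⟨hβ, hrefines⟩).trans (iSup₂_le ?_)
  rintro n ⟨f, hf, hfβ, x, hx⟩
  choose j F hF hfW using hfβ
  have hxW (i : Fin (n + 1)) : x ∈ W (j i) (F i) := hfW i ▸ mem_iInter.1 hx i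
  have hj : j.Injective := by
    intro a b hab
    have hFab : F a = F b := eq_of_topWeight_pos (hxW a).1 (hxW b).1 (by rw [hF, hF, hab])
    exact hf (by rw [hfW, hfW, hab, hFab])
  obtain ⟨j₀, hj₀⟩ := hzero x
  have hcard : n + 1 < m + 2 := by
    simpa using Fintype.card_lt_of_injective_of_notMem j hj (b := j₀) (by
      rintro ⟨i, rfl⟩
      exact (hxW i).2.ne' hj₀)
  exact_mod_cast (by omega : n ≤ m)

section NormedExtension

variable {K E : Type*} [TopologicalSpace K] [NormalSpace K] [NormedAddCommGroup E]
  [NormedSpace ℝ E]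

/-- `f` coincides on `C` with a nowhere vanishing continuous function. -/
def HasNonvanishingExtension (C : Set K) (f : K → E) : Prop :=
  ∃ g : K → E, Continuous g ∧ (∀ x, g x ≠ 0) ∧ EqOn g f C

/-- The homotopy is switched off by a Urysohn function on the compact projection of its zeros. -/
lemma HasNonvanishingExtension.of_segment {C : Set K} (hC : IsClosed C) {f₀ f₁ : K → E}
    (hf₀ : Continuous f₀) (h : HasNonvanishingExtension C f₁)
    (hne : ∀ x ∈ C, (0 : E) ∉ segment ℝ (f₀ x) (f₁ x)) : HasNonvanishingExtension C f₀ := by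
  obtain ⟨g, hg, hg0, hgC⟩ := h
  let B : Set K := Prod.fst ''
    {p : K × Icc (0 : ℝ) 1 | AffineMap.lineMap (f₀ p.1) (g p.1) p.2.1 = (0 : E)}
  have hB : IsClosed B := isClosedMap_fst_of_compactSpace _ <| isClosed_eq
    (by simp only [AffineMap.lineMap_apply_module]; fun_prop) continuous_const
  have hCB : Disjoint C B := by
    rw [Set.disjoint_left]
    rintro x hx ⟨⟨y, s⟩, hs, rfl⟩
    rw [Set.mem_ofPred_eq, hgC hx] at hs
    exact hne y hx (segment_eq_image_lineMap ℝ (f₀ y) (f₁ y) ▸ ⟨s, s.2, hs⟩)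
  obtain ⟨u, hu0, hu1, hu⟩ := exists_continuous_zero_one_of_isClosed hC hB hCB
  refine ⟨fun x => AffineMap.lineMap (f₀ x) (g x) (u x), ?_, fun x hx => ?_, fun x hx => ?_⟩
  · simp only [AffineMap.lineMap_apply_module]
    fun_prop
  · have hux : u x = 1 := hu1 ⟨(x, ⟨u x, hu x⟩), hx, rfl⟩
    exact hg0 x (by simpa [hux] using hx)
  · simp [hu0 hx]

lemma exists_mem_ray_notMem_segment [CompactSpace K] {N R : Set K} (hN : IsClosed N)
    (hR : IsClosed R) (hNR : Disjoint N R) {f g : K → E} (hf : Continuous f) (hg : Continuous g)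
    {w : E} (hw : w ≠ 0) :
    ∃ τ : K → ℝ, Continuous τ ∧ (∀ x, 0 ≤ τ x) ∧ (∀ x ∈ R, τ x = 0) ∧
      ∀ x ∈ N, τ x • w ∉ segment ℝ (f x) (g x) := by
  obtain ⟨b, hb⟩ := (isCompact_univ (X := K)).exists_bound_of_continuousOn hf.continuousOn
  obtain ⟨b', hb'⟩ := (isCompact_univ (X := K)).exists_bound_of_continuousOn hg.continuousOn
  obtain ⟨u, hu0, hu1, hu⟩ := exists_continuous_zero_one_of_isClosed hR hN hNR.symm
  obtain ⟨T, hT0, hT⟩ : ∃ T : ℝ, 0 ≤ T ∧ max b b' < T * ‖w‖ := by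
    refine ⟨(|max b b'| + 1) / ‖w‖, by positivity, ?_⟩
    rw [div_mul_cancel₀ _ (norm_ne_zero_iff.2 hw)]
    exact (le_abs_self _).trans_lt (lt_add_one _)
  refine ⟨fun x => T * u x, by fun_prop, fun x => mul_nonneg hT0 (hu x).1,
    fun x hx => by simp [hu0 hx], fun x hx hmem => ?_⟩
  have hball : segment ℝ (f x) (g x) ⊆ Metric.closedBall 0 (max b b') :=
    (convex_closedBall _ _).segment_subset
      (mem_closedBall_zero_iff.2 ((hb x (mem_univ x)).trans (le_max_left _ _)))
      (mem_closedBall_zero_iff.2 ((hb' x (mem_univ x)).trans (le_max_right _ _)))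
  have hnorm : ‖(T * u x) • w‖ = T * ‖w‖ := by
    simp [hu1 hx, norm_smul, abs_of_nonneg hT0]
  exact hT.not_ge (hnorm ▸ mem_closedBall_zero_iff.1 (hball hmem))

/-- Push both maps in the direction `-w`, far enough over `N` for the segment between them to miss
the origin, and not at all where `f` takes values in `R`. -/
lemma HasNonvanishingExtension.of_ray [CompactSpace K] {C N : Set K} (hC : IsClosed C)
    (hN : IsClosed N) {R : Set E} (hR : IsClosed R) {w : E} (hw : w ≠ 0)
    (hwR : ∀ r : ℝ, 0 ≤ r → r • w ∈ R) {f g : K → E} (hf : Continuous f) (hg : Continuous g)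
    (hf0 : ∀ x ∈ C, f x ≠ 0) (hg0 : ∀ x, g x ≠ 0) (hfN : ∀ x ∈ C ∩ N, f x ∉ R)
    (hgN : ∀ x ∈ C ∩ N, g x ∉ R)
    (hseg : ∀ x ∈ C \ N, ∀ p ∈ segment ℝ (f x) (g x), p ∈ R → p ≠ 0 ∧ f x ∈ R) :
    HasNonvanishingExtension C f := by
  obtain ⟨τ, hτ, hτ0, hτR, hτN⟩ := exists_mem_ray_notMem_segment (hC.inter hN)
    (hC.inter (hR.preimage hf)) (disjoint_left.2 fun x hxN hx => hfN x hxN hx.2) hf hg hw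
  let e : K → E := fun x => τ x • w
  have he : Continuous e := by fun_prop
  have heR (x : K) {s : ℝ} (hs : 0 ≤ s) : s • e x ∈ R := by
    rw [smul_smul]
    exact hwR _ (mul_nonneg hs (hτ0 x))
  have he0 {x : K} (hx : x ∈ C) (hfx : f x ∈ R) : e x = 0 := by
    simp [e, hτR x ⟨hx, hfx⟩]
  have hgext : HasNonvanishingExtension C (fun x => g x - e x) := by
    refine .of_segment hC (hg.sub he) ⟨g, hg, hg0, fun x _ => rfl⟩ ?_
    rintro x hx ⟨s, s', hs, -, hss, hzero⟩
    have hgx : g x = s • e x := by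
      rw [← sub_eq_zero, ← hzero, eq_sub_of_add_eq' hss]
      module
    have hgR : g x ∈ R := hgx ▸ heR x hs
    have hxN : x ∉ N := fun hxN => hgN x ⟨hx, hxN⟩ hgR
    have hfR := (hseg x ⟨hx, hxN⟩ (g x) (right_mem_segment ℝ _ _) hgR).2
    exact hg0 x (by rw [hgx, he0 hx hfR, smul_zero])
  have hfext : HasNonvanishingExtension C (fun x => f x - e x) := by
    refine .of_segment hC (hf.sub he) hgext ?_
    rintro x hx ⟨s, s', hs, hs', hss, hzero⟩
    have hmem : e x ∈ segment ℝ (f x) (g x) := by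
      refine ⟨s, s', hs, hs', hss, ?_⟩
      rw [← sub_eq_zero, ← hzero, eq_sub_of_add_eq' hss]
      module
    have hxN : x ∉ N := fun hxN => hτN x ⟨hx, hxN⟩ hmem
    have hmemR := hseg x ⟨hx, hxN⟩ _ hmem (by simpa using heR x zero_le_one)
    exact hmemR.1 (he0 hx hmemR.2)
  refine .of_segment hC hf hfext ?_
  rintro x hx ⟨s, s', -, hs', hss, hzero⟩
  have hfx : f x = s' • e x := by
    rw [← sub_eq_zero, ← hzero, eq_sub_of_add_eq hss]
    module
  exact hf0 x hx (by rw [hfx, he0 hx (hfx ▸ heR x hs'), smul_zero])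

end NormedExtension

/-- Third differences of a sequence of length `M + 3`; the kernel consists of the sequences
`i ↦ q i` with `q` a real polynomial of degree at most two. -/
def thirdDiff (M : ℕ) : (Fin (M + 3) → ℝ) →ₗ[ℝ] (Fin M → ℝ) where
  toFun t i := t ⟨i + 3, by omega⟩ - 3 * t ⟨i + 2, by omega⟩ + 3 * t ⟨i + 1, by omega⟩
    - t ⟨i, by omega⟩
  map_add' s t := by
    ext
    simp only [Pi.add_apply]
    ring
  map_smul' r t := by
    ext
    simp only [Pi.smul_apply, smul_eq_mul, RingHom.id_apply]
    ring

lemma exists_quadratic_of_thirdDiff_eq_zero {M : ℕ} {t : Fin (M + 3) → ℝ}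
    (h : thirdDiff M t = 0) : ∃ a b c : ℝ, ∀ i : Fin (M + 3), t i = a + b * i + c * i ^ 2 := by
  let c := (t ⟨2, by omega⟩ - 2 * t ⟨1, by omega⟩ + t ⟨0, by omega⟩) / 2
  refine ⟨t ⟨0, by omega⟩, t ⟨1, by omega⟩ - t ⟨0, by omega⟩ - c, c, ?_⟩
  rintro ⟨i, hi⟩
  induction i using Nat.strong_induction_on with
  | _ i ih =>
    match i, hi, ih with
    | 0, _, _ => simp
    | 1, _, _ =>
      simp only [Nat.cast_one]
      ring
    | 2, _, _ =>
      simp only [c, Nat.cast_ofNat]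
      ring
    | i + 3, hi, ih =>
      have hdiff : t ⟨i + 3, hi⟩ - 3 * t ⟨i + 2, by omega⟩ + 3 * t ⟨i + 1, by omega⟩
        - t ⟨i, by omega⟩ = 0 := congrFun h ⟨i, by omega⟩
      rw [ih i (by omega) (by omega), ih (i + 1) (by omega) (by omega),
        ih (i + 2) (by omega) (by omega)] at hdiff
      push_cast at hdiff ⊢
      linear_combination hdiff

/-- A nonzero sequence of nonnegative values of a polynomial of degree at most two. These
sequences form the cone over a polygon with `M + 3` edges: the facet `t j = 0` of the orthant
meets it in the edge whose ends are the sequences vanishing at `j - 1` and at `j + 1`. -/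
structure IsNonnegQuadratic {M : ℕ} (t : Fin (M + 3) → ℝ) : Prop where
  nonneg : ∀ i, 0 ≤ t i
  exists_ne_zero : ∃ i, t i ≠ 0
  thirdDiff_eq_zero : thirdDiff M t = 0

namespace IsNonnegQuadratic

variable {M : ℕ} {t : Fin (M + 3) → ℝ} {i j : Fin (M + 3)}

lemma exists_eq_mul (h : IsNonnegQuadratic t) (hij : i ≠ j) (hi : t i = 0) (hj : t j = 0) :
    ∃ c ≠ 0, ∀ k : Fin (M + 3), t k = c * (((k : ℝ) - i) * ((k : ℝ) - j)) := by
  obtain ⟨a, b, c, hq⟩ := exists_quadratic_of_thirdDiff_eq_zero h.thirdDiff_eq_zero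
  rw [hq] at hi hj
  have hne : (i : ℝ) - j ≠ 0 := sub_ne_zero.2 fun hcast => hij (Fin.ext (by exact_mod_cast hcast))
  have hb : b + c * (i + j) = 0 := mul_left_cancel₀ hne (by linear_combination hi - hj)
  have ht (k : Fin (M + 3)) : t k = c * (((k : ℝ) - i) * ((k : ℝ) - j)) := by
    rw [hq]
    linear_combination hi + ((k : ℝ) - i) * hb
  obtain ⟨l, hl⟩ := h.exists_ne_zero
  exact ⟨c, fun hc => hl (by rw [ht, hc, zero_mul]), ht⟩

lemma eq_or_eq (h : IsNonnegQuadratic t) (hij : i ≠ j) (hi : t i = 0) (hj : t j = 0)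
    {k : Fin (M + 3)} (hk : t k = 0) : k = i ∨ k = j := by
  obtain ⟨c, hc, ht⟩ := h.exists_eq_mul hij hi hj
  have hcast {l : Fin (M + 3)} (hkl : (k : ℝ) - l = 0) : k = l :=
    Fin.ext (by exact_mod_cast sub_eq_zero.1 hkl)
  rw [ht, mul_eq_zero_iff_left hc, mul_eq_zero] at hk
  exact hk.imp hcast hcast

/-- The leading coefficient cannot be negative if some index lies outside the interval between the
two zeros, nor positive if some index lies strictly inside. -/
lemma cyclically_adjacent_of_lt (h : IsNonnegQuadratic t) (hij : i < j) (hi : t i = 0)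
    (hj : t j = 0) : j = i + 1 ∨ i = j + 1 := by
  obtain ⟨c, hc, ht⟩ := h.exists_eq_mul hij.ne hi hj
  have hij' : (i : ℝ) < j := by exact_mod_cast hij
  by_contra! hnot
  have hinside : (i : ℕ) + 1 < j := by
    refine lt_of_le_of_ne hij fun hval => hnot.1 (Fin.ext ?_)
    rw [Fin.val_add_one_of_lt' (by omega), hval]
  have hneg : c < 0 := by
    have hpos := h.nonneg ⟨i + 1, by omega⟩
    have hinside' : (i : ℝ) + 1 < j := by exact_mod_cast hinside
    rw [ht] at hpos
    push_cast at hpos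
    exact lt_of_le_of_ne (by nlinarith) hc
  have hnonpos {k : Fin (M + 3)} (hk : 0 < ((k : ℝ) - i) * ((k : ℝ) - j)) : False := by
    have hpos := h.nonneg k
    rw [ht] at hpos
    exact (mul_neg_of_neg_of_pos hneg hk).not_ge hpos
  rcases eq_or_ne i 0 with rfl | hi0
  · have hlast : (j : ℝ) < Fin.last (M + 2) := by
      refine Nat.cast_lt.2 (lt_of_le_of_ne (Fin.le_last j) fun hval => hnot.2 ?_)
      rw [Fin.ext hval, Fin.last_add_one]
    exact hnonpos (mul_pos (by linarith) (sub_pos.2 hlast))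
  · have hpos : (0 : ℝ) < i := Nat.cast_pos.2 (Fin.pos_iff_ne_zero.2 hi0)
    exact hnonpos (k := 0) (by simpa using mul_pos hpos (hpos.trans hij'))

lemma cyclically_adjacent (h : IsNonnegQuadratic t) (hij : i ≠ j) (hi : t i = 0)
    (hj : t j = 0) : j = i + 1 ∨ i = j + 1 :=
  hij.lt_or_gt.elim (fun hlt => h.cyclically_adjacent_of_lt hlt hi hj)
    fun hlt => (h.cyclically_adjacent_of_lt hlt hj hi).symm

end IsNonnegQuadratic

/-- The affine coordinate, running from `0` to `1`, on the `j`-th edge of the polygon of nonnegative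
quadratic sequences. -/
noncomputable def edgeCoord {M : ℕ} (t : Fin (M + 3) → ℝ) (j : Fin (M + 3)) : ℝ :=
  t (j - 1) / (t (j - 1) + t (j + 1))

/-- The weight of the vertex at which both `t j` and `t (j + 1)` vanish, in the rational
interpolation of functions on the vertices of a polygon. -/
def vertexWeight {M : ℕ} (t : Fin (M + 3) → ℝ) (j : Fin (M + 3)) : ℝ :=
  ∏ i ∈ {j, j + 1}ᶜ, t i

lemma continuous_vertexWeight {M : ℕ} (j : Fin (M + 3)) :
    Continuous fun t : Fin (M + 3) → ℝ => vertexWeight t j :=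
  continuous_finsetProd _ fun i _ => continuous_apply i

lemma add_one_ne_sub_one {M : ℕ} (j : Fin (M + 3)) : j + 1 ≠ j - 1 := by
  rw [Ne, ← sub_eq_zero, add_sub_sub_cancel]
  simp [Fin.ext_iff, Fin.val_add, Nat.mod_eq_of_lt (show 2 < M + 3 by omega)]

namespace IsNonnegQuadratic

variable {M : ℕ} {t : Fin (M + 3) → ℝ} {i j : Fin (M + 3)}

lemma edgeDenom_pos (h : IsNonnegQuadratic t) (hj : t j = 0) : 0 < t (j - 1) + t (j + 1) := by
  refine (add_nonneg (h.nonneg _) (h.nonneg _)).lt_of_ne fun hzero => ?_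
  obtain ⟨hprev, hnext⟩ := (add_eq_zero_iff_of_nonneg (h.nonneg _) (h.nonneg _)).1 hzero.symm
  rcases h.eq_or_eq (by simp) hprev hj hnext with heq | heq
  · exact add_one_ne_sub_one j heq
  · simp at heq

lemma edgeCoord_eq_zero_or_one (h : IsNonnegQuadratic t) (hij : i ≠ j) (hi : t i = 0)
    (hj : t j = 0) : edgeCoord t j = 0 ∨ edgeCoord t j = 1 := by
  rcases h.cyclically_adjacent hij hi hj with rfl | rfl
  · simp [edgeCoord, hi]
  · have hpos := h.edgeDenom_pos hj
    rw [hi, add_zero] at hpos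
    exact .inr (by rw [edgeCoord, hi, add_zero, div_self hpos.ne'])

lemma exists_vertexWeight_eq (h : IsNonnegQuadratic t) (hj : t j = 0) :
    ∃ p > 0, vertexWeight t (j - 1) = t (j + 1) * p ∧ vertexWeight t j = t (j - 1) * p := by
  have hends := add_one_ne_sub_one j
  refine ⟨∏ i ∈ {j - 1, j, j + 1}ᶜ, t i, Finset.prod_pos fun i hi => ?_, ?_, ?_⟩
  · simp only [Finset.mem_compl, Finset.mem_insert, Finset.mem_singleton, not_or] at hi
    refine (h.nonneg i).lt_of_ne fun hzero => ?_
    rcases h.cyclically_adjacent hi.2.1 hzero.symm hj with hadj | hadj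
    · exact hi.1 (eq_sub_of_add_eq hadj.symm)
    · exact hi.2.2 hadj
  · rw [vertexWeight, sub_add_cancel, ← Finset.mul_prod_erase _ _ (a := j + 1) (by simp [hends])]
    congr 2
    ext
    simp only [Finset.mem_erase, Finset.mem_compl, Finset.mem_insert, Finset.mem_singleton]
    tauto
  · rw [vertexWeight, ← Finset.mul_prod_erase _ _ (a := j - 1) (by simp [hends.symm])]
    congr 2
    ext
    simp only [Finset.mem_erase, Finset.mem_compl, Finset.mem_insert, Finset.mem_singleton]
    tauto

lemma sum_vertexWeight_pos (h : IsNonnegQuadratic t) : 0 < ∑ j, vertexWeight t j := by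
  have hnonneg (j) : 0 ≤ vertexWeight t j := Finset.prod_nonneg fun i _ => h.nonneg i
  suffices hex : ∃ j, vertexWeight t j ≠ 0 by
    obtain ⟨j, hj⟩ := hex
    exact Finset.sum_pos' (fun i _ => hnonneg i)
      ⟨j, Finset.mem_univ j, (hnonneg j).lt_of_ne' hj⟩
  by_cases hzero : ∃ j, t j = 0
  · obtain ⟨j, hj⟩ := hzero
    obtain ⟨p, hp, hprev, hcur⟩ := h.exists_vertexWeight_eq hj
    by_contra! hall
    have hsum := mul_pos (h.edgeDenom_pos hj) hp
    rw [add_mul, ← hprev, ← hcur, hall, hall] at hsum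
    simp at hsum
  · push Not at hzero
    exact ⟨0, Finset.prod_ne_zero_iff.2 fun i _ => hzero i⟩

end IsNonnegQuadratic

/-- Rational interpolation over the polygon of nonnegative quadratic sequences of the values `S j`
at the vertices; it is affine on each edge. -/
noncomputable def polygonInterp {M : ℕ} (S t : Fin (M + 3) → ℝ) : ℝ :=
  Finset.univ.centerMass (vertexWeight t) S

lemma IsNonnegQuadratic.polygonInterp_eq {M : ℕ} {t : Fin (M + 3) → ℝ}
    (h : IsNonnegQuadratic t) {j : Fin (M + 3)} (hj : t j = 0) (S : Fin (M + 3) → ℝ) :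
    polygonInterp S t = S (j - 1) + (S j - S (j - 1)) * edgeCoord t j := by
  obtain ⟨p, hp, hprev, hcur⟩ := h.exists_vertexWeight_eq hj
  have hpos := h.edgeDenom_pos hj
  have hpair : polygonInterp S t = ({j - 1, j} : Finset _).centerMass (vertexWeight t) S := by
    refine (Finset.centerMass_subset S (Finset.subset_univ _) fun i _ hi => ?_).symm
    simp only [Finset.mem_insert, Finset.mem_singleton, not_or] at hi
    refine Finset.prod_eq_zero (i := j) ?_ hj
    simpa [Ne.symm hi.2] using fun heq => hi.1 (eq_sub_of_add_eq heq.symm)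
  have hne : j - 1 ≠ j := by simp
  rw [hpair, Finset.centerMass, Finset.sum_pair hne, Finset.sum_pair hne, hprev, hcur, edgeCoord]
  simp only [smul_eq_mul]
  have hpos' : 0 < t (j + 1) + t (j - 1) := by linarith
  field_simp
  ring

lemma IsNonnegQuadratic.continuousAt_polygonInterp {M : ℕ} {t : Fin (M + 3) → ℝ}
    (h : IsNonnegQuadratic t) (S : Fin (M + 3) → ℝ) : ContinuousAt (polygonInterp S) t := by
  have hweight (j : Fin (M + 3)) := (continuous_vertexWeight j).continuousAt (x := t)
  exact .smul (.inv₀ (tendsto_finsetSum _ fun j _ => hweight j) h.sum_vertexWeight_pos.ne')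
    (tendsto_finsetSum _ fun j _ => (hweight j).smul continuousAt_const)

/-- The point of the unit circle at `r` full turns from `1`. -/
noncomputable def turn (r : ℝ) : ℂ := Complex.exp ((2 * Real.pi * r : ℝ) * Complex.I)

lemma norm_turn (r : ℝ) : ‖turn r‖ = 1 := Complex.norm_exp_ofReal_mul_I _

lemma continuous_turn : Continuous turn := by
  unfold turn
  fun_prop

lemma turn_int_add (n : ℤ) (r : ℝ) : turn (n + r) = turn r := by
  rw [turn, turn, Complex.exp_eq_exp_iff_exists_int]
  exact ⟨n, by push_cast; ring⟩

lemma turn_int (n : ℤ) : turn n = 1 := by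
  simpa [turn] using turn_int_add n 0

lemma IsNonnegQuadratic.turn_polygonInterp {M : ℕ} {t : Fin (M + 3) → ℝ}
    (h : IsNonnegQuadratic t) {j : Fin (M + 3)} (hj : t j = 0) {S : Fin (M + 3) → ℤ} {b : ℤ}
    (hS : (∀ i ≠ j, t i ≠ 0) → S j = S (j - 1) + b) :
    turn (polygonInterp (fun i => S i) t) = turn (b * edgeCoord t j) := by
  rw [h.polygonInterp_eq hj, turn_int_add]
  by_cases hj' : ∀ i ≠ j, t i ≠ 0
  · simp [hS hj']
  · push Not at hj'
    obtain ⟨i, hij, hi⟩ := hj'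
    rcases h.edgeCoord_eq_zero_or_one hij hi hj with he | he
    · simp [he]
    · rw [he, mul_one, mul_one, ← Int.cast_sub, turn_int, turn_int]

section Winding

open scoped Topology

variable {M : ℕ}

open Classical in
/-- Integer values at the vertices of a polygon whose increments along the edges which contain the
point `t` are prescribed by `b`. -/
noncomputable def edgePotential (t : Fin (M + 3) → ℝ) (b : Fin (M + 3) → ℤ) : Fin (M + 3) → ℤ :=
  if h : ∃ j, t j = 0 then Pi.single h.choose (b h.choose) else fun j => ∑ i ∈ Finset.Iic j, b i

lemma edgePotential_eq_sum {t : Fin (M + 3) → ℝ} (ht : ∀ j, t j ≠ 0) (b : Fin (M + 3) → ℤ) :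
    edgePotential t b = fun j => ∑ i ∈ Finset.Iic j, b i :=
  dif_neg (by simpa using ht)

lemma sum_Iic_eq_sum_Iic_sub_one_add {n : ℕ} {b : Fin (n + 1) → ℤ} (hb : ∑ i, b i = 0)
    (j : Fin (n + 1)) : ∑ i ∈ Finset.Iic j, b i = ∑ i ∈ Finset.Iic (j - 1), b i + b j := by
  induction j using Fin.cases with
  | zero =>
    have hlast : (0 - 1 : Fin (n + 1)) = Fin.last n := by
      rw [sub_eq_iff_eq_add, Fin.last_add_one]
    rw [hlast, ← Fin.top_eq_last, Finset.Iic_top, hb, zero_add, ← bot_eq_zero (α := Fin (n + 1)),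
      Finset.Iic_bot, Finset.sum_singleton]
  | succ k =>
    have hsub : k.succ - 1 = k.castSucc := by
      rw [sub_eq_iff_eq_add, Fin.coeSucc_eq_succ]
    have hIic : Finset.Iic k.succ = insert k.succ (Finset.Iic k.castSucc) := by
      ext i
      simp only [Finset.mem_Iic, Finset.mem_insert, Fin.le_def, Fin.ext_iff, Fin.val_succ,
        Fin.val_castSucc]
      omega
    rw [hsub, hIic, Finset.sum_insert (by simp [Fin.le_def]), add_comm]

lemma edgePotential_increment {t : Fin (M + 3) → ℝ} {b : Fin (M + 3) → ℤ}
    (hb : (∀ i, t i ≠ 0) → ∑ i, b i = 0) {j : Fin (M + 3)} (hj : ∀ i ≠ j, t i ≠ 0) :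
    edgePotential t b j = edgePotential t b (j - 1) + b j := by
  by_cases h : ∃ i, t i = 0
  · have hchoose : h.choose = j := not_imp_not.1 (hj h.choose) h.choose_spec
    rw [edgePotential, dif_pos h, hchoose]
    simp
  · push Not at h
    rw [edgePotential_eq_sum h]
    exact sum_Iic_eq_sum_Iic_sub_one_add (hb h) j

lemma finite_range_edgePotential {K : Type*} {t : K → Fin (M + 3) → ℝ} {a : K → Fin (M + 3) → ℤ}
    (ha : (range a).Finite) : (range fun x => edgePotential (t x) (a x)).Finite := by
  let single (j : Fin (M + 3)) (b : Fin (M + 3) → ℤ) : Fin (M + 3) → ℤ := Pi.single j (b j)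
  let partialSums (b : Fin (M + 3) → ℤ) (j : Fin (M + 3)) := ∑ i ∈ Finset.Iic j, b i
  refine ((Set.finite_univ.image2 single ha).union (ha.image partialSums)).subset ?_
  rintro _ ⟨x, rfl⟩
  by_cases h : ∃ j, t x j = 0
  · exact .inl ⟨h.choose, mem_univ _, a x, mem_range_self x,
      by simp only [single, edgePotential, dif_pos h]⟩
  · exact .inr ⟨a x, mem_range_self x, by simp only [partialSums, edgePotential, dif_neg h]⟩

variable {K : Type*} [TopologicalSpace K] {t : K → Fin (M + 3) → ℝ} {a : K → Fin (M + 3) → ℤ}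

lemma turn_polygonInterp_eq_of_mem_closure (ht : Continuous t) {x : K}
    (hx : IsNonnegQuadratic (t x))
    (hloc : ∀ j, (∀ i ≠ j, t x i ≠ 0) → ∀ᶠ y in 𝓝 x, a y j = a x j)
    (hsum : ∀ x, (∀ j, t x j ≠ 0) → ∑ j, a x j = 0) {v : Fin (M + 3) → ℤ}
    (hv : x ∈ closure {y | edgePotential (t y) (a y) = v}) :
    turn (polygonInterp (fun i => v i) (t x)) =
      turn (polygonInterp (fun i => edgePotential (t x) (a x) i) (t x)) := by
  have hne (i : Fin (M + 3)) (hi : t x i ≠ 0) : ∀ᶠ y in 𝓝 x, t y i ≠ 0 :=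
    ((continuous_apply i).comp ht).continuousAt.eventually_ne hi
  rw [mem_closure_iff_frequently] at hv
  by_cases h : ∃ j, t x j = 0
  · obtain ⟨j, hj⟩ := h
    rw [hx.turn_polygonInterp hj (edgePotential_increment (hsum x))]
    refine hx.turn_polygonInterp hj fun hj' => ?_
    have hyne : ∀ᶠ y in 𝓝 x, ∀ i, i ≠ j → t y i ≠ 0 :=
      eventually_all.2 fun i => eventually_all.2 fun hi => hne i (hj' i hi)
    obtain ⟨y, rfl, hyne, hya⟩ := (hv.and_eventually (hyne.and (hloc j hj'))).exists
    rw [← hya]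
    exact edgePotential_increment (hsum y) hyne
  · push Not at h
    have hya : ∀ᶠ y in 𝓝 x, ∀ j, a y j = a x j :=
      eventually_all.2 fun j => hloc j fun i _ => h i
    obtain ⟨y, rfl, hyne, hya⟩ :=
      (hv.and_eventually ((eventually_all.2 fun i => hne i (h i)).and hya)).exists
    rw [edgePotential_eq_sum h, edgePotential_eq_sum hyne, funext hya]

/-- A circle-valued map on the polygon which winds `a x j` times along the `j`-th edge extends over
the interior, because the total winding number is zero. -/
lemma exists_continuous_winding [NormalSpace K] (ht : Continuous t) (ht0 : ∀ x i, 0 ≤ t x i)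
    (htne : ∀ x, ∃ i, t x i ≠ 0) (ha : (range a).Finite)
    (hloc : ∀ x j, (∀ i ≠ j, t x i ≠ 0) → ∀ᶠ y in 𝓝 x, a y j = a x j)
    (hsum : ∀ x, (∀ j, t x j ≠ 0) → ∑ j, a x j = 0) :
    ∃ z : K → ℂ, Continuous z ∧ ∀ x, thirdDiff M (t x) = 0 → ‖z x‖ = 1 ∧
      ∀ j, t x j = 0 → z x = turn (a x j * edgeCoord (t x) j) := by
  let Q : Set K := {x | thirdDiff M (t x) = 0}
  have hQ : IsClosed Q :=
    isClosed_eq ((thirdDiff M).continuous_of_finiteDimensional.comp ht) continuous_const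
  have hquad {x : K} (hx : x ∈ Q) : IsNonnegQuadratic (t x) := ⟨ht0 x, htne x, hx⟩
  let S : K → Fin (M + 3) → ℤ := fun x => edgePotential (t x) (a x)
  let piece (v : range S) : Set K := Q ∩ {x | S x = v}
  have : Finite (range S) := finite_range_edgePotential ha
  have hcover : ⋃ v, piece v = Q := by
    refine Subset.antisymm (iUnion_subset fun _ => inter_subset_left) fun x hx => ?_
    exact mem_iUnion.2 ⟨⟨S x, mem_range_self x⟩, hx, rfl⟩
  have hcont : ContinuousOn (fun x => turn (polygonInterp (fun i => S x i) (t x))) Q := by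
    rw [← hcover]
    refine (locallyFinite_of_finite piece).continuousOn_iUnion' fun v x hx => ?_
    have hxQ : x ∈ Q := hQ.closure_subset (closure_mono inter_subset_left hx)
    have hinterp := (hquad hxQ).continuousAt_polygonInterp fun i => (v : Fin (M + 3) → ℤ) i
    refine (continuous_turn.continuousAt.comp (hinterp.comp ht.continuousAt)).continuousWithinAt
      |>.congr (fun y hy => ?_) ?_
    · simp only [Function.comp_apply, ← show S y = v from hy.2]
    · exact (turn_polygonInterp_eq_of_mem_closure ht (hquad hxQ) (hloc x) hsum
        (closure_mono inter_subset_right hx)).symm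
  obtain ⟨z, hz⟩ := ContinuousMap.exists_restrict_eq hQ ⟨_, hcont.domRestrict⟩
  have hzQ {x : K} (hx : x ∈ Q) : z x = turn (polygonInterp (fun i => S x i) (t x)) :=
    DFunLike.congr_fun hz ⟨x, hx⟩
  refine ⟨z, z.continuous, fun x hx => ⟨by rw [hzQ hx, norm_turn], fun j hj => ?_⟩⟩
  rw [hzQ hx, (hquad hx).turn_polygonInterp hj (edgePotential_increment (hsum x))]

end Winding

section NonnegSection

variable {ι : Type*} [Fintype ι] [Nonempty ι]

/-- The vector obtained from `l` by subtracting the multiple of the positive vector `k` which makes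
the least ratio `l i / k i` vanish. -/
noncomputable def subMinRatio (k l : ι → ℝ) : ι → ℝ :=
  l - (Finset.univ.inf' Finset.univ_nonempty fun i => l i / k i) • k

lemma continuous_subMinRatio (k : ι → ℝ) : Continuous (subMinRatio k) := by
  have hmin : Continuous fun l : ι → ℝ =>
      Finset.univ.inf' Finset.univ_nonempty fun i => l i / k i :=
    Continuous.finset_inf'_apply _ fun i _ => by fun_prop
  exact continuous_id.sub (hmin.smul continuous_const)

lemma subMinRatio_nonneg {k : ι → ℝ} (hk : ∀ i, 0 < k i) (l : ι → ℝ) (j : ι) :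
    0 ≤ subMinRatio k l j :=
  sub_nonneg.2 ((le_div_iff₀ (hk j)).1 (Finset.inf'_le _ (Finset.mem_univ j)))

lemma exists_subMinRatio_eq_zero {k : ι → ℝ} (hk : ∀ i, 0 < k i) (l : ι → ℝ) :
    ∃ j, subMinRatio k l j = 0 := by
  obtain ⟨j, -, hj⟩ :=
    Finset.exists_mem_eq_inf' (s := Finset.univ) Finset.univ_nonempty fun i => l i / k i
  exact ⟨j, by simp [subMinRatio, hj, (hk j).ne']⟩

lemma subMinRatio_add_smul_le {k l : ι → ℝ} (hk : ∀ i, 0 < k i) (hl : ∀ i, 0 ≤ l i) (a : ℝ)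
    (j : ι) : subMinRatio k (l + a • k) j ≤ l j := by
  have hmin : a ≤ Finset.univ.inf' Finset.univ_nonempty fun i => (l + a • k) i / k i := by
    refine Finset.le_inf' _ _ fun i _ => (le_div_iff₀ (hk i)).2 ?_
    simpa using hl i
  have hmul := mul_le_mul_of_nonneg_right hmin (hk j).le
  simp only [subMinRatio, Pi.sub_apply, Pi.smul_apply, Pi.add_apply, smul_eq_mul] at hmul ⊢
  linarith

end NonnegSection

lemma exists_continuous_nonneg_section {ι : Type*} [Finite ι] [Nonempty ι] {E : Type*}
    [NormedAddCommGroup E] [NormedSpace ℝ E] {P : (ι → ℝ) →ₗ[ℝ] E} (hP : Function.Surjective P)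
    {k : ι → ℝ} (hk : ∀ i, 0 < k i) (hker : LinearMap.ker P = Submodule.span ℝ {k}) :
    ∃ ρ : E → ι → ℝ, Continuous ρ ∧ (∀ e, P (ρ e) = e) ∧ (∀ e j, 0 ≤ ρ e j) ∧
      (∀ e, ∃ j, ρ e j = 0) ∧ ∀ l, (∀ j, 0 ≤ l j) → ∀ j, ρ (P l) j ≤ l j := by
  have := Fintype.ofFinite ι
  obtain ⟨S, hS⟩ := P.exists_rightInverse_of_surjective (LinearMap.range_eq_top.2 hP)
  have hPS (e : E) : P (S e) = e := DFunLike.congr_fun hS e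
  have hPk : P k = 0 := by
    rw [← LinearMap.mem_ker, hker]
    exact Submodule.mem_span_singleton_self k
  have : FiniteDimensional ℝ E := Module.Finite.of_surjective P hP
  refine ⟨fun e => subMinRatio k (S e),
    (continuous_subMinRatio k).comp S.continuous_of_finiteDimensional, fun e => ?_,
    fun e => subMinRatio_nonneg hk _, fun e => exists_subMinRatio_eq_zero hk _, fun l hl => ?_⟩
  · beta_reduce
    rw [subMinRatio, map_sub, map_smul, hPk, smul_zero, sub_zero, hPS]
  · have hmem : S (P l) - l ∈ LinearMap.ker P := by simp [hPS]
    rw [hker, Submodule.mem_span_singleton] at hmem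
    obtain ⟨a, ha⟩ := hmem
    beta_reduce
    rw [← add_sub_cancel l (S (P l)), ← ha]
    exact subMinRatio_add_smul_le hk hl a

section LabelMap

variable {M : ℕ}

lemma val_last_sub_one : ((Fin.last (M + 2) - 1 : Fin (M + 3)) : ℕ) = M + 1 := by
  have hsub : Fin.last (M + 2) - 1 = (Fin.last (M + 1)).castSucc := by
    rw [sub_eq_iff_eq_add, Fin.coeSucc_eq_succ, Fin.succ_last]
  rw [hsub, Fin.val_castSucc, Fin.val_last]

lemma last_sub_one_ne_last : (Fin.last (M + 2) - 1 : Fin (M + 3)) ≠ Fin.last (M + 2) := by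
  simp

/-- Replace the last coordinate by zero. -/
def zeroLast (n : ℕ) : (Fin (n + 1) → ℝ) →ₗ[ℝ] (Fin (n + 1) → ℝ) where
  toFun l := Function.update l (Fin.last n) 0
  map_add' l l' := by rw [← Function.update_add, add_zero]
  map_smul' r l := by
    rw [RingHom.id_apply, ← Function.update_smul, smul_zero]

lemma zeroLast_last {n : ℕ} (l : Fin (n + 1) → ℝ) : zeroLast n l (Fin.last n) = 0 :=
  Function.update_self ..

lemma zeroLast_of_ne {n : ℕ} (l : Fin (n + 1) → ℝ) {i : Fin (n + 1)} (hi : i ≠ Fin.last n) :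
    zeroLast n l i = l i :=
  Function.update_of_ne hi ..

lemma zeroLast_eq_self {n : ℕ} {l : Fin (n + 1) → ℝ} (hl : l (Fin.last n) = 0) :
    zeroLast n l = l := by
  rw [zeroLast, LinearMap.coe_mk, AddHom.coe_mk, ← hl, Function.update_eq_self]

/-- A linear map whose kernel is spanned by a positive vector, so that it identifies the boundary of
the positive orthant with the target. Its zero set on the last facet is the ray spanned by a
quadratic sequence. -/
def labelMap (M : ℕ) : (Fin (M + 3) → ℝ) →ₗ[ℝ] (Fin M → ℝ) × ℂ where
  toFun l := (thirdDiff M (zeroLast _ l), ⟨l (Fin.last _) - ∑ i, zeroLast _ l i,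
    (-1) ^ M * (l 0 - l (Fin.last _ - 1))⟩)
  map_add' l l' := by
    refine Prod.ext (by simp) (Complex.ext ?_ ?_)
    · simp only [Pi.add_apply, map_add, Finset.sum_add_distrib, Prod.mk_add_mk, Complex.add_re]
      ring
    · simp only [Pi.add_apply, Prod.mk_add_mk, Complex.add_im]
      ring
  map_smul' r l := by
    refine Prod.ext (by simp) (Complex.ext ?_ ?_)
    · simp only [Pi.smul_apply, map_smul, smul_eq_mul, ← Finset.mul_sum, RingHom.id_apply,
        Prod.smul_mk, Complex.smul_re]
      ring
    · simp only [Pi.smul_apply, smul_eq_mul, RingHom.id_apply, Prod.smul_mk, Complex.smul_im]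
      ring

/-- The quadratic sequence vanishing at `M + 2` and symmetric on `0, …, M + 1`. -/
def kernelQuadratic (M : ℕ) (i : Fin (M + 3)) : ℝ := ((M : ℝ) + 2 - i) * (i + 1)

/-- The positive vector spanning the kernel of `labelMap`. -/
def kernelVector (M : ℕ) : Fin (M + 3) → ℝ :=
  Function.update (kernelQuadratic M) (Fin.last _) (∑ i, kernelQuadratic M i)

lemma kernelQuadratic_last : kernelQuadratic M (Fin.last _) = 0 := by
  simp [kernelQuadratic]

lemma kernelQuadratic_pos {i : Fin (M + 3)} (hi : i ≠ Fin.last _) : 0 < kernelQuadratic M i := by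
  have hlt : (i : ℝ) < (M + 2 : ℕ) := Nat.cast_lt.2 (Fin.val_lt_last hi)
  push_cast at hlt
  exact mul_pos (by linarith) (by positivity)

lemma zeroLast_kernelVector : zeroLast _ (kernelVector M) = kernelQuadratic M := by
  rw [zeroLast, LinearMap.coe_mk, AddHom.coe_mk, kernelVector, Function.update_idem,
    ← kernelQuadratic_last, Function.update_eq_self]

lemma kernelVector_pos (i : Fin (M + 3)) : 0 < kernelVector M i := by
  rcases eq_or_ne i (Fin.last _) with rfl | hi
  · rw [kernelVector, Function.update_self]
    refine Finset.sum_pos' (fun j _ => ?_) ⟨0, Finset.mem_univ _, kernelQuadratic_pos ?_⟩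
    · rcases eq_or_ne j (Fin.last _) with rfl | hj
      · exact kernelQuadratic_last.ge
      · exact (kernelQuadratic_pos hj).le
    · exact (Fin.last_pos).ne
  · rw [kernelVector, Function.update_of_ne hi]
    exact kernelQuadratic_pos hi

lemma labelMap_kernelVector : labelMap M (kernelVector M) = 0 := by
  refine Prod.ext ?_ (Complex.ext ?_ ?_)
  · ext i
    simp only [labelMap, LinearMap.coe_mk, AddHom.coe_mk, zeroLast_kernelVector, thirdDiff,
      kernelQuadratic, Prod.fst_zero, Pi.zero_apply]
    push_cast
    ring
  · have hlast : kernelVector M (Fin.last _) = ∑ i, kernelQuadratic M i := Function.update_self ..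
    simp [labelMap, zeroLast_kernelVector, hlast]
  · have hzero : kernelVector M 0 = kernelQuadratic M 0 :=
      Function.update_of_ne (Fin.last_pos).ne ..
    have hpen : kernelVector M (Fin.last _ - 1) = kernelQuadratic M (Fin.last _ - 1) :=
      Function.update_of_ne last_sub_one_ne_last ..
    simp only [labelMap, LinearMap.coe_mk, AddHom.coe_mk, hzero, hpen, kernelQuadratic,
      val_last_sub_one, Fin.val_zero]
    push_cast
    simp only [Prod.snd_zero, Complex.zero_im]
    ring

lemma exists_zeroLast_eq_smul {l : Fin (M + 3) → ℝ} (h : thirdDiff M (zeroLast _ l) = 0)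
    (hl : l 0 = l (Fin.last _ - 1)) : ∃ a : ℝ, zeroLast _ l = a • kernelQuadratic M := by
  obtain ⟨a, b, c, hq⟩ := exists_quadratic_of_thirdDiff_eq_zero h
  have hq_last := hq (Fin.last _)
  have hq_zero := hq 0
  have hq_pen := hq (Fin.last _ - 1)
  rw [zeroLast_last, Fin.val_last] at hq_last
  rw [zeroLast_of_ne l (Fin.last_pos).ne, Fin.val_zero] at hq_zero
  rw [zeroLast_of_ne l last_sub_one_ne_last, val_last_sub_one] at hq_pen
  push_cast at hq_last hq_zero hq_pen
  have hb : b + c * (M + 1) = 0 := by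
    have hM : (M : ℝ) + 1 ≠ 0 := by positivity
    exact mul_left_cancel₀ hM (by linear_combination hq_zero - hq_pen - hl)
  refine ⟨-c, funext fun i => ?_⟩
  rw [hq, Pi.smul_apply, kernelQuadratic, smul_eq_mul]
  linear_combination -hq_last + ((i : ℝ) - (M + 2)) * hb

lemma ker_labelMap : LinearMap.ker (labelMap M) = Submodule.span ℝ {kernelVector M} := by
  refine le_antisymm (fun l hl => ?_) ?_
  · have hfst : thirdDiff M (zeroLast _ l) = 0 := congrArg Prod.fst hl
    have hre : l (Fin.last _) - ∑ i, zeroLast _ l i = 0 := congrArg (fun e => e.2.re) hl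
    have him : (-1) ^ M * (l 0 - l (Fin.last _ - 1)) = 0 := congrArg (fun e => e.2.im) hl
    have hends : l 0 = l (Fin.last _ - 1) :=
      sub_eq_zero.1 ((mul_eq_zero_iff_left (pow_ne_zero _ (by norm_num))).1 him)
    obtain ⟨a, ha⟩ := exists_zeroLast_eq_smul hfst hends
    refine Submodule.mem_span_singleton.2 ⟨a, funext fun i => ?_⟩
    rcases eq_or_ne i (Fin.last _) with rfl | hi
    · rw [sub_eq_zero.1 hre, ha, Pi.smul_apply, kernelVector, Function.update_self]
      simp only [Pi.smul_apply, smul_eq_mul, Finset.mul_sum]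
    · rw [← zeroLast_of_ne l hi, ha, Pi.smul_apply, Pi.smul_apply, kernelVector,
        Function.update_of_ne hi]
  · rw [Submodule.span_singleton_le_iff_mem]
    exact labelMap_kernelVector

lemma surjective_labelMap : Function.Surjective (labelMap M) := by
  have hker : Module.finrank ℝ (LinearMap.ker (labelMap M)) = 1 := by
    rw [ker_labelMap]
    exact finrank_span_singleton fun h => (kernelVector_pos (M := M) 0).ne' (congrFun h 0)
  have hrank := (labelMap M).finrank_range_add_finrank_ker
  rw [hker, Module.finrank_fintype_fun_eq_card, Fintype.card_fin] at hrank
  rw [← LinearMap.range_eq_top]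
  apply Submodule.eq_top_of_finrank_eq
  rw [Module.finrank_prod, Module.finrank_fintype_fun_eq_card, Fintype.card_fin,
    Complex.finrank_real_complex]
  omega

end LabelMap

lemma im_turn_pos {r : ℝ} (h0 : 0 < r) (h1 : r < 1 / 2) : 0 < (turn r).im := by
  rw [turn, Complex.exp_ofReal_mul_I_im]
  exact Real.sin_pos_of_pos_of_lt_pi (by positivity) (by nlinarith [Real.pi_pos])

lemma im_turn_neg (r : ℝ) : (turn (-r)).im = -(turn r).im := by
  rw [turn, turn, Complex.exp_ofReal_mul_I_im, Complex.exp_ofReal_mul_I_im, mul_neg, Real.sin_neg]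

lemma im_turn_lt_zero {r : ℝ} (h0 : 1 / 2 < r) (h1 : r < 1) : (turn r).im < 0 := by
  have hpos := im_turn_pos (r := 1 - r) (by linarith) (by linarith)
  have hturn : turn (1 - r) = turn (-r) := by simpa [sub_eq_add_neg] using turn_int_add 1 (-r)
  rwa [hturn, im_turn_neg, neg_pos] at hpos

lemma turn_one_half : turn (1 / 2) = -1 := by
  rw [turn, show 2 * Real.pi * (1 / 2) = Real.pi by ring, Complex.exp_pi_mul_I]

/-- The two summands have the same sign unless `a = b`. -/
lemma eq_and_turn_eq_neg_one {a b : ℝ} (ha : 0 < a) (hb : 0 < b) {s s' : ℝ} (hs : 0 ≤ s)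
    (hs' : 0 ≤ s') (hss : s + s' = 1) {m : ℕ}
    (h : s * ((-1) ^ m * (a - b)) + s' * (turn ((-1) ^ m * (b / (b + a)))).im = 0) :
    a = b ∧ turn ((-1) ^ m * (b / (b + a))) = -1 := by
  have hba : 0 < b + a := add_pos hb ha
  have hsign : s * (a - b) + s' * (turn (b / (b + a))).im = 0 := by
    rcases neg_one_pow_eq_or ℝ m with hm | hm
    · simpa [hm] using h
    · rw [hm, neg_one_mul, neg_one_mul, im_turn_neg] at h
      linear_combination -h
  have hab : a = b := by
    rcases lt_trichotomy a b with hlt | heq | hgt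
    · have him := im_turn_lt_zero (r := b / (b + a))
        (by rw [div_lt_div_iff₀ two_pos hba]; linarith) (by rw [div_lt_one hba]; linarith)
      rcases hs.eq_or_lt with rfl | hs <;> nlinarith
    · exact heq
    · have him := im_turn_pos (div_pos hb hba) (by rw [div_lt_div_iff₀ hba two_pos]; linarith)
      rcases hs.eq_or_lt with rfl | hs <;> nlinarith
  subst hab
  refine ⟨rfl, ?_⟩
  rw [show a / (a + a) = 1 / 2 by field_simp; norm_num]
  rcases neg_one_pow_eq_or ℝ m with hm | hm
  · rw [hm, one_mul, turn_one_half]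
  · rw [hm, ← turn_int_add 1, ← turn_one_half]
    norm_num

section HopfExtension

variable {M : ℕ}

/-- The ray of points `(0, r)` with `r` real and nonpositive. -/
def negRay (M : ℕ) : Set ((Fin M → ℝ) × ℂ) := {e | e.1 = 0 ∧ e.2.im = 0 ∧ e.2.re ≤ 0}

lemma isClosed_negRay : IsClosed (negRay M) :=
  (isClosed_eq continuous_fst continuous_const).inter <|
    (isClosed_eq (Complex.continuous_im.comp continuous_snd) continuous_const).inter
      (isClosed_le (Complex.continuous_re.comp continuous_snd) continuous_const)

lemma labelMap_eq_zero_of_mem_negRay {l : Fin (M + 3) → ℝ} (hl : ∀ i, 0 ≤ l i)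
    {i : Fin (M + 3)} (hi : i ≠ Fin.last _) (hli : l i = 0) (h : labelMap M l ∈ negRay M) :
    labelMap M l = 0 := by
  obtain ⟨hdiff, him, hre⟩ := h
  have hends : l 0 = l (Fin.last _ - 1) :=
    sub_eq_zero.1 ((mul_eq_zero_iff_left (pow_ne_zero _ (by norm_num))).1 him)
  obtain ⟨a, ha⟩ := exists_zeroLast_eq_smul hdiff hends
  have ha0 : a = 0 := by
    have hai := congrFun ha i
    rw [zeroLast_of_ne l hi, hli, Pi.smul_apply, smul_eq_mul, eq_comm] at hai
    exact (mul_eq_zero_iff_right (kernelQuadratic_pos hi).ne').1 hai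
  refine Prod.ext hdiff (Complex.ext (le_antisymm hre ?_) him)
  change 0 ≤ l (Fin.last _) - ∑ i, zeroLast _ l i
  simpa [ha, ha0] using hl (Fin.last _)

lemma mem_negRay_of_mem_segment {l : Fin (M + 3) → ℝ} (hl : ∀ i ≠ Fin.last _, 0 < l i)
    (hlast : l (Fin.last _) = 0) {z : ℂ}
    (hz : thirdDiff M l = 0 → z = turn ((-1) ^ M * edgeCoord l (Fin.last _)))
    {p : (Fin M → ℝ) × ℂ} (hp : p ∈ segment ℝ (labelMap M l) (thirdDiff M l, z))
    (hpR : p ∈ negRay M) : p ≠ 0 ∧ labelMap M l ∈ negRay M := by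
  obtain ⟨s, s', hs, hs', hss, rfl⟩ := hp
  have hlabel : labelMap M l =
      (thirdDiff M l, ⟨-∑ i, l i, (-1) ^ M * (l 0 - l (Fin.last _ - 1))⟩) := by
    simp only [labelMap, LinearMap.coe_mk, AddHom.coe_mk, zeroLast_eq_self hlast, hlast, zero_sub]
  have hsum : 0 < ∑ i, l i :=
    Finset.sum_pos' (fun i _ => (eq_or_ne i (Fin.last _)).elim (fun h => h ▸ hlast.ge)
      fun h => (hl i h).le) ⟨0, Finset.mem_univ _, hl 0 (Fin.last_pos).ne⟩
  rw [hlabel] at hpR ⊢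
  obtain ⟨hdiff, him, -⟩ := hpR
  have hdiff' : thirdDiff M l = 0 := by
    simpa [← add_smul, hss] using hdiff
  have hz := hz hdiff'
  rw [edgeCoord, Fin.last_add_one] at hz
  have him' : s * ((-1) ^ M * (l 0 - l (Fin.last _ - 1))) + s' * z.im = 0 := by
    simpa using him
  rw [hz] at him'
  obtain ⟨hends, hturn⟩ := eq_and_turn_eq_neg_one (hl 0 (Fin.last_pos).ne)
    (hl _ last_sub_one_ne_last) hs hs' hss him'
  refine ⟨fun h0 => ?_, hdiff', by simp [hends], by simpa using hsum.le⟩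
  have hre : s * (-∑ i, l i) + s' * z.re = 0 := by
    simpa using congrArg (fun e => e.2.re) h0
  rw [hz, hturn, Complex.neg_re, Complex.one_re] at hre
  rcases hs.eq_or_lt with rfl | hs <;> nlinarith

lemma hasNonvanishingExtension_labelMap {K : Type*} [TopologicalSpace K] [NormalSpace K]
    [CompactSpace K] {C : Set K} (hC : IsClosed C) {l t : K → Fin (M + 3) → ℝ} {z : K → ℂ}
    (hlc : Continuous l) (ht : Continuous t) (hz : Continuous z)
    (hz1 : ∀ x, thirdDiff M (t x) = 0 → ‖z x‖ = 1) (hl : ∀ x i, 0 ≤ l x i)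
    (hne : ∀ x ∈ C, labelMap M (l x) ≠ 0)
    (hfacets : ∀ x ∈ C, (∃ i ≠ Fin.last _, l x i = 0) → thirdDiff M (t x) = 0 → z x = 1)
    (hlast : ∀ x ∈ C, (∀ i ≠ Fin.last _, l x i ≠ 0) → t x = l x ∧ l x (Fin.last _) = 0 ∧
      (thirdDiff M (t x) = 0 → z x = turn ((-1) ^ M * edgeCoord (t x) (Fin.last _)))) :
    HasNonvanishingExtension C (fun x => labelMap M (l x)) := by
  let N : Set K := ⋃ i : {i : Fin (M + 3) // i ≠ Fin.last _}, {x | l x i = 0}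
  have hmemN {x : K} : x ∈ N ↔ ∃ i ≠ Fin.last _, l x i = 0 := by simp [N]
  have hN : IsClosed N := isClosed_iUnion_of_finite fun i =>
    isClosed_eq ((continuous_apply _).comp hlc) continuous_const
  refine .of_ray hC hN isClosed_negRay (w := (0, -1)) (by simp) (fun r hr => by simp [negRay, hr])
    (g := fun x => (thirdDiff M (t x), z x))
    ((labelMap M).continuous_of_finiteDimensional.comp hlc)
    (((thirdDiff M).continuous_of_finiteDimensional.comp ht).prodMk hz) hne (fun x hx => ?_)
    (fun x hx hR => ?_) (fun x hx hR => ?_) fun x hx p hp hpR => ?_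
  · have hzx := hz1 x (congrArg Prod.fst hx)
    rw [show z x = 0 from congrArg Prod.snd hx, norm_zero] at hzx
    exact zero_ne_one hzx
  · obtain ⟨i, hi, hli⟩ := hmemN.1 hx.2
    exact hne x hx.1 (labelMap_eq_zero_of_mem_negRay (hl x) hi hli hR)
  · obtain ⟨hdiff, -, hre⟩ := hR
    rw [show (thirdDiff M (t x), z x).2 = 1 from hfacets x hx.1 (hmemN.1 hx.2) hdiff] at hre
    simp only [Complex.one_re] at hre
    linarith
  · have hpos : ∀ i ≠ Fin.last _, l x i ≠ 0 := by
      simpa [hmemN] using hx.2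
    obtain ⟨htl, hlx, hzx⟩ := hlast x hx.1 hpos
    rw [htl] at hp hzx
    exact mem_negRay_of_mem_segment (fun i hi => (hl x i).lt_of_ne' (hpos i hi)) hlx hzx hp hpR

end HopfExtension

namespace Chain

lemma coboundary_ofFn {R α : Type*} [CommRing R] {n : ℕ} (f : List α → R)
    (φ : Fin (n + 1) → α) :
    coboundary f (List.ofFn φ) =
      ∑ j : Fin (n + 1), (-1) ^ (j : ℕ) * f (List.ofFn (j.removeNth φ)) := by
  induction n generalizing f with
  | zero => simp [coboundary_cons, coboundary_nil]
  | succ n ih =>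
    rw [List.ofFn_succ, coboundary_cons, ih, Fin.sum_univ_succ (n := n + 1), sub_eq_add_neg,
      ← Finset.sum_neg_distrib]
    simp only [Fin.val_zero, pow_zero, one_mul, Fin.val_succ, pow_succ, mul_neg, mul_one, neg_mul]
    congr 1
    refine Finset.sum_congr rfl fun j _ => ?_
    rw [List.ofFn_succ (f := j.succ.removeNth φ)]
    simp only [Fin.removeNth, Fin.succ_succAbove_succ, Fin.succ_succAbove_zero]
    rfl

lemma facetCochain_eq_zero {m : ℕ} {l : List (Fin (m + 1))} {i : Fin (m + 1)}
    (hi : i ≠ Fin.last m) (h : i ∉ l) : facetCochain m l = 0 := by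
  by_contra hne
  have hperm : (lastFacet m).Perm l :=
    ((Finsupp.mem_supported ℤ _).1 (simplexAlternation_mem_supported l)
      (Finsupp.mem_support_iff.2 hne)).1
  exact h (hperm.mem_iff.1 (List.mem_map.2 ⟨i.castPred hi, List.mem_finRange _, by simp⟩))

lemma facetCochain_lastFacet (m : ℕ) : facetCochain m (lastFacet m) = 1 := by
  rw [facetCochain, simplexAlternation_of_sorted, Finsupp.single_eq_same]
  exact List.pairwise_map.2 ((List.pairwise_lt_finRange m).imp id)

end Chain

section TopSetFlag

variable {V : Type*} [Fintype V] [DecidableEq V] {s : V → ℝ}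

open Classical in
/-- The top set of `s` with `n` elements, or `∅` if there is none. -/
noncomputable def topSet (s : V → ℝ) (n : ℕ) : Finset V :=
  if h : ∃ F, F.card = n ∧ 0 < topWeight s F then h.choose else ∅

lemma topSet_spec {j : ℕ} (h : 0 < dimWeight s j) :
    (topSet s (j + 1)).card = j + 1 ∧ 0 < topWeight s (topSet s (j + 1)) := by
  have hex := dimWeight_pos_iff.1 h
  rw [topSet, dif_pos hex]
  exact hex.choose_spec

lemma topSet_nonempty {j : ℕ} (h : 0 < dimWeight s j) : (topSet s (j + 1)).Nonempty :=
  Finset.card_pos.1 (by rw [(topSet_spec h).1]; exact j.succ_pos)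

lemma topSet_eq {F : Finset V} {n : ℕ} (hF : 0 < topWeight s F) (hn : F.card = n) :
    topSet s n = F := by
  have hex : ∃ F, F.card = n ∧ 0 < topWeight s F := ⟨F, hn, hF⟩
  rw [topSet, dif_pos hex]
  exact eq_of_topWeight_pos hex.choose_spec.2 hF (hex.choose_spec.1.trans hn.symm)

lemma dimWeight_eq_zero {j : ℕ} (h : Finset.card {v | 0 < s v} ≤ j) : dimWeight s j = 0 := by
  refine ((dimWeight_nonneg s j).eq_of_not_lt fun hpos => ?_).symm
  obtain ⟨F, hF, hFpos⟩ := dimWeight_pos_iff.1 hpos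
  have := card_le_of_topWeight_pos hFpos
  omega

variable {M : ℕ} {L : Finset V → Fin (M + 3)}

/-- The top sets carrying the `M + 2` labels other than the last form a strictly increasing chain of
subsets of a set with `M + 2` elements, so their cardinalities are `1, …, M + 2`. -/
lemma card_eq_of_labelWeight_ne_zero (hL : ∀ F G, F.Nonempty → F ⊆ G → L F ≤ L G)
    (hcard : Finset.card {v | 0 < s v} ≤ M + 2)
    (h : ∀ i ≠ Fin.last _, labelWeight L s i ≠ 0) {F : Finset V} (hne : F.Nonempty)
    (hF : 0 < topWeight s F) : F.card = L F + 1 := by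
  have hlabel (i : Fin (M + 2)) : ∃ F, (F.Nonempty ∧ L F = i.castSucc) ∧ 0 < topWeight s F :=
    (labelWeight_pos_iff L).1
      ((labelWeight_nonneg L s _).lt_of_ne' (h _ (Fin.castSucc_lt_last i).ne))
  choose P hP hPpos using hlabel
  have hle {G : Finset V} (hG : 0 < topWeight s G) : G.card ≤ M + 2 :=
    (card_le_of_topWeight_pos hG).trans hcard
  have hPcard (i : Fin (M + 2)) : 0 < (P i).card := (hP i).1.card_pos
  let e : Fin (M + 2) → Fin (M + 2) := fun i =>
    ⟨(P i).card - 1, by have := hle (hPpos i); have := hPcard i; omega⟩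
  have he : StrictMono e := by
    intro i j hij
    have hlt : (P i).card < (P j).card := by
      by_contra! hle
      have hlabel := hL _ _ (hP j).1 (subset_of_topWeight_pos (hPpos j) (hPpos i) hle)
      rw [(hP i).2, (hP j).2, Fin.castSucc_le_castSucc_iff] at hlabel
      exact hlabel.not_gt hij
    have := hPcard i
    simp only [e, Fin.mk_lt_mk]
    omega
  have heid : e = id := he.range_inj strictMono_id |>.1 <| by
    rw [(Finite.injective_iff_surjective.1 he.injective).range_eq, range_id]
  have hFcard := hne.card_pos
  have := hle hF
  let k : Fin (M + 2) := ⟨F.card - 1, by omega⟩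
  have hk : (P k).card = F.card := by
    have hek : (P k).card - 1 = F.card - 1 := congrArg Fin.val (congrFun heid k)
    have := hPcard k
    omega
  have hPF : P k = F := eq_of_topWeight_pos (hPpos k) hF hk
  rw [← hPF, (hP k).2, hPF, Fin.val_castSucc, Nat.sub_add_cancel hFcard]

lemma dimWeight_eq_labelWeight
    (h : ∀ F : Finset V, F.Nonempty → 0 < topWeight s F → F.card = L F + 1)
    (i : Fin (M + 3)) : dimWeight s i = labelWeight L s i := by
  rw [dimWeight, labelWeight, labelWeight, Finset.sum_filter, Finset.sum_filter]
  refine Finset.sum_congr rfl fun F _ => ?_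
  rcases (topWeight_nonneg s F).eq_or_lt with hF | hF
  · simp only [← hF, ite_self]
  · congr 1
    exact propext (and_congr_right fun hne => by
      rw [h F hne hF, Nat.add_right_cancel_iff, Fin.val_inj])

end TopSetFlag

section ClosedCover

variable {K V : Type*} [TopologicalSpace K] {s : V → K → ℝ}

lemma isClosed_setOf_support_subset (hs : ∀ v, Continuous (s v)) (B : Set V) :
    IsClosed {x | ∀ v, 0 < s v x → v ∈ B} := by
  have hB : {x | ∀ v, 0 < s v x → v ∈ B} = ⋂ v ∈ Bᶜ, {x | s v x ≤ 0} := by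
    ext x
    simp only [mem_ofPred_eq, mem_iInter, mem_compl_iff, ← not_lt]
    exact forall_congr' fun v => not_imp_not.symm
  rw [hB]
  exact isClosed_biInter fun v _ => isClosed_le (hs v) continuous_const

lemma isClosed_setOf_exists_support_subset [Finite V] (hs : ∀ v, Continuous (s v)) (S : Set K) :
    IsClosed {x | ∃ y ∈ S, ∀ v, 0 < s v x → 0 < s v y} := by
  have hS : {x | ∃ y ∈ S, ∀ v, 0 < s v x → 0 < s v y} =
      ⋃ B ∈ (fun y => {v | 0 < s v y}) '' S, {x | ∀ v, 0 < s v x → v ∈ B} := by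
    ext x
    simp
  rw [hS]
  exact (toFinite _).isClosed_biUnion fun B _ => isClosed_setOf_support_subset hs B

lemma HasNonvanishingExtension.of_inter {E : Type*} [NormedAddCommGroup E] {A B : Set K}
    (hA : IsClosed A) (hB : IsClosed B) (hAB : A ∪ B = univ) {f : K → E}
    (hf : Continuous f) (hne : ∀ x ∈ A, f x ≠ 0) (h : HasNonvanishingExtension (A ∩ B) f) :
    HasNonvanishingExtension A f := by
  classical
  obtain ⟨g, hg, hgne, hgf⟩ := h
  have hglue : EqOn (A.piecewise f g) g B := fun x hx => by
    by_cases hxA : x ∈ A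
    · rw [piecewise_eq_of_mem _ _ _ hxA, hgf ⟨hxA, hx⟩]
    · rw [piecewise_eq_of_notMem _ _ _ hxA]
  refine ⟨A.piecewise f g, ?_, fun x => ?_, A.piecewise_eqOn f g⟩
  · rw [← continuousOn_univ, ← hAB]
    exact (hf.continuousOn.congr (A.piecewise_eqOn f g)).union_of_isClosed
      (hg.continuousOn.congr hglue) hA hB
  · by_cases hxA : x ∈ A
    · rw [piecewise_eq_of_mem _ _ _ hxA]
      exact hne x hxA
    · rw [piecewise_eq_of_notMem _ _ _ hxA]
      exact hgne x

end ClosedCover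

section CocycleExtension

open scoped Topology

variable {K V : Type*} [TopologicalSpace K] [Fintype V] [DecidableEq V] {s : V → K → ℝ} {M : ℕ}

lemma eventually_topSet_eq (hs : ∀ v, Continuous (s v)) {x : K} {j : ℕ}
    (h : 0 < dimWeight (s · x) j) :
    ∀ᶠ y in 𝓝 x, topSet (s · y) (j + 1) = topSet (s · x) (j + 1) := by
  obtain ⟨hcard, hpos⟩ := topSet_spec h
  filter_upwards [continuousAt_const.eventually_lt (continuous_topWeight hs _).continuousAt hpos]
    with y hy
  exact topSet_eq hy hcard

/-- The degree on the `j`-th facet is the signed value of `c` on the flag of top sets without its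
`j`-th member; the degrees add up to zero because `c` is a cocycle. -/
lemma exists_continuous_winding_of_cocycle [NormalSpace K] (hs : ∀ v, Continuous (s v))
    (hpos : ∀ x, ∃ j : Fin (M + 3), 0 < dimWeight (s · x) j) {c : List (Finset V) → ℤ}
    (hc : ∀ x l, l.length = M + 3 → (∀ F ∈ l, F.Nonempty ∧ 0 < topWeight (s · x) F) →
      Chain.coboundary c l = 0) :
    ∃ z : K → ℂ, Continuous z ∧ ∀ x, thirdDiff M (fun j => dimWeight (s · x) j) = 0 → ‖z x‖ = 1 ∧
      ∀ j : Fin (M + 3), dimWeight (s · x) j = 0 →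
        z x = turn (((-1) ^ (j : ℕ) * c (List.ofFn (j.removeNth fun i => topSet (s · x) (i + 1))) :
          ℤ) * edgeCoord (fun j => dimWeight (s · x) j) j) := by
  have hdim {x : K} {j : Fin (M + 3)} (h : dimWeight (s · x) j ≠ 0) : 0 < dimWeight (s · x) j :=
    (dimWeight_nonneg _ _).lt_of_ne' h
  let degree (φ : Fin (M + 3) → Finset V) (j : Fin (M + 3)) : ℤ :=
    (-1) ^ (j : ℕ) * c (List.ofFn (j.removeNth φ))
  refine exists_continuous_winding (t := fun x j => dimWeight (s · x) j)
    (a := fun x => degree fun i => topSet (s · x) (i + 1))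
    (continuous_pi fun j => continuous_dimWeight hs j) (fun x j => dimWeight_nonneg _ _)
    (fun x => (hpos x).imp fun j hj => hj.ne')
    ((finite_range degree).subset (range_subset_iff.2 fun x => mem_range_self _))
    (fun x j hx => ?_) fun x hx => ?_
  · have hflag : ∀ᶠ y in 𝓝 x, ∀ i : Fin (M + 2),
        topSet (s · y) (j.succAbove i + 1) = topSet (s · x) (j.succAbove i + 1) :=
      eventually_all.2 fun i => eventually_topSet_eq hs (hdim (hx _ (Fin.succAbove_ne j i)))
    filter_upwards [hflag] with y hy
    have hremove : (j.removeNth fun i => topSet (s · y) (i + 1)) =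
        j.removeNth fun i => topSet (s · x) (i + 1) := funext hy
    simp only [degree, hremove]
  · rw [← Chain.coboundary_ofFn]
    refine hc x _ List.length_ofFn ?_
    simp only [List.forall_mem_ofFn_iff]
    exact fun i => ⟨topSet_nonempty (hdim (hx i)), (topSet_spec (hdim (hx i))).2⟩

lemma labelMap_ne_zero {l : Fin (M + 3) → ℝ} (hne : ∃ i, l i ≠ 0) (hzero : ∃ i, l i = 0) :
    labelMap M l ≠ 0 := by
  intro h
  rw [← LinearMap.mem_ker, ker_labelMap, Submodule.mem_span_singleton] at h
  obtain ⟨a, rfl⟩ := h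
  obtain ⟨i, hi⟩ := hne
  obtain ⟨j, hj⟩ := hzero
  have ha : a = 0 := (mul_eq_zero_iff_right (kernelVector_pos j).ne').1 hj
  exact hi (by simp [ha])

lemma turn_int_mul_edgeCoord {t : Fin (M + 3) → ℝ} (h : IsNonnegQuadratic t) {i j : Fin (M + 3)}
    (hij : i ≠ j) (hi : t i = 0) (hj : t j = 0) (n : ℤ) : turn (n * edgeCoord t j) = 1 := by
  rcases h.edgeCoord_eq_zero_or_one hij hi hj with he | he
  · simpa [he] using turn_int 0
  · rw [he, mul_one, turn_int]

section Labels

variable {w : V → ℝ} {L : Finset V → Fin (M + 3)}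

lemma turn_mul_edgeCoord_eq_one (h : IsNonnegQuadratic fun j : Fin (M + 3) => dimWeight w j)
    (hlast : dimWeight w (M + 2) = 0) (hlabel : ∃ i ≠ Fin.last _, labelWeight L w i = 0) (k n : ℤ)
    (hn : (∀ i : Fin (M + 2), 0 < dimWeight w i) →
      n = Chain.facetCochain (M + 2) (List.ofFn fun i : Fin (M + 2) => L (topSet w (i + 1)))) :
    turn ((k * n : ℤ) * edgeCoord (fun j : Fin (M + 3) => dimWeight w j) (Fin.last _)) = 1 := by
  by_cases hpos : ∀ i : Fin (M + 2), 0 < dimWeight w i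
  · obtain ⟨i, hi, hLi⟩ := hlabel
    rw [hn hpos, Chain.facetCochain_eq_zero hi, mul_zero]
    · simpa using turn_int 0
    · rw [List.mem_ofFn]
      rintro ⟨j, hLj⟩
      exact hLi.not_gt ((labelWeight_pos_iff L).2
        ⟨_, ⟨topSet_nonempty (hpos j), hLj⟩, (topSet_spec (hpos j)).2⟩)
  · obtain ⟨i, hi⟩ := not_forall.1 hpos
    exact turn_int_mul_edgeCoord h (Fin.castSucc_lt_last i).ne
      ((dimWeight_nonneg w i).eq_of_not_lt hi).symm (by simpa using hlast) _

lemma forall_dimWeight_pos (hL : ∀ F G, F.Nonempty → F ⊆ G → L F ≤ L G)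
    (hcard : Finset.card {v | 0 < w v} ≤ M + 2) (h : ∀ i ≠ Fin.last _, labelWeight L w i ≠ 0)
    (i : Fin (M + 2)) : 0 < dimWeight w i := by
  rw [show (i : ℕ) = i.castSucc from rfl,
    dimWeight_eq_labelWeight fun F => card_eq_of_labelWeight_ne_zero hL hcard h]
  exact (labelWeight_nonneg L w _).lt_of_ne' (h _ (Fin.castSucc_lt_last i).ne)

lemma facetCochain_topSet_eq_one (hL : ∀ F G, F.Nonempty → F ⊆ G → L F ≤ L G)
    (hcard : Finset.card {v | 0 < w v} ≤ M + 2)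
    (h : ∀ i ≠ Fin.last _, labelWeight L w i ≠ 0) :
    Chain.facetCochain (M + 2) (List.ofFn fun i : Fin (M + 2) => L (topSet w (i + 1))) = 1 := by
  have hL' : (fun i : Fin (M + 2) => L (topSet w (i + 1))) = Fin.castSucc := by
    funext i
    have hpos := forall_dimWeight_pos hL hcard h i
    have hlabel := card_eq_of_labelWeight_ne_zero hL hcard h (topSet_nonempty hpos)
      (topSet_spec hpos).2
    rw [(topSet_spec hpos).1] at hlabel
    exact Fin.ext (by simpa using hlabel.symm)
  rw [hL', List.ofFn_eq_map, ← Chain.lastFacet, Chain.facetCochain_lastFacet]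

end Labels

/-- Where no top set has `M + 3` vertices, the winding map satisfies the hypotheses of
`hasNonvanishingExtension_labelMap` with degree one on the last facet and zero on the others. -/
lemma hasNonvanishingExtension_labelMap_of_card_le [NormalSpace K] [CompactSpace K]
    (hs : ∀ v, Continuous (s v)) (hpos : ∀ x, ∃ j : Fin (M + 3), 0 < dimWeight (s · x) j)
    {L : Finset V → Fin (M + 3)} (hL : ∀ F G, F.Nonempty → F ⊆ G → L F ≤ L G)
    {c : List (Finset V) → ℤ}
    (hc : ∀ x l, l.length = M + 3 → (∀ F ∈ l, F.Nonempty ∧ 0 < topWeight (s · x) F) →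
      Chain.coboundary c l = 0)
    {C : Set K} (hC : IsClosed C) (hcard : ∀ x ∈ C, Finset.card {v | 0 < s v x} ≤ M + 2)
    (hne : ∀ x ∈ C, labelMap M (labelWeight L (s · x)) ≠ 0)
    (hcC : ∀ x ∈ C, ∀ l, l.length = M + 2 → (∀ F ∈ l, F.Nonempty ∧ 0 < topWeight (s · x) F) →
      c l = Chain.facetCochain (M + 2) (l.map L)) :
    HasNonvanishingExtension C (fun x => labelMap M (labelWeight L (s · x))) := by
  obtain ⟨z, hz, hzt⟩ := exists_continuous_winding_of_cocycle hs hpos hc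
  have hlast (x) (hx : x ∈ C) : dimWeight (s · x) (M + 2) = 0 := dimWeight_eq_zero (hcard x hx)
  have hdegree (x) (hx : x ∈ C) (h : ∀ i : Fin (M + 2), 0 < dimWeight (s · x) i) :
      c (List.ofFn ((Fin.last (M + 2)).removeNth fun i => topSet (s · x) (i + 1))) =
        Chain.facetCochain (M + 2)
          (List.ofFn fun i : Fin (M + 2) => L (topSet (s · x) (i + 1))) := by
    have htop : ∀ F ∈ List.ofFn ((Fin.last (M + 2)).removeNth fun i => topSet (s · x) (i + 1)),
        F.Nonempty ∧ 0 < topWeight (s · x) F := by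
      rw [List.forall_mem_ofFn_iff]
      intro i
      simp only [Fin.removeNth, Fin.succAbove_last]
      exact ⟨topSet_nonempty (h i), (topSet_spec (h i)).2⟩
    rw [hcC x hx _ List.length_ofFn htop, List.map_ofFn]
    refine congrArg _ (congrArg List.ofFn (funext fun i => ?_))
    simp only [Function.comp_apply, Fin.removeNth, Fin.succAbove_last, Fin.val_castSucc]
  refine hasNonvanishingExtension_labelMap hC (t := fun x j => dimWeight (s · x) j)
    (continuous_pi fun i => continuous_labelWeight L hs i)
    (continuous_pi fun j => continuous_dimWeight hs j) hz (fun x hx => (hzt x hx).1)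
    (fun x i => labelWeight_nonneg L _ i) hne (fun x hx hi hquad => ?_) (fun x hx hi => ?_)
  · rw [(hzt x hquad).2 (Fin.last _) (hlast x hx)]
    exact turn_mul_edgeCoord_eq_one ⟨fun j => dimWeight_nonneg _ _,
      (hpos x).imp fun j hj => hj.ne', hquad⟩ (hlast x hx) hi _ _ (hdegree x hx)
  · have heq : (fun j : Fin (M + 3) => dimWeight (s · x) j) = labelWeight L (s · x) :=
      funext (dimWeight_eq_labelWeight fun F => card_eq_of_labelWeight_ne_zero hL (hcard x hx) hi)
    refine ⟨heq, heq ▸ hlast x hx, fun hquad => ?_⟩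
    rw [(hzt x hquad).2 (Fin.last _) (hlast x hx),
      hdegree x hx (forall_dimWeight_pos hL (hcard x hx) hi),
      facetCochain_topSet_eq_one hL (hcard x hx) hi]
    simp [pow_add]

/-- A point outside the subcomplex on `B` lies in a closed face which is not contained in that
subcomplex, so that the points they share have at most `M + 2` vertices. -/
lemma hasNonvanishingExtension_labelMap_labelWeight [NormalSpace K] [CompactSpace K]
    (hs : ∀ v, Continuous (s v)) (hpos : ∀ x, ∃ v, 0 < s v x)
    (hcard : ∀ x, Finset.card {v | 0 < s v x} ≤ M + 3)
    {L : Finset V → Fin (M + 3)} (hL : ∀ F G, F.Nonempty → F ⊆ G → L F ≤ L G)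
    {c : List (Finset V) → ℤ}
    (hc : ∀ x l, l.length = M + 3 → (∀ F ∈ l, F.Nonempty ∧ 0 < topWeight (s · x) F) →
      Chain.coboundary c l = 0)
    {B : Set V} (hmiss : ∀ x, (∀ v, 0 < s v x → v ∈ B) → ∃ j, labelWeight L (s · x) j = 0)
    (hcB : ∀ x, (∀ v, 0 < s v x → v ∈ B) → ∀ l, l.length = M + 2 →
      (∀ F ∈ l, F.Nonempty ∧ 0 < topWeight (s · x) F) →
      c l = Chain.facetCochain (M + 2) (l.map L)) :
    HasNonvanishingExtension {x | ∀ v, 0 < s v x → v ∈ B}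
      (fun x => labelMap M (labelWeight L (s · x))) := by
  set A : Set K := {x | ∀ v, 0 < s v x → v ∈ B}
  let A' : Set K := {x | ∃ y ∈ Aᶜ, ∀ v, 0 < s v x → 0 < s v y}
  have hA : IsClosed A := isClosed_setOf_support_subset hs B
  have hA' : IsClosed A' := isClosed_setOf_exists_support_subset hs Aᶜ
  have hcover : A ∪ A' = univ :=
    eq_univ_of_forall fun x => or_iff_not_imp_left.2 fun hx => ⟨x, hx, fun v hv => hv⟩
  have hcardA : ∀ x ∈ A ∩ A', Finset.card {v | 0 < s v x} ≤ M + 2 := by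
    rintro x ⟨hx, y, hy, hxy⟩
    obtain ⟨v, hv, hvB⟩ : ∃ v, 0 < s v y ∧ v ∉ B := by simpa [A] using hy
    have hssub : Finset.univ.filter (0 < s · x) ⊂ Finset.univ.filter (0 < s · y) :=
      (Finset.ssubset_iff_of_subset (Finset.monotone_filter_right _ fun v _ => hxy v)).2
        ⟨v, by simpa using hv, fun hvx => hvB (hx v (by simpa using hvx))⟩
    have := (Finset.card_lt_card hssub).trans_le (hcard y)
    omega
  have hne : ∀ x ∈ A, labelMap M (labelWeight L (s · x)) ≠ 0 := fun x hx => by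
    obtain ⟨F, hF, hFpos⟩ := exists_topWeight_pos (hpos x)
    exact labelMap_ne_zero ⟨L F, ((labelWeight_pos_iff L).2 ⟨F, ⟨hF, rfl⟩, hFpos⟩).ne'⟩ (hmiss x hx)
  refine .of_inter hA hA' hcover ((labelMap M).continuous_of_finiteDimensional.comp
    (continuous_pi fun i => continuous_labelWeight L hs i)) hne ?_
  exact hasNonvanishingExtension_labelMap_of_card_le hs
    (fun x => exists_dimWeight_pos (hpos x) (hcard x)) hL hc (hA.inter hA') hcardA
    (fun x hx => hne x hx.1) fun x hx => hcB x hx.1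

end CocycleExtension

section DegenerateMap

variable {K : Type*} {M : ℕ}

lemma exists_monotone_choice {V ι : Type*} [Nonempty V] [LinearOrder ι] (μ : V → ι) :
    ∃ top : Finset V → V, (∀ F, F.Nonempty → top F ∈ F) ∧
      ∀ F G, F.Nonempty → F ⊆ G → μ (top F) ≤ μ (top G) := by
  have hmax (F : Finset V) : ∃ v, F.Nonempty → v ∈ F ∧ ∀ w ∈ F, μ w ≤ μ v := by
    rcases F.eq_empty_or_nonempty with rfl | hF
    · simp
    · exact (F.exists_max_image μ hF).imp fun v hv _ => hv
  choose top htop using hmax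
  exact ⟨top, fun F hF => (htop F hF).1,
    fun F G hF hFG => (htop G (hF.mono hFG)).2 _ (hFG (htop F hF).1)⟩

lemma HasNonvanishingExtension.exists_degenerate [TopologicalSpace K] {C : Set K}
    {l : K → Fin (M + 3) → ℝ} (hl : ∀ x j, 0 ≤ l x j)
    (h : HasNonvanishingExtension C fun x => labelMap M (l x)) :
    ∃ ℓ : K → Fin (M + 3) → ℝ, Continuous ℓ ∧ (∀ x, ∃ j, 0 < ℓ x j) ∧ (∀ x, ∃ j, ℓ x j = 0) ∧
      ∀ x ∈ C, ∀ j, 0 < ℓ x j → 0 < l x j := by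
  obtain ⟨f, hf, hne, hfC⟩ := h
  obtain ⟨ρ, hρ, hsection, hnonneg, hzero, hle⟩ := exists_continuous_nonneg_section
    (surjective_labelMap (M := M)) kernelVector_pos ker_labelMap
  refine ⟨fun x => ρ (f x), hρ.comp hf, fun x => ?_, fun x => hzero _, fun x hx j hj => ?_⟩
  · by_contra! hneg
    have hρ0 : ρ (f x) = 0 := funext fun j => (hneg j).antisymm (hnonneg _ j)
    exact hne x (by rw [← hsection (f x), hρ0, map_zero])
  · beta_reduce at hj
    rw [hfC hx] at hj
    exact hj.trans_le (hle _ (hl x) j)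

variable [PseudoMetricSpace K] [CompactSpace K] {ε : ℝ} {A : Set K} {c : List K → ℤ}

lemma exists_degenerate_of_partition {V : Type*} [Fintype V] [Nonempty V]
    {s : V → K → ℝ} (hs : ∀ v, Continuous (s v)) (hpos : ∀ x, ∃ v, 0 < s v x)
    (hcard : ∀ x, Finset.card {v | 0 < s v x} ≤ M + 3)
    {pt : V → K} (hpt : ∀ v x, 0 < s v x → dist x (pt v) < ε / 2) (lam : K → Fin (M + 3))
    (hmiss : ∀ l, Chain.IsFine ε l → (∀ x ∈ l, x ∈ A) → ∃ j, ∀ x ∈ l, lam x ≠ j)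
    (hc : ∀ l, l.length = M + 3 → Chain.IsFine ε l → Chain.coboundary c l = 0)
    (hcA : ∀ l, l.length = M + 2 → Chain.IsFine ε l → (∀ x ∈ l, x ∈ A) →
      c l = Chain.facetCochain (M + 2) (l.map lam)) :
    ∃ ℓ : K → Fin (M + 3) → ℝ, Continuous ℓ ∧ (∀ x, ∃ j, 0 < ℓ x j) ∧ (∀ x, ∃ j, ℓ x j = 0) ∧
      ∀ x, (∀ v, 0 < s v x → pt v ∈ A) → ∀ j, 0 < ℓ x j → ∃ y, dist x y < ε / 2 ∧ lam y = j := by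
  classical
  obtain ⟨top, htop, hmono⟩ := exists_monotone_choice (lam ∘ pt)
  have hsupp {x : K} {F : Finset V} (hF : F.Nonempty ∧ 0 < topWeight (s · x) F) :
      0 < s (top F) x := (topWeight_pos_iff.1 hF.2).2 _ (htop F hF.1)
  have hfine {x : K} {l : List (Finset V)} (hl : ∀ F ∈ l, F.Nonempty ∧ 0 < topWeight (s · x) F) :
      Chain.IsFine ε (l.map (pt ∘ top)) := by
    simp only [Chain.IsFine, List.forall_mem_map]
    intro F hF G hG
    exact (dist_triangle_left _ _ x).trans_lt
      ((add_lt_add (hpt _ _ (hsupp (hl F hF))) (hpt _ _ (hsupp (hl G hG)))).trans_eq (add_halves ε))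
  have hA {x : K} (hx : ∀ v, 0 < s v x → pt v ∈ A) {l : List (Finset V)}
      (hl : ∀ F ∈ l, F.Nonempty ∧ 0 < topWeight (s · x) F) : ∀ y ∈ l.map (pt ∘ top), y ∈ A :=
    List.forall_mem_map.2 fun F hF => hx _ (hsupp (hl F hF))
  have hext := hasNonvanishingExtension_labelMap_labelWeight hs hpos hcard
    (L := lam ∘ pt ∘ top) hmono (c := fun l => c (l.map (pt ∘ top))) (B := pt ⁻¹' A)
    (fun x l hlen hl => ?_) (fun x hx => ?_) fun x hx l hlen hl => ?_
  · obtain ⟨ℓ, hℓ, hℓpos, hℓzero, hℓC⟩ := hext.exists_degenerate fun x => labelWeight_nonneg _ _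
    refine ⟨ℓ, hℓ, hℓpos, hℓzero, fun x hx j hj => ?_⟩
    obtain ⟨F, ⟨hF, rfl⟩, hFpos⟩ := (labelWeight_pos_iff _).1 (hℓC x hx j hj)
    exact ⟨_, hpt _ _ (hsupp ⟨hF, hFpos⟩), rfl⟩
  · rw [Chain.coboundary_comp_map]
    exact hc _ (by rw [List.length_map, hlen]) (hfine hl)
  · let l := (Finset.univ.filter fun F : Finset V => F.Nonempty ∧ 0 < topWeight (s · x) F).toList
    have hl (F : Finset V) : F ∈ l ↔ F.Nonempty ∧ 0 < topWeight (s · x) F := by simp [l]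
    obtain ⟨j, hj⟩ := hmiss _ (hfine fun F hF => (hl F).1 hF) (hA hx fun F hF => (hl F).1 hF)
    refine ⟨j, ((labelWeight_nonneg _ _ j).eq_of_not_lt fun hpos => ?_).symm⟩
    obtain ⟨F, ⟨hF, hLF⟩, hFpos⟩ := (labelWeight_pos_iff _).1 hpos
    exact hj _ (List.mem_map.2 ⟨F, (hl F).2 ⟨hF, hFpos⟩, rfl⟩) hLF
  · rw [hcA _ (by rw [List.length_map, hlen]) (hfine hl) (hA hx hl), List.map_map]

/-- Away from `A`, the vertices of an `ε`-small partition of unity already lie outside `A`. -/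
lemma exists_degenerate_of_cochain (hd : topDim K ≤ (M + 2 : ℕ)) (lam : K → Fin (M + 3))
    (hε : 0 < ε) (hmiss : ∀ l, Chain.IsFine ε l → (∀ x ∈ l, x ∈ A) → ∃ j, ∀ x ∈ l, lam x ≠ j)
    (hc : ∀ l, l.length = M + 3 → Chain.IsFine ε l → Chain.coboundary c l = 0)
    (hcA : ∀ l, l.length = M + 2 → Chain.IsFine ε l → (∀ x ∈ l, x ∈ A) →
      c l = Chain.facetCochain (M + 2) (l.map lam)) :
    ∃ ℓ : K → Fin (M + 3) → ℝ, Continuous ℓ ∧ (∀ x, ∃ j, 0 < ℓ x j) ∧ (∀ x, ∃ j, ℓ x j = 0) ∧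
      ∀ x j, 0 < ℓ x j → (∃ y ∉ A, dist x y < ε) ∨ ∃ y, dist x y < ε ∧ lam y = j := by
  rcases isEmpty_or_nonempty K with hK | ⟨⟨x₀⟩⟩
  · exact ⟨fun _ => 0, continuous_const, fun x => hK.elim x, fun x => hK.elim x, fun x => hK.elim x⟩
  have hballs : IsOpenCover (range fun y : K => Metric.ball y (ε / 2)) := by
    refine ⟨forall_mem_range.2 fun y => Metric.isOpen_ball, eq_univ_of_forall fun x => ?_⟩
    exact ⟨_, mem_range_self x, Metric.mem_ball_self (half_pos hε)⟩
  obtain ⟨N, s, hs⟩ := exists_isSubordinate hd hballs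
  have hball (v : Fin N) : ∃ y : K, ∀ x, 0 < s v x → dist x y < ε / 2 := by
    obtain ⟨_, ⟨y, rfl⟩, hy⟩ := hs.exists_mem v
    exact ⟨y, hy⟩
  choose pt hpt using hball
  have : Nonempty (Fin N) := ⟨(hs.exists_pos x₀).choose⟩
  obtain ⟨ℓ, hℓ, hpos, hzero, hlam⟩ := exists_degenerate_of_partition hs.continuous hs.exists_pos
    hs.card_le hpt lam hmiss hc hcA
  refine ⟨ℓ, hℓ, hpos, hzero, fun x j hj => ?_⟩
  by_cases hx : ∀ v, 0 < s v x → pt v ∈ A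
  · obtain ⟨y, hy, hyj⟩ := hlam x hx j hj
    exact .inr ⟨y, hy.trans (half_lt_self hε), hyj⟩
  · push Not at hx
    obtain ⟨v, hv, hvA⟩ := hx
    exact .inl ⟨pt v, hvA, (hpt v x hv).trans (half_lt_self hε)⟩

end DegenerateMap

section Dimension

lemma exists_isOpenCover_lt_covD {Y : Type*} [TopologicalSpace Y] {m : ℕ∞} (h : m < topDim Y) :
    ∃ 𝒰 : Set (Set Y), IsOpenCover 𝒰 ∧ m < covD 𝒰 := by
  obtain ⟨𝒰, hlt⟩ := lt_iSup_iff.1 h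
  obtain ⟨h𝒰, hlt⟩ := lt_iSup_iff.1 hlt
  exact ⟨𝒰, h𝒰, hlt⟩

variable {K : Type*}

lemma exists_label_forall_le {ι : Type*} [Finite ι] [Nonempty ι] [TopologicalSpace K]
    [CompactSpace K] {T : K → ι → ℝ} (hT : Continuous T) (hpos : ∀ x, ∃ j, 0 < T x j) :
    ∃ lam : K → ι, ∃ τ > 0, ∀ x, τ ≤ T x (lam x) := by
  have := Fintype.ofFinite ι
  choose lam hlam using fun x => Finite.exists_max (T x)
  have hsup (x) : Finset.univ.sup' Finset.univ_nonempty (T x) ≤ T x (lam x) :=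
    Finset.sup'_le _ _ fun j _ => hlam x j
  have hsupT : Continuous fun x => Finset.univ.sup' Finset.univ_nonempty (T x) :=
    Continuous.finset_sup'_apply _ fun j _ => (continuous_apply j).comp hT
  obtain ⟨τ, hτ, hle⟩ := isCompact_univ.exists_forall_le' hsupT.continuousOn (a := 0) fun x _ =>
    let ⟨j, hj⟩ := hpos x
    hj.trans_le (Finset.le_sup' (T x) (Finset.mem_univ j))
  exact ⟨lam, τ, hτ, fun x => (hle x (mem_univ x)).trans (hsup x)⟩

variable [PseudoMetricSpace K]

lemma exists_forall_dist_lt_imp_lt {ι : Type*} [Finite ι] [CompactSpace K] {T : K → ι → ℝ}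
    (hT : Continuous T) {η η' : ℝ} (h : η < η') :
    ∃ δ > 0, ∀ x y, dist x y < δ → ∀ j, η' ≤ T x j → η < T y j := by
  have := Fintype.ofFinite ι
  obtain ⟨δ, hδ, hTδ⟩ := Metric.uniformContinuous_iff.1
    (CompactSpace.uniformContinuous_of_continuous hT) (η' - η) (sub_pos.2 h)
  refine ⟨δ, hδ, fun x y hxy j hj => ?_⟩
  have hdist : |T x j - T y j| < η' - η := (dist_le_pi_dist _ _ j).trans_lt (hTδ hxy)
  linarith [(abs_lt.1 hdist).2]

lemma exists_forall_isFine_label_ne {ι : Type*} [Finite ι] [Nonempty ι] [CompactSpace K]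
    {T : K → ι → ℝ} (hT : Continuous T) {lam : K → ι} {τ η : ℝ} (hlam : ∀ x, τ ≤ T x (lam x))
    (h : η < τ) :
    ∃ δ > 0, ∀ l, Chain.IsFine δ l → (∀ x ∈ l, ∃ j, T x j < η) → ∃ j, ∀ x ∈ l, lam x ≠ j := by
  obtain ⟨δ, hδ, hTδ⟩ := exists_forall_dist_lt_imp_lt hT h
  refine ⟨δ, hδ, fun l hl hη => ?_⟩
  cases l with
  | nil => simp
  | cons x₀ l =>
    obtain ⟨j, hj⟩ := hη x₀ List.mem_cons_self
    refine ⟨j, fun x hx hxj => hj.not_gt (hTδ x x₀ (hl x hx x₀ List.mem_cons_self) j ?_)⟩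
    exact hxj ▸ hlam x

/-- A relative primitive of the label cocycle would, through `exists_degenerate_of_cochain`, push
`K` into the `M + 1`-skeleton of the barycentric subdivision of a nerve of dimension `M + 2`. -/
lemma not_isRelCoboundary_labelCocycle [CompactSpace K] {M : ℕ} (hd : topDim K ≤ (M + 2 : ℕ))
    {V : Type*} [Fintype V] [DecidableEq V] {𝒰 : Set (Set K)} (h𝒰 : ¬ covD 𝒰 ≤ (M + 1 : ℕ))
    {s : V → K → ℝ} (hs : ∀ v, Continuous (s v)) (hmem : ∀ v, ∃ U ∈ 𝒰, ∀ x, 0 < s v x → x ∈ U)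
    {lam : K → Fin (M + 3)} {τ η ε : ℝ} (hlam : ∀ x, τ ≤ dimWeight (s · x) (lam x))
    (hη : η ∈ Ioo 0 τ) (hε : 0 < ε) :
    ¬ Chain.IsRelCoboundary {x | ∃ j : Fin (M + 3), dimWeight (s · x) j < η} ε (M + 2)
      (fun l => Chain.labelCocycle (M + 2) (l.map lam)) := by
  rintro ⟨c, hcA, hc⟩
  have hT : Continuous fun x (j : Fin (M + 3)) => dimWeight (s · x) j :=
    continuous_pi fun j => continuous_dimWeight hs j
  obtain ⟨δ₁, hδ₁, hmiss⟩ := exists_forall_isFine_label_ne hT hlam hη.2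
  obtain ⟨δ₂, hδ₂, hnear⟩ := exists_forall_dist_lt_imp_lt hT hη.1
  let ε' := min ε (min δ₁ δ₂)
  have hε'ε : ε' ≤ ε := min_le_left _ _
  have hε'δ₁ : ε' ≤ δ₁ := (min_le_right _ _).trans (min_le_left _ _)
  have hε'δ₂ : ε' ≤ δ₂ := (min_le_right _ _).trans (min_le_right _ _)
  obtain ⟨ℓ, hℓ, hpos, hzero, hℓlam⟩ := exists_degenerate_of_cochain hd lam
    (lt_min hε (lt_min hδ₁ hδ₂)) (A := {x | ∃ j : Fin (M + 3), dimWeight (s · x) j < η})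
    (c := fun l => Chain.facetCochain (M + 2) (l.map lam) - c l)
    (fun l hl => hmiss l (hl.mono hε'δ₁))
    (fun l hlen hl => by
      rw [Chain.coboundary_sub, hc l hlen (hl.mono hε'ε), Chain.coboundary_comp_map,
        Chain.labelCocycle, sub_self])
    (fun l hlen hl hlA => by rw [hcA l hlen (hl.mono hε'ε) hlA, sub_zero])
  refine h𝒰 (covD_le_of_exists_eq_zero hs hmem hℓ hpos hzero fun x j hj => ?_)
  rcases hℓlam x j hj with ⟨y, hy, hxy⟩ | ⟨y, hxy, rfl⟩
  · refine hnear y x (dist_comm x y ▸ hxy.trans_le hε'δ₂) j ?_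
    by_contra! hyj
    exact hy ⟨j, hyj⟩
  · exact hnear y x (dist_comm x y ▸ hxy.trans_le hε'δ₂) _ (hη.2.le.trans (hlam y))

lemma exists_forall_mul_le_widim_of_topDim_eq [CompactSpace K] {M : ℕ}
    (hd : topDim K = (M + 2 : ℕ)) :
    ∃ (k : ℕ) (ε : ℝ), M + 1 ≤ k ∧ 0 < ε ∧
      ∀ n, ((n * k : ℕ) : ℕ∞) ≤ widim ε (fun x y : Fin n → K => dist x y) := by
  obtain ⟨𝒰, h𝒰, hcovD⟩ := exists_isOpenCover_lt_covD (Y := K) (m := (M + 1 : ℕ))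
    (by rw [hd]; exact_mod_cast Nat.lt_succ_self _)
  obtain ⟨N, s, hs⟩ := exists_isSubordinate hd.le h𝒰
  have hT : Continuous fun x (j : Fin (M + 3)) => dimWeight (s · x) j :=
    continuous_pi fun j => continuous_dimWeight hs.continuous j
  obtain ⟨lam, τ, hτ, hlam⟩ := exists_label_forall_le hT fun x =>
    exists_dimWeight_pos (hs.exists_pos x) (hs.card_le x)
  refine Chain.exists_forall_mul_le_widim_pi lam hτ
    (A := fun η => {x | ∃ j : Fin (M + 3), dimWeight (s · x) j < η}) (fun η η' hηη' => ?_)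
    (fun η hη => exists_forall_isFine_label_ne hT hlam hη.2) fun η hη ε hε =>
      not_isRelCoboundary_labelCocycle hd.le hcovD.not_ge hs.continuous hs.exists_mem hlam hη hε
  obtain ⟨δ, hδ, hTδ⟩ := exists_forall_dist_lt_imp_lt hT hηη'
  refine ⟨δ, hδ, fun x hx => ?_⟩
  obtain ⟨y, ⟨j, hj⟩, hxy⟩ := Metric.mem_thickening_iff.1 hx
  exact ⟨j, lt_of_not_ge fun hxj => hj.not_gt (hTδ x y hxy j hxj)⟩

end Dimension

theorem widim_pow_ge_general {K : Type*} [PseudoMetricSpace K] [CompactSpace K]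
    (hfin : topDim K ≠ ⊤) :
    ∃ δ : ℝ, 0 < δ ∧ ∀ n : ℕ,
      (n : ℕ∞) * (topDim K - 1) ≤ widim δ (fun x y : Fin n → K => dist x y) := by
  obtain ⟨d, hd⟩ := ENat.ne_top_iff_exists.1 hfin
  rcases le_or_gt d 1 with hd1 | hd1
  · refine ⟨1, one_pos, fun n => ?_⟩
    rw [← hd, tsub_eq_zero_of_le (by exact_mod_cast hd1), mul_zero]
    exact zero_le
  · obtain ⟨M, rfl⟩ : ∃ M, d = M + 2 := ⟨d - 2, by omega⟩
    obtain ⟨k, ε, hk, hε, hwidim⟩ := exists_forall_mul_le_widim_of_topDim_eq hd.symm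
    refine ⟨ε, hε, fun n => le_trans ?_ (hwidim n)⟩
    have hle : n * (M + 2 - 1) ≤ n * k := Nat.mul_le_mul_left n hk
    rw [← hd]
    exact_mod_cast hle

/-- for a finite dimensional compact metric space `K` there is a `δ > 0`,
independent of `n`, such that `widim_δ(Kⁿ, ρ_n) ≥ n (dim K - 1)` for all `n ≥ 1`, where
`ρ_n` is the sup metric on `Kⁿ` (which is the distance of the product metric space
`Fin n → K`). -/
theorem widim_pow_ge {K : Type*} [MetricSpace K] [CompactSpace K]
    (hfin : topDim K ≠ ⊤) :
    ∃ δ : ℝ, 0 < δ ∧ ∀ n : ℕ, 1 ≤ n →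
      (n : ℕ∞) * (topDim K - 1) ≤ widim δ (fun x y : Fin n → K => dist x y) := by
  obtain ⟨δ, hδ, h⟩ := widim_pow_ge_general hfin
  exact ⟨δ, hδ, fun n _ => h n⟩

end MeanDimPaper
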